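/- arXiv:1404.7764 — 2 statements merged into one kernel-verified Lean document; each statement's English description precedes it below -/
import Mathlib

section
/- For every integer b ≥ 2 there exist a constant c > 0 and an integer d₀ such that for all d ≥ d₀, every d-regular graph G has a spanning subgraph H containing no copy of the complete bipartite graph K_{2,b} and with minimum degree δ(H) ≥ c·√d. -/
open SimpleGraph

def ContainsCopy {α β : Type*} (F : SimpleGraph α) (H : SimpleGraph β) : Prop :=
  ∃ f : F →g H, Function.Injective f

abbrev GraphFamily := Set (Σ n : ℕ, SimpleGraph (Fin n))

def FamFree {β : Type*} (H : SimpleGraph β) (𝓕 : GraphFamily) : Prop :=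
  ∀ F ∈ 𝓕, ¬ ContainsCopy F.2 H

noncomputable def extremalNum (n : ℕ) (𝓕 : GraphFamily) : ℕ :=
  sSup {k | ∃ H : SimpleGraph (Fin n), FamFree H 𝓕 ∧ k = H.edgeSet.ncard}

def LocallyInjective {α β : Type*} {F : SimpleGraph α} {G : SimpleGraph β}
    (φ : F →g G) : Prop :=
  ∀ v : α, Set.InjOn φ (F.neighborSet v)

def NoLocInjHom {α β : Type*} (F : SimpleGraph α) (G : SimpleGraph β) : Prop :=
  ¬ ∃ φ : F →g G, LocallyInjective φ

def ClosedFamily (𝓕 : GraphFamily) : Prop :=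
  ∀ (W : Type) [Fintype W] (G : SimpleGraph W),
    (∀ F ∈ 𝓕, NoLocInjHom F.2 G) ↔ FamFree G 𝓕

noncomputable def deg {β : Type*} (H : SimpleGraph β) (v : β) : ℕ :=
  (H.neighborSet v).ncard

noncomputable def minDeg {β : Type*} [Fintype β] (H : SimpleGraph β) : ℕ :=
  ⨅ v, deg H v

noncomputable def maxDeg {β : Type*} [Fintype β] (H : SimpleGraph β) : ℕ :=
  ⨆ v, deg H v

def RegularDeg {β : Type*} (G : SimpleGraph β) (d : ℕ) : Prop :=
  ∀ v, deg G v = d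

noncomputable def Bad {α γ : Type*} (G : SimpleGraph α) (χ : α → γ) (v : α) : ℕ :=
  {u | u ∈ G.neighborSet v ∧ ∃ v', v' ∈ G.neighborSet u ∧ v' ≠ v ∧ χ v' = χ v}.ncard


def HxM {ι ρ : Type*} (E : ι → Finset ρ → Prop) (D : Finset ι) (M : ι → Finset ρ) : Prop :=
  (∀ u ∈ D, E u (M u)) ∧ ∀ u ∈ D, ∀ v ∈ D, u ≠ v → Disjoint (M u) (M v)

open Classical in
noncomputable def HxB {ι ρ : Type*} (D : Finset ι) (M : ι → Finset ρ) (X : Finset ρ) : Finset ι :=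
  D.filter (fun w => ¬ Disjoint (M w) X)

open Classical in
lemma hx_step {ι ρ : Type*} (r : ℕ) (E : ι → Finset ρ → Prop)
    (hr : ∀ u e, E u e → e.card ≤ r)
    (hT : ∀ C : Finset ι, C.Nonempty → ∀ T : Finset ρ, T.card ≤ 2 * r * (C.card - 1) →
      ∃ u ∈ C, ∃ e, E u e ∧ Disjoint e T)
    (D : Finset ι) (u0 : ι) (hu0 : u0 ∉ D) :
    ∀ n : ℕ, ∀ (M : ι → Finset ρ) (X : Finset ρ), HxM E D M → D.card - (HxB D M X).card < n →
      X.card ≤ r * (HxB D M X).card →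
      (∃ M', HxM E (insert u0 D) M') ∨
        ∃ M', HxM E D M' ∧ HxB D M' X ⊂ HxB D M X ∧ ∀ w ∈ HxB D M' X, M' w = M w := by
  intro n
  induction n with
  | zero => intro M X _ h; omega
  | succ n ih =>
    intro M X hM hn hX
    have hBD : HxB D M X ⊆ D := Finset.filter_subset _ _
    have hu0B : u0 ∉ HxB D M X := fun h => hu0 (hBD h)
    obtain ⟨u, huC, e, hE, hdis⟩ := hT (insert u0 (HxB D M X)) (Finset.insert_nonempty _ _)
      (X ∪ (HxB D M X).biUnion M) (by
        rw [Finset.card_insert_of_notMem hu0B]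
        have h1 : ((HxB D M X).biUnion M).card ≤ (HxB D M X).card * r :=
          Finset.card_biUnion_le_card_mul _ _ _ (fun w hw => hr w _ (hM.1 w (hBD hw)))
        have h2 := Finset.card_union_le X ((HxB D M X).biUnion M)
        simp only [Nat.add_sub_cancel]
        nlinarith)
    rw [Finset.disjoint_union_right, Finset.disjoint_biUnion_right] at hdis
    obtain ⟨hdX, hdM⟩ := hdis
    -- inner induction
    have inner : ∀ m : ℕ, ∀ M1 : ι → Finset ρ, HxM E D M1 → HxB D M1 X = HxB D M X →
        (∀ w ∈ HxB D M X, M1 w = M w) → (HxB D M1 e).card < m →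
        (∃ M', HxM E (insert u0 D) M') ∨
        ∃ M', HxM E D M' ∧ HxB D M' X ⊂ HxB D M X ∧ ∀ w ∈ HxB D M' X, M' w = M w := by
      intro m
      induction m with
      | zero => intro M1 _ _ _ h; omega
      | succ m ihm =>
        intro M1 hM1 hB1 hag hm
        by_cases hb : HxB D M1 e = ∅
        · have hfree : ∀ w ∈ D, Disjoint (M1 w) e := by
            intro w hw
            by_contra hc
            have : w ∈ HxB D M1 e := Finset.mem_filter.2 ⟨hw, hc⟩
            rw [hb] at this
            simp at this
          rcases Finset.mem_insert.1 huC with rfl | huB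
          · left
            refine ⟨Function.update M1 u e, ?_, ?_⟩
            · intro w hw
              by_cases hwu : w = u
              · subst hwu; simpa using hE
              · rw [Function.update_of_ne hwu]
                exact hM1.1 w (Finset.mem_of_mem_insert_of_ne hw hwu)
            · intro w hw v hv hwv
              by_cases hwu : w = u
              · have hvu : v ≠ u := fun h => hwv (hwu.trans h.symm)
                rw [hwu, Function.update_self, Function.update_of_ne hvu]
                exact (hfree v (Finset.mem_of_mem_insert_of_ne hv hvu)).symm
              · rw [Function.update_of_ne hwu]
                have hw' := Finset.mem_of_mem_insert_of_ne hw hwu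
                by_cases hvu : v = u
                · rw [hvu, Function.update_self]
                  exact hfree w hw'
                · rw [Function.update_of_ne hvu]
                  exact hM1.2 w hw' v (Finset.mem_of_mem_insert_of_ne hv hvu) hwv
          · right
            have key : ∀ w ∈ HxB D (Function.update M1 u e) X, w ≠ u ∧ w ∈ HxB D M X := by
              intro w hw
              obtain ⟨hwD, hwX⟩ := Finset.mem_filter.1 hw
              have hwu : w ≠ u := by
                rintro rfl
                rw [Function.update_self] at hwX
                exact hwX hdX
              refine ⟨hwu, ?_⟩
              rw [Function.update_of_ne hwu] at hwX
              rw [← hB1]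
              exact Finset.mem_filter.2 ⟨hwD, hwX⟩
            refine ⟨Function.update M1 u e, ⟨?_, ?_⟩, ?_, ?_⟩
            · intro w hw
              by_cases hwu : w = u
              · subst hwu; simpa using hE
              · rw [Function.update_of_ne hwu]
                exact hM1.1 w hw
            · intro w hw v hv hwv
              by_cases hwu : w = u
              · have hvu : v ≠ u := fun h => hwv (hwu.trans h.symm)
                rw [hwu, Function.update_self, Function.update_of_ne hvu]
                exact (hfree v hv).symm
              · rw [Function.update_of_ne hwu]
                by_cases hvu : v = u
                · rw [hvu, Function.update_self]
                  exact hfree w hw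
                · rw [Function.update_of_ne hvu]
                  exact hM1.2 w hw v hv hwv
            · rw [Finset.ssubset_iff_of_subset (fun w hw => (key w hw).2)]
              exact ⟨u, huB, fun h => (key u h).1 rfl⟩
            · intro w hw
              rw [Function.update_of_ne (key w hw).1]
              exact hag w (key w hw).2
        · have hunion : HxB D M1 (X ∪ e) = HxB D M X ∪ HxB D M1 e := by
            rw [← hB1]
            ext w
            simp only [HxB, Finset.mem_filter, Finset.mem_union, Finset.disjoint_union_right]
            tauto
          have hdisj : Disjoint (HxB D M X) (HxB D M1 e) := by
            rw [Finset.disjoint_left]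
            intro w hw hw2
            apply (Finset.mem_filter.1 hw2).2
            rw [hag w hw]
            exact (hdM w hw).symm
          have hcard : (HxB D M1 (X ∪ e)).card = (HxB D M X).card + (HxB D M1 e).card := by
            rw [hunion, Finset.card_union_of_disjoint hdisj]
          have hbpos : 0 < (HxB D M1 e).card :=
            Finset.card_pos.2 (Finset.nonempty_iff_ne_empty.2 hb)
          have hle : (HxB D M1 (X ∪ e)).card ≤ D.card :=
            Finset.card_le_card (Finset.filter_subset _ _)
          rcases ih M1 (X ∪ e) hM1 (by omega) (by
            have h2 := Finset.card_union_le X e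
            have h3 := hr u e hE
            rw [hcard]
            nlinarith) with h | ⟨M', hM', hss, hag'⟩
          · exact Or.inl h
          · have hmono : ∀ w, w ∈ HxB D M' X → w ∈ HxB D M' (X ∪ e) := by
              intro w hw
              obtain ⟨h1, h2⟩ := Finset.mem_filter.1 hw
              refine Finset.mem_filter.2 ⟨h1, fun h => h2 ?_⟩
              exact (Finset.disjoint_union_right.1 h).1
            have hmono' : ∀ w, w ∈ HxB D M' e → w ∈ HxB D M' (X ∪ e) := by
              intro w hw
              obtain ⟨h1, h2⟩ := Finset.mem_filter.1 hw
              refine Finset.mem_filter.2 ⟨h1, fun h => h2 ?_⟩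
              exact (Finset.disjoint_union_right.1 h).2
            have hsub : HxB D M' X ⊆ HxB D M X := by
              intro w hw
              have h1 := hag' w (hmono w hw)
              obtain ⟨h2, h3⟩ := Finset.mem_filter.1 hw
              rw [h1] at h3
              rw [← hB1]
              exact Finset.mem_filter.2 ⟨h2, h3⟩
            have hagM : ∀ w ∈ HxB D M' X, M' w = M w := by
              intro w hw
              rw [hag' w (hmono w hw), hag w (hsub hw)]
            by_cases heq : HxB D M' X = HxB D M X
            · refine ihm M' hM' heq (fun w hw => hagM w (heq ▸ hw)) ?_
              have hsub2 : HxB D M' e ⊆ HxB D M1 e := by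
                intro w hw
                have h1 := hag' w (hmono' w hw)
                obtain ⟨h2, h3⟩ := Finset.mem_filter.1 hw
                rw [h1] at h3
                exact Finset.mem_filter.2 ⟨h2, h3⟩
              have hne : HxB D M' e ≠ HxB D M1 e := by
                intro h
                apply hss.ne
                rw [hunion, ← heq, ← h]
                ext w
                simp only [HxB, Finset.mem_filter, Finset.mem_union, Finset.disjoint_union_right]
                tauto
              have := Finset.card_lt_card (hsub2.ssubset_of_ne hne)
              omega
            · right
              exact ⟨M', hM', hsub.ssubset_of_ne heq, hagM⟩
    exact inner _ M hM rfl (fun _ _ => rfl) (Nat.lt_succ_self _)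

open Classical in
lemma hx_main {ι ρ : Type*} (r : ℕ) (E : ι → Finset ρ → Prop)
    (hr : ∀ u e, E u e → e.card ≤ r)
    (hT : ∀ C : Finset ι, C.Nonempty → ∀ T : Finset ρ, T.card ≤ 2 * r * (C.card - 1) →
      ∃ u ∈ C, ∃ e, E u e ∧ Disjoint e T) (D : Finset ι) : ∃ M, HxM E D M := by
  induction D using Finset.induction_on with
  | empty => exact ⟨fun _ => ∅, by simp [HxM]⟩
  | insert u0 D hu0 ih =>
    obtain ⟨M, hM⟩ := ih
    rcases hx_step r E hr hT D u0 hu0 (D.card + 1) M ∅ hM (by omega) (by simp) with h | ⟨M', _, h, _⟩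
    · exact h
    · exfalso
      have : HxB D M ∅ = ∅ := by simp [HxB]
      rw [this] at h
      exact (Finset.not_ssubset_empty _ h)

/-- colour assignment for clients -/
lemma assign_clients {ι κ V : Type*} [Fintype ι] [Fintype κ] (r d : ℕ) (hr : 0 < r) (hd0 : 0 < d)
    (R : ι → κ → Finset V) (hR : ∀ u x, 2 * r ≤ (R u x).card)
    (hd : ∀ x v, ∀ C : Finset ι, (∀ u ∈ C, v ∈ R u x) → C.card ≤ d)
    (hQ : 2 * d ≤ Fintype.card κ) :
    ∃ (f : ι → κ) (S : ι → Finset V), (∀ u, S u ⊆ R u (f u)) ∧ (∀ u, (S u).card = r) ∧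
      ∀ u v, u ≠ v → f u = f v → Disjoint (S u) (S v) := by
  classical
  let E : ι → Finset (κ × V) → Prop := fun u e => ∃ x, ∃ S : Finset V, S ⊆ R u x ∧ S.card = r ∧
    e = S.image (fun v => (x, v))
  have hinj : ∀ x : κ, Function.Injective (fun v : V => (x, v)) := by
    intro x a b h; simpa using h
  obtain ⟨M, hM1, hM2⟩ := hx_main r E (by
      rintro u e ⟨x, S, _, h, rfl⟩
      rw [Finset.card_image_of_injective _ (hinj x), h]) (by
      intro C hC T hTc
      by_contra hcon
      push Not at hcon
      have h1 : ∀ u ∈ C, ∀ x : κ, r ≤ (T.filter (fun p => p.1 = x ∧ p.2 ∈ R u x)).card := by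
        intro u hu x
        by_contra hlt
        push Not at hlt
        have hc : r ≤ ((R u x).filter (fun v => (x, v) ∉ T)).card := by
          have h2 := Finset.card_filter_add_card_filter_not (s := R u x) (fun v => (x, v) ∈ T)
          have h3 : ((R u x).filter (fun v => (x, v) ∈ T)).card ≤
              (T.filter (fun p => p.1 = x ∧ p.2 ∈ R u x)).card := by
            rw [← Finset.card_image_of_injective _ (hinj x)]
            apply Finset.card_le_card
            intro p hp
            simp only [Finset.mem_image, Finset.mem_filter] at hp ⊢
            obtain ⟨v, ⟨h4, h5⟩, rfl⟩ := hp
            exact ⟨h5, rfl, h4⟩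
          have := hR u x
          omega
        obtain ⟨S, hS, hSc⟩ := Finset.exists_subset_card_eq hc
        refine hcon u hu (S.image (fun v => (x, v))) ⟨x, S, hS.trans (Finset.filter_subset _ _), hSc, rfl⟩ ?_
        rw [Finset.disjoint_left]
        intro p hp
        obtain ⟨v, hv, rfl⟩ := Finset.mem_image.1 hp
        exact (Finset.mem_filter.1 (hS hv)).2
      have h2 : C.card * (Fintype.card κ * r) ≤ ∑ u ∈ C, ∑ x : κ, (T.filter (fun p => p.1 = x ∧ p.2 ∈ R u x)).card := by
        rw [← smul_eq_mul, ← Finset.sum_const]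
        apply Finset.sum_le_sum
        intro u hu
        rw [← smul_eq_mul, ← Finset.card_univ, ← Finset.sum_const]
        exact Finset.sum_le_sum (fun x _ => h1 u hu x)
      have h3 : ∑ u ∈ C, ∑ x : κ, (T.filter (fun p => p.1 = x ∧ p.2 ∈ R u x)).card
          = ∑ p ∈ T, (C.filter (fun u => p.2 ∈ R u p.1)).card := by
        simp only [Finset.card_filter]
        have : ∀ u ∈ C, ∑ x : κ, ∑ p ∈ T, (if p.1 = x ∧ p.2 ∈ R u x then 1 else 0)
            = ∑ p ∈ T, if p.2 ∈ R u p.1 then 1 else 0 := by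
          intro u _
          rw [Finset.sum_comm]
          apply Finset.sum_congr rfl
          intro p _
          rw [Finset.sum_eq_single p.1]
          · simp
          · intro x _ hx
            simp [Ne.symm hx]
          · simp
        rw [Finset.sum_congr rfl this, Finset.sum_comm]
      have h4 : ∑ p ∈ T, (C.filter (fun u => p.2 ∈ R u p.1)).card ≤ T.card * d := by
        rw [← smul_eq_mul, ← Finset.sum_const]
        apply Finset.sum_le_sum
        intro p _
        exact hd p.1 p.2 _ (fun u hu => (Finset.mem_filter.1 hu).2)
      obtain ⟨c, hc⟩ : ∃ c, C.card = c + 1 := ⟨C.card - 1, by have := hC.card_pos; omega⟩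
      rw [h3] at h2
      rw [hc] at h2 hTc
      simp only [Nat.add_sub_cancel] at hTc
      have h5 := h2.trans (h4.trans (Nat.mul_le_mul_right d hTc))
      have h6 : (c+1) * (2 * d * r) ≤ (c+1) * (Fintype.card κ * r) := by gcongr
      have : 0 < d * r := Nat.mul_pos hd0 hr
      nlinarith) Finset.univ
  choose f S hS1 hS2 hS3 using fun u => hM1 u (Finset.mem_univ u)
  refine ⟨f, S, hS1, hS2, ?_⟩
  intro u v huv hf
  have := hM2 u (Finset.mem_univ _) v (Finset.mem_univ _) huv
  rw [hS3 u, hS3 v, hf] at this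
  rw [Finset.disjoint_left] at this ⊢
  intro a ha hb
  exact this (Finset.mem_image_of_mem _ ha) (Finset.mem_image_of_mem _ hb)

lemma hall_clients {ι ρ : Type*} [Fintype ι] (r K : ℕ) (hK0 : 0 < K)
    (R : ι → Finset ρ) (hR : ∀ u, r * K ≤ (R u).card)
    (hK : ∀ v, ∀ C : Finset ι, (∀ u ∈ C, v ∈ R u) → C.card ≤ K) :
    ∃ S : ι → Finset ρ, (∀ u, S u ⊆ R u) ∧ (∀ u, (S u).card = r) ∧
      ∀ u v, u ≠ v → Disjoint (S u) (S v) := by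
  classical
  obtain ⟨f, hf, hft⟩ := (Finset.all_card_le_biUnion_card_iff_exists_injective
    (fun p : ι × Fin r => R p.1)).1 (by
      intro A
      set C := A.image Prod.fst with hC
      have h1 : A.card ≤ C.card * r := by
        have : A ⊆ C ×ˢ (Finset.univ : Finset (Fin r)) := by
          intro p hp
          simp only [Finset.mem_product, Finset.mem_univ, and_true]
          exact Finset.mem_image_of_mem _ hp
        have := Finset.card_le_card this
        rwa [Finset.card_product, Finset.card_univ, Fintype.card_fin] at this
      have h2 : A.biUnion (fun p => R p.1) = C.biUnion R := by
        rw [hC, Finset.image_biUnion]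
      rw [h2]
      have h3 : ∑ u ∈ C, (R u).card = ∑ v ∈ C.biUnion R, (C.filter (fun u => v ∈ R u)).card := by
        simp only [Finset.card_filter]
        rw [Finset.sum_comm]
        apply Finset.sum_congr rfl
        intro u hu
        rw [← Finset.card_filter]
        congr 1
        ext v
        simp only [Finset.mem_filter, Finset.mem_biUnion]
        exact ⟨fun h => ⟨⟨u, hu, h⟩, h⟩, fun h => h.2⟩
      have h4 : ∑ v ∈ C.biUnion R, (C.filter (fun u => v ∈ R u)).card ≤ (C.biUnion R).card * K := by
        rw [← smul_eq_mul, ← Finset.sum_const]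
        exact Finset.sum_le_sum (fun v _ => hK v _ (fun u hu => (Finset.mem_filter.1 hu).2))
      have h5 : C.card * (r * K) ≤ ∑ u ∈ C, (R u).card := by
        rw [← smul_eq_mul, ← Finset.sum_const]
        exact Finset.sum_le_sum (fun u _ => hR u)
      have h6 : (C.card * r) * K ≤ (C.biUnion R).card * K := by
        rw [mul_assoc]; omega
      exact h1.trans (Nat.le_of_mul_le_mul_right h6 hK0))
  refine ⟨fun u => Finset.univ.image (fun i => f (u, i)), ?_, ?_, ?_⟩
  · intro u v hv
    obtain ⟨i, _, rfl⟩ := Finset.mem_image.1 hv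
    exact hft (u, i)
  · intro u
    rw [Finset.card_image_of_injective, Finset.card_univ, Fintype.card_fin]
    intro i j h
    simpa using hf h
  · intro u v huv
    rw [Finset.disjoint_left]
    intro a ha hb
    obtain ⟨i, _, rfl⟩ := Finset.mem_image.1 ha
    obtain ⟨j, _, h⟩ := Finset.mem_image.1 hb
    have := hf h
    simp only [Prod.mk.injEq] at this
    exact huv this.1.symm

open Classical in
noncomputable def cnt {Ω : Type*} [Fintype Ω] (E : Ω → Prop) : ℝ := ((Finset.univ.filter E).card : ℝ)

lemma cnt_nonneg {Ω : Type*} [Fintype Ω] (E : Ω → Prop) : 0 ≤ cnt E := Nat.cast_nonneg _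

lemma cnt_mono {Ω : Type*} [Fintype Ω] {E F : Ω → Prop} (h : ∀ c, E c → F c) : cnt E ≤ cnt F := by
  classical
  unfold cnt
  exact_mod_cast Finset.card_le_card (Finset.monotone_filter_right _ (fun c _ => h c))

lemma cnt_eq_sum {Ω : Type*} [Fintype Ω] (E : Ω → Prop) [DecidablePred E] :
    cnt E = ∑ c, if E c then (1 : ℝ) else 0 := by
  unfold cnt
  rw [Finset.sum_boole]
  congr!

lemma exists_of_cnt_pos {Ω : Type*} [Fintype Ω] {E : Ω → Prop} (h : 0 < cnt E) : ∃ c, E c := by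
  classical
  unfold cnt at h
  obtain ⟨c, hc⟩ := Finset.card_pos.1 (Nat.cast_pos.1 h)
  exact ⟨c, (Finset.mem_filter.1 hc).2⟩

lemma cnt_exists_le {Ω α : Type*} [Fintype Ω] (s : Finset α) (E : α → Ω → Prop) :
    cnt (fun c => ∃ a ∈ s, E a c) ≤ ∑ a ∈ s, cnt (E a) := by
  classical
  unfold cnt
  rw [← Nat.cast_sum]
  norm_cast
  refine le_trans (Finset.card_le_card ?_) Finset.card_biUnion_le
  intro c hc
  simpa using hc

lemma cnt_or_le {Ω : Type*} [Fintype Ω] (E F : Ω → Prop) :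
    cnt (fun c => E c ∨ F c) ≤ cnt E + cnt F := by
  classical
  unfold cnt
  norm_cast
  refine le_trans (Finset.card_le_card ?_) (Finset.card_union_le _ _)
  intro c hc
  simpa using hc

open Classical in
lemma resample {V P : Type*} [Fintype V] [Fintype P] (I : Finset V) (f : (V → P) → ℝ) :
    ∑ c0 : V → P, ∑ c1 : V → P, f (I.piecewise c1 c0) = (Fintype.card (V → P)) * ∑ c, f c := by
  rw [← Finset.sum_product' Finset.univ Finset.univ (fun c0 c1 => f (I.piecewise c1 c0))]
  have hinv : Function.Involutive (fun p : (V → P) × (V → P) => (I.piecewise p.2 p.1, I.piecewise p.1 p.2)) := by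
    rintro ⟨a, b⟩
    ext v <;> by_cases h : v ∈ I <;> simp [h]
  have := Equiv.sum_comp hinv.toPerm (fun p : (V → P) × (V → P) => f p.1)
  simp only [Function.Involutive.coe_toPerm] at this
  rw [Finset.univ_product_univ, this, Fintype.sum_prod_type, Finset.mul_sum]
  simp

open Classical in
lemma cnt_le_of_resample {V P : Type*} [Fintype V] [Fintype P] [Nonempty P] (I : Finset V)
    (E : (V → P) → Prop) (η : ℝ)
    (h : ∀ c0 : V → P, cnt (fun c1 => E (I.piecewise c1 c0)) ≤ η * Fintype.card (V → P)) :
    cnt E ≤ η * Fintype.card (V → P) := by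
  have h1 := resample I (fun c => if E c then (1 : ℝ) else 0)
  rw [← cnt_eq_sum] at h1
  have h2 : ∑ c0 : V → P, ∑ c1 : V → P, (if E (I.piecewise c1 c0) then (1 : ℝ) else 0) ≤
      ∑ c0 : V → P, η * Fintype.card (V → P) := by
    apply Finset.sum_le_sum
    intro c0 _
    rw [← cnt_eq_sum]
    exact h c0
  rw [h1] at h2
  simp only [Finset.sum_const, Finset.card_univ, nsmul_eq_mul] at h2
  have h3 : (0 : ℝ) < Fintype.card (V → P) := by exact_mod_cast Fintype.card_pos
  exact le_of_mul_le_mul_left h2 h3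

open Classical in
lemma cnt_indep {V P : Type*} [Fintype V] [Fintype P] (I : Finset V)
    (E F : (V → P) → Prop) (hE : ∀ c c', (∀ v ∈ I, c v = c' v) → (E c → E c'))
    (hF : ∀ c c', (∀ v, v ∉ I → c v = c' v) → (F c → F c')) :
    (Fintype.card (V → P)) * cnt (fun c => E c ∧ F c) = cnt E * cnt F := by
  rw [cnt_eq_sum (fun c => E c ∧ F c), ← resample I, cnt_eq_sum E, cnt_eq_sum F, mul_comm, Finset.sum_mul_sum]
  apply Finset.sum_congr rfl
  intro c0 _
  apply Finset.sum_congr rfl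
  intro c1 _
  have h1 : E (I.piecewise c1 c0) ↔ E c1 :=
    ⟨hE _ _ (fun v hv => by simp [hv]), hE _ _ (fun v hv => by simp [hv])⟩
  have h2 : F (I.piecewise c1 c0) ↔ F c0 :=
    ⟨hF _ _ (fun v hv => by simp [hv]), hF _ _ (fun v hv => by simp [hv])⟩
  rw [h1, h2]
  by_cases a : E c1 <;> by_cases b : F c0 <;> simp [a, b]

open Classical in
/-- symmetric local lemma for uniform colourings -/
lemma lll {V P ι : Type*} [Fintype V] [Fintype P] [Nonempty P] [Fintype ι]
    (E : ι → (V → P) → Prop) (vb : ι → Finset V) (p : ℝ) (D : ℕ) (hp0 : 0 ≤ p)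
    (hvb : ∀ i c c', (∀ v ∈ vb i, c v = c' v) → (E i c → E i c'))
    (hp : ∀ i, cnt (E i) ≤ p * Fintype.card (V → P))
    (hD : ∀ i, (Finset.univ.filter (fun j => ¬ Disjoint (vb i) (vb j))).card ≤ D)
    (hpD : 4 * p * D ≤ 1) (hp4 : 4 * p ≤ 1) : ∃ c, ∀ i, ¬ E i c := by
  have hΩ : (0 : ℝ) < Fintype.card (V → P) := by exact_mod_cast Fintype.card_pos
  let Av : Finset ι → (V → P) → Prop := fun J c => ∀ j ∈ J, ¬ E j c
  have key : ∀ n : ℕ, ∀ J : Finset ι, J.card < n → ∀ i,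
      cnt (fun c => E i c ∧ Av J c) ≤ 2 * p * cnt (Av J) := by
    intro n
    induction n with
    | zero => intro J h; omega
    | succ n ih =>
      intro J hJ i
      set J1 := J.filter (fun j => ¬ Disjoint (vb i) (vb j)) with hJ1
      set J2 := J.filter (fun j => Disjoint (vb i) (vb j)) with hJ2
      have hind : cnt (fun c => E i c ∧ Av J2 c) ≤ p * cnt (Av J2) := by
        have h1 := cnt_indep (vb i) (E i) (Av J2) (hvb i) (by
          intro c c' hc hA j hj hEj
          refine hA j hj (hvb j c' c ?_ hEj)
          intro v hv
          have := (Finset.mem_filter.1 hj).2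
          exact (hc v (fun h => (Finset.disjoint_left.1 this h hv))).symm)
        have h2 : cnt (E i) * cnt (Av J2) ≤ (p * Fintype.card (V → P)) * cnt (Av J2) :=
          mul_le_mul_of_nonneg_right (hp i) (cnt_nonneg _)
        rw [← h1] at h2
        have : (Fintype.card (V → P) : ℝ) * cnt (fun c => E i c ∧ Av J2 c) ≤
          (Fintype.card (V → P) : ℝ) * (p * cnt (Av J2)) := by linarith
        exact le_of_mul_le_mul_left this hΩ
      have hsub : cnt (fun c => E i c ∧ Av J c) ≤ cnt (fun c => E i c ∧ Av J2 c) :=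
        cnt_mono (fun c hc => ⟨hc.1, fun j hj => hc.2 j (Finset.mem_filter.1 hj).1⟩)
      by_cases hne : J1 = ∅
      · have : J2 = J := by
          apply Finset.filter_true_of_mem
          intro j hj
          by_contra hc
          have : j ∈ J1 := Finset.mem_filter.2 ⟨hj, hc⟩
          rw [hne] at this; simp at this
        rw [this] at hind
        have h0 := cnt_nonneg (Av J)
        have := mul_nonneg hp0 h0
        linarith
      · have hlt : J2.card < n := by
          have h1 := Finset.card_filter_add_card_filter_not (s := J) (fun j => Disjoint (vb i) (vb j))
          have h2 := Finset.card_pos.2 (Finset.nonempty_iff_ne_empty.2 hne)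
          simp only [← hJ1, ← hJ2] at h1
          omega
        have h3 : cnt (Av J2) ≤ cnt (Av J) + ∑ j ∈ J1, cnt (fun c => E j c ∧ Av J2 c) := by
          refine le_trans ?_ (add_le_add_right (cnt_exists_le J1 (fun j c => E j c ∧ Av J2 c)) _)
          refine le_trans (cnt_mono ?_) (cnt_or_le _ _)
          intro c hc
          by_cases hA : Av J c
          · exact Or.inl hA
          · right
            simp only [Av, not_forall, not_not] at hA
            obtain ⟨j, hj, hEj⟩ := hA
            refine ⟨j, ?_, hEj, hc⟩
            by_contra hcon
            have : j ∈ J2 := by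
              refine Finset.mem_filter.2 ⟨hj, ?_⟩
              by_contra h; exact hcon (Finset.mem_filter.2 ⟨hj, h⟩)
            exact hc j this hEj
        have h4 : ∑ j ∈ J1, cnt (fun c => E j c ∧ Av J2 c) ≤ J1.card * (2 * p * cnt (Av J2)) := by
          rw [← nsmul_eq_mul, ← Finset.sum_const]
          exact Finset.sum_le_sum (fun j _ => ih J2 hlt j)
        have h5 : (J1.card : ℝ) ≤ D := by
          have : J1.card ≤ D := (Finset.card_le_card (by
            intro j hj
            exact Finset.mem_filter.2 ⟨Finset.mem_univ _, (Finset.mem_filter.1 hj).2⟩)).trans (hD i)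
          exact_mod_cast this
        have h0 := cnt_nonneg (Av J2)
        have h6 : (J1.card : ℝ) * (2 * p * cnt (Av J2)) ≤ (1/2) * cnt (Av J2) := by
          have : (J1.card : ℝ) * (2 * p * cnt (Av J2)) ≤ D * (2 * p * cnt (Av J2)) :=
            mul_le_mul_of_nonneg_right h5 (by positivity)
          nlinarith
        have h7 : cnt (Av J2) ≤ 2 * cnt (Av J) := by linarith
        have h8 := mul_le_mul_of_nonneg_left h7 hp0
        linarith
  have pos : ∀ J : Finset ι, 0 < cnt (Av J) := by
    intro J
    induction J using Finset.induction_on with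
    | empty =>
      have : cnt (Av ∅) = Fintype.card (V → P) := by
        simp [cnt, Av]
      rw [this]; exact hΩ
    | insert i J hi ihJ =>
      have h1 := key _ J (Nat.lt_succ_self _) i
      have h2 : cnt (Av J) ≤ cnt (Av (insert i J)) + cnt (fun c => E i c ∧ Av J c) := by
        refine le_trans (cnt_mono ?_) (cnt_or_le _ _)
        intro c hc
        by_cases h : E i c
        · exact Or.inr ⟨h, hc⟩
        · left
          intro j hj
          rcases Finset.mem_insert.1 hj with rfl | hj
          · exact h
          · exact hc j hj
      nlinarith
  have := pos Finset.univ
  obtain ⟨c, hc⟩ := exists_of_cnt_pos this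
  exact ⟨c, fun i => hc i (Finset.mem_univ i)⟩

open Classical in
lemma sum_prod_coord {V P : Type*} [Fintype V] [Fintype P] (f : V → P → ℝ) :
    ∑ c : V → P, ∏ v, f v (c v) = ∏ v, ∑ p, f v p := by
  rw [Finset.prod_univ_sum]
  simp

open Classical in
lemma chernoff {V P : Type*} [Fintype V] [Fintype P] [Nonempty P] (f : V → P → ℝ)
    (h0 : ∀ v p, 0 ≤ f v p) (h1 : ∀ v p, f v p ≤ 1) (μ : ℝ)
    (hμ : ∑ v, ∑ p, f v p ≤ μ * Fintype.card P) :
    cnt (fun c : V → P => 4 * μ ≤ ∑ v, f v (c v)) ≤ Real.exp (-2 * μ) * Fintype.card (V → P) := by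
  have hP : (0 : ℝ) < Fintype.card P := by exact_mod_cast Fintype.card_pos
  have hA : Real.exp (4 * μ) * cnt (fun c : V → P => 4 * μ ≤ ∑ v, f v (c v)) ≤
      ∑ c : V → P, ∏ v, Real.exp (f v (c v)) := by
    rw [cnt_eq_sum, Finset.mul_sum]
    apply Finset.sum_le_sum
    intro c _
    rw [← Real.exp_sum]
    split_ifs with h
    · rw [mul_one]; exact Real.exp_le_exp.2 h
    · rw [mul_zero]; exact (Real.exp_pos _).le
  rw [sum_prod_coord (fun v p => Real.exp (f v p))] at hA
  have hB : ∏ v, ∑ p, Real.exp (f v p) ≤ ∏ v : V, (Fintype.card P * Real.exp ((2 * ∑ p, f v p) / Fintype.card P)) := by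
    apply Finset.prod_le_prod
    · intro v _
      exact Finset.sum_nonneg (fun p _ => (Real.exp_pos _).le)
    · intro v _
      have : ∑ p, Real.exp (f v p) ≤ ∑ p, (1 + 2 * f v p) := by
        apply Finset.sum_le_sum
        intro p _
        have h2 := Real.abs_exp_sub_one_sub_id_le (x := f v p) (by rw [abs_of_nonneg (h0 v p)]; exact h1 v p)
        have h3 := (abs_le.1 h2).2
        nlinarith [h0 v p, h1 v p]
      refine this.trans ?_
      rw [Finset.sum_add_distrib, ← Finset.mul_sum]
      simp only [Finset.sum_const, Finset.card_univ, nsmul_eq_mul, mul_one]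
      have h4 := Real.add_one_le_exp ((2 * ∑ p, f v p) / Fintype.card P)
      have h5 := mul_le_mul_of_nonneg_left h4 hP.le
      have h6 : (Fintype.card P : ℝ) * ((2 * ∑ p, f v p) / Fintype.card P + 1) = Fintype.card P + 2 * ∑ p, f v p := by
        field_simp; ring
      linarith
  rw [Finset.prod_mul_distrib, ← Real.exp_sum, Finset.prod_const, Finset.card_univ] at hB
  have hC : Real.exp (∑ v, (2 * ∑ p, f v p) / Fintype.card P) ≤ Real.exp (2 * μ) := by
    apply Real.exp_le_exp.2
    rw [← Finset.sum_div, ← Finset.mul_sum, div_le_iff₀ hP]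
    linarith
  have hcard : (Fintype.card (V → P) : ℝ) = (Fintype.card P : ℝ) ^ Fintype.card V := by
    rw [Fintype.card_fun]; push_cast; rfl
  rw [hcard]
  have hD := hA.trans (hB.trans (mul_le_mul_of_nonneg_left hC (by positivity)))
  have h7 : Real.exp (-2 * μ) = Real.exp (2 * μ) / Real.exp (4 * μ) := by
    rw [← Real.exp_sub]; ring_nf
  rw [h7, div_mul_eq_mul_div, le_div_iff₀ (Real.exp_pos _)]
  linarith

open Classical in
lemma avoid_count {V P : Type*} [Fintype V] [Fintype P] [Nonempty P] (S : Finset V) (Y : Finset P) (a : ℝ)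
    (ha : a * Fintype.card P ≤ S.card * Y.card) :
    cnt (fun c : V → P => ∀ v ∈ S, c v ∉ Y) ≤ Real.exp (-a) * Fintype.card (V → P) := by
  have hP : (0 : ℝ) < Fintype.card P := by exact_mod_cast Fintype.card_pos
  have h1 : cnt (fun c : V → P => ∀ v ∈ S, c v ∉ Y) =
      ∑ c : V → P, ∏ v, (if v ∈ S ∧ c v ∈ Y then (0 : ℝ) else 1) := by
    rw [cnt_eq_sum]
    apply Finset.sum_congr rfl
    intro c _
    split_ifs with h
    · rw [Finset.prod_eq_one]
      intro v _
      rw [if_neg]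
      rintro ⟨h1, h2⟩
      exact h v h1 h2
    · push Not at h
      obtain ⟨v, h1, h2⟩ := h
      rw [Finset.prod_eq_zero (Finset.mem_univ v)]
      simp [h1, h2]
  rw [h1, sum_prod_coord (fun v p => if v ∈ S ∧ p ∈ Y then (0 : ℝ) else 1)]
  have h2 : ∏ v, ∑ p, (if v ∈ S ∧ p ∈ Y then (0 : ℝ) else 1) ≤
      ∏ v : V, (Fintype.card P * Real.exp (if v ∈ S then - (Y.card / Fintype.card P : ℝ) else 0)) := by
    apply Finset.prod_le_prod
    · intro v _
      exact Finset.sum_nonneg (fun p _ => by split_ifs <;> norm_num)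
    · intro v _
      by_cases hv : v ∈ S
      · simp only [hv, true_and, if_true]
        have h3 : ∑ p, (if p ∈ Y then (0 : ℝ) else 1) = Fintype.card P - Y.card := by
          have : ∀ p, (if p ∈ Y then (0 : ℝ) else 1) = 1 - (if p ∈ Y then (1:ℝ) else 0) := by
            intro p; split_ifs <;> norm_num
          simp only [this, Finset.sum_sub_distrib]
          simp
        rw [h3]
        have h4 := Real.add_one_le_exp (- (Y.card / Fintype.card P : ℝ))
        have h5 := mul_le_mul_of_nonneg_left h4 hP.le
        have h6 : (Fintype.card P : ℝ) * (- (Y.card / Fintype.card P : ℝ) + 1) = Fintype.card P - Y.card := by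
          field_simp; ring
        linarith
      · simp [hv]
  refine h2.trans ?_
  rw [Finset.prod_mul_distrib, ← Real.exp_sum, Finset.prod_const, Finset.card_univ]
  have hcard : (Fintype.card (V → P) : ℝ) = (Fintype.card P : ℝ) ^ Fintype.card V := by
    rw [Fintype.card_fun]; push_cast; rfl
  rw [hcard, mul_comm]
  apply mul_le_mul_of_nonneg_right _ (by positivity)
  apply Real.exp_le_exp.2
  rw [Finset.sum_ite_mem]
  simp only [Finset.univ_inter, Finset.sum_const, nsmul_eq_mul]
  have : a ≤ S.card * (Y.card / Fintype.card P : ℝ) := by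
    rw [← mul_div_assoc, le_div_iff₀ hP]; exact ha
  linarith

open Classical in
noncomputable def cdg {V : Type*} (nb : V → Finset V) (v w : V) : ℕ := ((nb v).filter (fun a => w ∈ nb a)).card

open Classical in
noncomputable def ovl {V P : Type*} [Fintype V] (nb : V → Finset V) (c : V → P) (v : V) : ℕ :=
  ∑ w, if w ≠ v ∧ c w = c v then cdg nb v w else 0

open Classical in
noncomputable def rpr {V P : Type*} [Nonempty V] (S : Finset V) (c : V → P) (p : P) : V :=
  Classical.epsilon (fun v => v ∈ S ∧ c v = p)

lemma rpr_spec {V P : Type*} [Nonempty V] (S : Finset V) (c : V → P) (p : P)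
    (h : ∃ v ∈ S, c v = p) : rpr S c p ∈ S ∧ c (rpr S c p) = p :=
  Classical.epsilon_spec (p := fun v => v ∈ S ∧ c v = p) h

lemma cdg_le {V : Type*} (nb : V → Finset V) (d : ℕ) (hd : ∀ v, (nb v).card ≤ d) (v w : V) :
    cdg nb v w ≤ d := by
  classical
  unfold cdg
  exact (Finset.card_filter_le _ _).trans (hd v)

lemma sum_cdg_le {V : Type*} [Fintype V] (nb : V → Finset V) (d : ℕ) (hd : ∀ v, (nb v).card ≤ d) (v : V) :
    ∑ w, cdg nb v w ≤ d * d := by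
  classical
  unfold cdg
  simp only [Finset.card_filter]
  rw [Finset.sum_comm]
  calc ∑ a ∈ nb v, ∑ w, (if w ∈ nb a then 1 else 0) ≤ ∑ a ∈ nb v, d := by
        apply Finset.sum_le_sum
        intro a _
        rw [Finset.sum_boole]
        simpa using hd a
    _ = (nb v).card * d := by simp
    _ ≤ d * d := Nat.mul_le_mul_right _ (hd v)

open Classical in
lemma ovl_heavy {V P : Type*} [Fintype V] (nb : V → Finset V) (c : V → P) (v : V) (K : ℕ) :
    K * ((nb v).filter (fun a => K < ((nb a).filter (fun w => c w = c v)).card)).card ≤ ovl nb c v := by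
  have h1 : ovl nb c v = ∑ a ∈ nb v, ((nb a).filter (fun w => w ≠ v ∧ c w = c v)).card := by
    unfold ovl cdg
    have : ∀ w, (if w ≠ v ∧ c w = c v then ((nb v).filter (fun a => w ∈ nb a)).card else 0) =
        ∑ a ∈ nb v, if w ∈ nb a ∧ (w ≠ v ∧ c w = c v) then 1 else 0 := by
      intro w
      rw [Finset.card_filter]
      split_ifs with h
      · simp [h]
      · simp [h]
    simp only [this]
    rw [Finset.sum_comm]
    apply Finset.sum_congr rfl
    intro a _
    rw [Finset.sum_boole]
    simp only [Nat.cast_id]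
    congr 1
    ext w; simp
  rw [h1, mul_comm, ← smul_eq_mul, ← Finset.sum_const]
  refine le_trans (Finset.sum_le_sum ?_) (Finset.sum_le_sum_of_subset (Finset.filter_subset _ _))
  intro a ha
  have h2 := (Finset.mem_filter.1 ha).2
  have h3 : ((nb a).filter (fun w => c w = c v)) ⊆ insert v ((nb a).filter (fun w => w ≠ v ∧ c w = c v)) := by
    intro w hw
    obtain ⟨h4, h5⟩ := Finset.mem_filter.1 hw
    by_cases h : w = v
    · simp [h]
    · exact Finset.mem_insert_of_mem (Finset.mem_filter.2 ⟨h4, h, h5⟩)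
  have h4 := (Finset.card_le_card h3).trans (Finset.card_insert_le _ _)
  omega

open Classical in
noncomputable def gW {V P : Type*} [Nonempty V] (nb : V → Finset V) (d : ℕ) (S : Finset V) (Y : Finset P)
    (c : V → P) (w : V) (p : P) : ℝ :=
  if w ∉ S ∧ p ∈ Y ∧ ∃ v ∈ S, c v = p then (cdg nb (rpr S c p) w : ℝ) / d else 0

open Classical in
lemma tail_E3 {V P : Type*} [Fintype V] [Fintype P] [Nonempty P] [Nonempty V]
    (nb : V → Finset V) (d : ℕ) (hd0 : 0 < d) (hd : ∀ v, (nb v).card ≤ d) (S : Finset V) (Y : Finset P)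
    (μ : ℝ) (hμ : (Y.card : ℝ) * d ≤ μ * Fintype.card P) :
    cnt (fun c : V → P => 4 * μ ≤ ∑ w, gW nb d S Y c w (c w)) ≤ Real.exp (-2 * μ) * Fintype.card (V → P) := by
  have hdR : (0 : ℝ) < d := by exact_mod_cast hd0
  apply cnt_le_of_resample (Sᶜ)
  intro c0
  have hag : ∀ c1 : V → P, ∀ v ∈ S, (Sᶜ).piecewise c1 c0 v = c0 v := by
    intro c1 v hv; simp [hv]
  have hg : ∀ c1 : V → P, ∀ w, gW nb d S Y ((Sᶜ).piecewise c1 c0) w ((Sᶜ).piecewise c1 c0 w) = gW nb d S Y c0 w (c1 w) := by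
    intro c1 w
    by_cases hw : w ∈ S
    · simp [gW, hw]
    · have h1 : (Sᶜ).piecewise c1 c0 w = c1 w := by simp [hw]
      rw [h1]
      have h2 : ∀ p, (fun v => v ∈ S ∧ (Sᶜ).piecewise c1 c0 v = p) = (fun v => v ∈ S ∧ c0 v = p) := by
        intro p; funext v
        by_cases hv : v ∈ S
        · rw [hag c1 v hv]
        · simp [hv]
      have hr : ∀ p, rpr S ((Sᶜ).piecewise c1 c0) p = rpr S c0 p := by
        intro p; unfold rpr; rw [h2]
      have hex : ∀ p, (∃ v ∈ S, (Sᶜ).piecewise c1 c0 v = p) ↔ (∃ v ∈ S, c0 v = p) := by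
        intro p
        have := h2 p
        constructor
        · rintro ⟨v, hv, h⟩; exact ⟨v, hv, by rw [← h, hag c1 v hv]⟩
        · rintro ⟨v, hv, h⟩; exact ⟨v, hv, by rw [← h, hag c1 v hv]⟩
      unfold gW
      rw [hr]
      by_cases hc : w ∉ S ∧ c1 w ∈ Y ∧ ∃ v ∈ S, c0 v = c1 w
      · rw [if_pos hc, if_pos ⟨hc.1, hc.2.1, (hex _).2 hc.2.2⟩]
      · rw [if_neg hc, if_neg (fun h => hc ⟨h.1, h.2.1, (hex _).1 h.2.2⟩)]
  simp only [hg]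
  apply chernoff
  · intro w p
    unfold gW
    split_ifs
    · positivity
    · exact le_refl _
  · intro w p
    unfold gW
    split_ifs
    · rw [div_le_one hdR]
      exact_mod_cast cdg_le nb d hd _ _
    · norm_num
  · refine le_trans ?_ hμ
    rw [Finset.sum_comm]
    have h3 : ∀ p, ∑ w, gW nb d S Y c0 w p ≤ if p ∈ Y then (d : ℝ) else 0 := by
      intro p
      by_cases hp : p ∈ Y
      · simp only [hp, if_true]
        calc ∑ w, gW nb d S Y c0 w p ≤ ∑ w, (cdg nb (rpr S c0 p) w : ℝ) / d := by
              apply Finset.sum_le_sum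
              intro w _
              unfold gW
              split_ifs
              · exact le_refl _
              · positivity
          _ = ((∑ w, cdg nb (rpr S c0 p) w : ℕ) : ℝ) / d := by
              rw [← Finset.sum_div]; push_cast; rfl
          _ ≤ ((d * d : ℕ) : ℝ) / d := by
              gcongr
              exact sum_cdg_le nb d hd _
          _ = d := by push_cast; field_simp
      · simp [gW, hp]
    refine (Finset.sum_le_sum (fun p _ => h3 p)).trans ?_
    rw [Finset.sum_ite_mem]
    simp

open Classical in
lemma tail_det {V P : Type*} [Fintype V] [Fintype P] [Nonempty P] [Nonempty V]
    (nb : V → Finset V) (d K k : ℕ) (hd0 : 0 < d) (hd : ∀ v, (nb v).card ≤ d) (S : Finset V) (Y : Finset P)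
    (hk : Y.card = k) (μ : ℝ) (hμK : 256 * μ ≤ k * K)
    (c : V → P) (hE1 : ¬ ∃ Y1 ∈ Y.powerset.filter (fun Y1 => k ≤ 2 * Y1.card), ∀ v ∈ S, c v ∉ Y1)
    (hE2 : ¬ 4 * μ ≤ ∑ v, if v ∈ S ∧ c v ∈ Y then (1 : ℝ) else 0)
    (hE3 : ¬ 4 * μ ≤ ∑ w, gW nb d S Y c w (c w)) :
    k ≤ 4 * ((S.filter (fun v => ¬ (K * d < 8 * ovl nb c v) ∧ c v ∈ Y)).image c).card := by
  by_contra hcon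
  rw [not_le] at hcon hE2 hE3
  have hdR : (0 : ℝ) < d := by exact_mod_cast hd0
  set Hit := Y.filter (fun p => ∃ v ∈ S, c v = p) with hHit
  set HB := Hit.filter (fun p => K * d < 8 * ovl nb c (rpr S c p)) with hHB
  have hY : k < 2 * Hit.card := by
    by_contra hlt
    push Not at hlt
    apply hE1
    refine ⟨Y.filter (fun p => ¬ ∃ v ∈ S, c v = p), ?_, ?_⟩
    · rw [Finset.mem_filter, Finset.mem_powerset]
      refine ⟨Finset.filter_subset _ _, ?_⟩
      have := Finset.card_filter_add_card_filter_not (s := Y) (fun p => ∃ v ∈ S, c v = p)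
      rw [← hHit] at this
      omega
    · intro v hv hmem
      exact (Finset.mem_filter.1 hmem).2 ⟨v, hv, rfl⟩
  have hgood : (Hit.filter (fun p => ¬ (K * d < 8 * ovl nb c (rpr S c p)))).card ≤
      ((S.filter (fun v => ¬ (K * d < 8 * ovl nb c v) ∧ c v ∈ Y)).image c).card := by
    apply Finset.card_le_card
    intro p hp
    obtain ⟨hp1, hp2⟩ := Finset.mem_filter.1 hp
    obtain ⟨hpY, hpS⟩ := Finset.mem_filter.1 hp1
    obtain ⟨h1, h2⟩ := rpr_spec S c p hpS
    refine Finset.mem_image.2 ⟨rpr S c p, Finset.mem_filter.2 ⟨h1, hp2, ?_⟩, h2⟩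
    rw [h2]; exact hpY
  have hsplit := Finset.card_filter_add_card_filter_not (s := Hit) (fun p => K * d < 8 * ovl nb c (rpr S c p))
  rw [← hHB] at hsplit
  have hHBk : k ≤ 4 * HB.card := by omega
  -- lower bound
  have hlow : HB.card * (K * d) ≤ 8 * ∑ p ∈ Hit, ovl nb c (rpr S c p) := by
    rw [Finset.mul_sum, ← smul_eq_mul, ← Finset.sum_const]
    refine le_trans (Finset.sum_le_sum ?_) (Finset.sum_le_sum_of_subset (Finset.filter_subset _ _))
    intro p hp
    exact (Finset.mem_filter.1 hp).2.le
  -- upper bound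
  have hup : ((∑ p ∈ Hit, ovl nb c (rpr S c p) : ℕ) : ℝ) ≤
      d * ∑ v, (if v ∈ S ∧ c v ∈ Y then (1 : ℝ) else 0) + d * ∑ w, gW nb d S Y c w (c w) := by
    rw [Finset.mul_sum, Finset.mul_sum, ← Finset.sum_add_distrib]
    have h1 : ∑ p ∈ Hit, ovl nb c (rpr S c p) ≤ ∑ w, if c w ∈ Hit then cdg nb (rpr S c (c w)) w else 0 := by
      unfold ovl
      rw [Finset.sum_comm]
      apply Finset.sum_le_sum
      intro w _
      calc ∑ p ∈ Hit, (if w ≠ rpr S c p ∧ c w = c (rpr S c p) then cdg nb (rpr S c p) w else 0)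
          ≤ ∑ p ∈ Hit, (if c w = p then cdg nb (rpr S c p) w else 0) := by
            apply Finset.sum_le_sum
            intro p hp
            have h2 := (rpr_spec S c p (Finset.mem_filter.1 hp).2).2
            rw [h2]
            by_cases h : c w = p
            · rw [if_pos h]; split_ifs <;> simp
            · simp [h]
        _ = _ := by rw [Finset.sum_ite_eq]
    refine le_trans (Nat.cast_le.2 h1) ?_
    push_cast
    apply Finset.sum_le_sum
    intro w _
    by_cases hw : c w ∈ Hit
    · obtain ⟨hwY, hwS⟩ := Finset.mem_filter.1 hw
      rw [if_pos hw]
      by_cases hS : w ∈ S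
      · have : gW nb d S Y c w (c w) = 0 := by simp [gW, hS]
        rw [this, if_pos ⟨hS, hwY⟩]
        simp only [mul_one, mul_zero, add_zero]
        exact_mod_cast cdg_le nb d hd _ _
      · have : gW nb d S Y c w (c w) = (cdg nb (rpr S c (c w)) w : ℝ) / d := by
          unfold gW
          rw [if_pos ⟨hS, hwY, hwS⟩]
        rw [this, mul_div_cancel₀ _ hdR.ne']
        have : (0 : ℝ) ≤ d * (if w ∈ S ∧ c w ∈ Y then (1 : ℝ) else 0) := by positivity
        linarith
    · rw [if_neg hw]
      have : 0 ≤ gW nb d S Y c w (c w) := by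
        unfold gW; positivity
      positivity
  have hlowR : (HB.card : ℝ) * (K * d) ≤ 8 * ((∑ p ∈ Hit, ovl nb c (rpr S c p) : ℕ) : ℝ) := by
    exact_mod_cast hlow
  have hkR : (k : ℝ) ≤ 4 * HB.card := by exact_mod_cast hHBk
  have h9 : (k : ℝ) * K * d ≤ 4 * ((HB.card : ℝ) * (K * d)) := by
    have := mul_le_mul_of_nonneg_right hkR (show (0 : ℝ) ≤ K * d by positivity)
    linarith
  have h10 : d * ∑ v, (if v ∈ S ∧ c v ∈ Y then (1 : ℝ) else 0) < d * (4 * μ) := by gcongr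
  have h11 : d * ∑ w, gW nb d S Y c w (c w) < d * (4 * μ) := by gcongr
  have h12 : 256 * μ * d ≤ k * K * d := by gcongr
  linarith

open Classical in
lemma tail_main {V P : Type*} [Fintype V] [Fintype P] [Nonempty P] [Nonempty V]
    (nb : V → Finset V) (d K k : ℕ) (hd0 : 0 < d) (hd : ∀ v, (nb v).card ≤ d) (S : Finset V) (Y : Finset P)
    (hk : Y.card = k) (hN : 16 * Fintype.card P ≤ d) (hK : 256 * d ≤ K * Fintype.card P)
    (hS1 : d ≤ 4 * S.card) (hS2 : S.card ≤ d) :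
    cnt (fun c : V → P => 4 * ((S.filter (fun v => ¬ (K * d < 8 * ovl nb c v) ∧ c v ∈ Y)).image c).card < k) ≤
      3 * Real.exp (-k) * Fintype.card (V → P) := by
  have hP : (0 : ℝ) < Fintype.card P := by exact_mod_cast Fintype.card_pos
  have hΩ : (0 : ℝ) < Fintype.card (V → P) := by exact_mod_cast Fintype.card_pos
  have hNR : (16 : ℝ) * Fintype.card P ≤ d := by exact_mod_cast hN
  have hKR : (256 : ℝ) * d ≤ K * Fintype.card P := by exact_mod_cast hK
  set μ : ℝ := (k : ℝ) * d / Fintype.card P with hμ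
  have hμN : μ * Fintype.card P = k * d := by rw [hμ]; field_simp
  have hμk : (k : ℝ) ≤ μ := by
    rw [hμ, le_div_iff₀ hP]
    gcongr
    linarith
  have hμK : 256 * μ ≤ k * K := by
    rw [hμ, ← mul_div_assoc, div_le_iff₀ hP]
    have := mul_le_mul_of_nonneg_left hKR (Nat.cast_nonneg k : (0 : ℝ) ≤ k)
    linarith
  have hexp : Real.exp (-2 * μ) ≤ Real.exp (-k) := by
    apply Real.exp_le_exp.2
    have : (0 : ℝ) ≤ k := Nat.cast_nonneg k
    linarith
  have h1 : cnt (fun c : V → P => ∃ Y1 ∈ Y.powerset.filter (fun Y1 => k ≤ 2 * Y1.card), ∀ v ∈ S, c v ∉ Y1) ≤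
      Real.exp (-k) * Fintype.card (V → P) := by
    refine (cnt_exists_le _ _).trans ?_
    have h2 : ∀ Y1 ∈ Y.powerset.filter (fun Y1 => k ≤ 2 * Y1.card),
        cnt (fun c : V → P => ∀ v ∈ S, c v ∉ Y1) ≤ Real.exp (-(2 * k)) * Fintype.card (V → P) := by
      intro Y1 hY1
      apply avoid_count
      have h3 : (k : ℝ) ≤ 2 * Y1.card := by exact_mod_cast (Finset.mem_filter.1 hY1).2
      have h4 : (d : ℝ) ≤ 4 * S.card := by exact_mod_cast hS1
      have h5 : (k : ℝ) * d ≤ (2 * Y1.card) * (4 * S.card) := by gcongr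
      have h6 : (k : ℝ) * (16 * Fintype.card P) ≤ k * d := by gcongr
      linarith
    refine (Finset.sum_le_sum h2).trans ?_
    rw [Finset.sum_const, nsmul_eq_mul, ← mul_assoc]
    apply mul_le_mul_of_nonneg_right _ hΩ.le
    have h3 : ((Y.powerset.filter (fun Y1 => k ≤ 2 * Y1.card)).card : ℝ) ≤ 2 ^ k := by
      have := Finset.card_filter_le Y.powerset (fun Y1 => k ≤ 2 * Y1.card)
      rw [Finset.card_powerset, hk] at this
      exact_mod_cast this
    have h4 : (2 : ℝ) ^ k ≤ Real.exp k := by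
      have h2e : (2 : ℝ) ≤ Real.exp 1 := by
        have := Real.add_one_le_exp (1 : ℝ); linarith
      calc (2 : ℝ) ^ k ≤ (Real.exp 1) ^ k := by gcongr
        _ = Real.exp k := by rw [← Real.exp_nat_mul]; simp
    calc _ ≤ Real.exp k * Real.exp (-(2 * k)) := by
          gcongr; exact h3.trans h4
      _ = Real.exp (-k) := by rw [← Real.exp_add]; congr 1; ring
  have h2 : cnt (fun c : V → P => 4 * μ ≤ ∑ v, if v ∈ S ∧ c v ∈ Y then (1 : ℝ) else 0) ≤
      Real.exp (-k) * Fintype.card (V → P) := by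
    refine (chernoff (fun v p => if v ∈ S ∧ p ∈ Y then (1 : ℝ) else 0) ?_ ?_ μ ?_).trans ?_
    · intro v p; positivity
    · intro v p; split_ifs <;> norm_num
    · rw [hμN]
      have : ∀ v : V, ∑ p, (if v ∈ S ∧ p ∈ Y then (1 : ℝ) else 0) = if v ∈ S then (k : ℝ) else 0 := by
        intro v
        by_cases hv : v ∈ S
        · simp [hv, hk]
        · simp [hv]
      simp only [this]
      rw [Finset.sum_ite_mem]
      simp only [Finset.univ_inter, Finset.sum_const, nsmul_eq_mul]
      rw [mul_comm]
      have : (S.card : ℝ) ≤ d := by exact_mod_cast hS2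
      gcongr
    · exact mul_le_mul_of_nonneg_right hexp hΩ.le
  have h3 : cnt (fun c : V → P => 4 * μ ≤ ∑ w, gW nb d S Y c w (c w)) ≤
      Real.exp (-k) * Fintype.card (V → P) :=
    (tail_E3 nb d hd0 hd S Y μ (by rw [hμN, hk])).trans (mul_le_mul_of_nonneg_right hexp hΩ.le)
  have h4 := cnt_or_le (fun c : V → P => ∃ Y1 ∈ Y.powerset.filter (fun Y1 => k ≤ 2 * Y1.card), ∀ v ∈ S, c v ∉ Y1)
    (fun c : V → P => (4 * μ ≤ ∑ v, if v ∈ S ∧ c v ∈ Y then (1 : ℝ) else 0) ∨ 4 * μ ≤ ∑ w, gW nb d S Y c w (c w))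
  have h5 := cnt_or_le (fun c : V → P => 4 * μ ≤ ∑ v, if v ∈ S ∧ c v ∈ Y then (1 : ℝ) else 0)
    (fun c : V → P => 4 * μ ≤ ∑ w, gW nb d S Y c w (c w))
  refine le_trans (cnt_mono ?_) (h4.trans (by linarith))
  intro c hc
  by_contra hcon
  push Not at hcon
  have := tail_det nb d K k hd0 hd S Y hk μ hμK c (by
    push Not; exact hcon.1) (by push Not; exact hcon.2.1) (by push Not; exact hcon.2.2)
  omega

lemma final_H {V F : Type*} [Fintype V] [Field F] (b : ℕ) (hb : 2 ≤ b) (G : SimpleGraph V) (side : V → Bool)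
    (S : V → Finset V) (col : V → F × F) (par : F → F → Bool) (hps : ∀ x y, par x y = par y x) (r : ℕ)
    (hSG : ∀ u, ∀ v ∈ S u, G.Adj u v ∧ side v ≠ side u)
    (hcard : ∀ u, (S u).card = r)
    (hcomp : ∀ u, ∀ v ∈ S u, (col u).2 + (col v).2 = (col u).1 * (col v).1)
    (hpar : ∀ u, ∀ v ∈ S u, par (col u).1 (col v).1 = side u)
    (hinj : ∀ u, ∀ v ∈ S u, ∀ w ∈ S u, col v = col w → v = w)
    (hdis : ∀ u u', u ≠ u' → col u = col u' → Disjoint (S u) (S u')) :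
    ∃ H : SimpleGraph V, H ≤ G ∧
      ¬ ContainsCopy (completeBipartiteGraph (Fin 2) (Fin b)) H ∧ ∀ v, r ≤ deg H v := by
  let H : SimpleGraph V :=
    { Adj := fun u v => v ∈ S u ∨ u ∈ S v
      symm := ⟨fun u v h => h.symm⟩
      loopless := ⟨fun u h => by
        rcases h with h | h <;> exact (hSG u u h).2 rfl⟩ }
  have hH : ∀ u v, H.Adj u v ↔ (v ∈ S u ∨ u ∈ S v) := fun u v => Iff.rfl
  have hloc : ∀ u v w, H.Adj u v → H.Adj u w → col v = col w → v = w := by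
    intro u v w h1 h2 hc
    have key : ∀ v w, v ∈ S u → u ∈ S w → col v = col w → False := by
      intro v w h1 h2 hc
      have h3 := hpar _ _ h1
      have h4 := hpar _ _ h2
      rw [hps, ← hc, h3] at h4
      exact (hSG _ _ h2).2 h4
    rcases h1 with h1 | h1 <;> rcases h2 with h2 | h2
    · exact hinj u v h1 w h2 hc
    · exact (key v w h1 h2 hc).elim
    · exact (key w v h2 h1 hc.symm).elim
    · by_contra hne
      exact (Finset.disjoint_left.1 (hdis v w hne hc)) h1 h2
  have hco : ∀ u v, H.Adj u v → (col u).2 + (col v).2 = (col u).1 * (col v).1 := by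
    intro u v h
    rcases h with h | h
    · exact hcomp u v h
    · rw [add_comm, mul_comm]; exact hcomp v u h
  have hC4 : ∀ u u' v v', H.Adj u v → H.Adj u v' → H.Adj u' v → H.Adj u' v' → u ≠ u' → v ≠ v' → False := by
    intro u u' v v' h1 h2 h3 h4 hu hv
    have e1 := hco _ _ h1
    have e2 := hco _ _ h2
    have e3 := hco _ _ h3
    have e4 := hco _ _ h4
    have hz : ((col u).1 - (col u').1) * ((col v).1 - (col v').1) = 0 := by
      linear_combination -e1 + e2 + e3 - e4
    rcases mul_eq_zero.1 hz with h | h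
    · have ha := sub_eq_zero.1 h
      apply hu
      apply hloc v u u' h1.symm h3.symm
      refine Prod.ext ha ?_
      rw [ha] at e1
      linear_combination e1 - e3
    · have ha := sub_eq_zero.1 h
      apply hv
      apply hloc u v v' h1 h2
      refine Prod.ext ha ?_
      rw [ha] at e1
      linear_combination e1 - e2
  refine ⟨H, ?_, ?_, ?_⟩
  · intro u v h
    rcases h with h | h
    · exact (hSG _ _ h).1
    · exact (hSG _ _ h).1.symm
  · rintro ⟨f, hf⟩
    have hadj : ∀ i : Fin 2, ∀ j : Fin b, H.Adj (f (Sum.inl i)) (f (Sum.inr j)) := by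
      intro i j
      apply f.map_rel
      simp
    refine hC4 _ _ _ _ (hadj 0 ⟨0, by omega⟩) (hadj 0 ⟨1, by omega⟩) (hadj 1 ⟨0, by omega⟩) (hadj 1 ⟨1, by omega⟩) ?_ ?_
    · intro h; have := hf h; simp at this
    · intro h; have := hf h; simp at this
  · intro v
    unfold deg
    rw [← hcard v, ← Set.ncard_coe_finset]
    apply Set.ncard_le_ncard
    · intro w hw
      exact Or.inl hw
    · exact Set.toFinite _

open Classical in
lemma sum_split_sym {V : Type*} [Fintype V] (g : V → V → ℕ) (hg : ∀ v w, g v w = g w v) (u : V) (h0 : g u u = 0) :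
    ∑ v, ∑ w, g v w = (∑ v ∈ Finset.univ.erase u, ∑ w ∈ Finset.univ.erase u, g v w) + 2 * ∑ w, g u w := by
  have h1 : ∀ v, ∑ w, g v w = g v u + ∑ w ∈ Finset.univ.erase u, g v w :=
    fun v => (Finset.add_sum_erase _ _ (Finset.mem_univ u)).symm
  have h3 : ∑ v ∈ Finset.univ.erase u, g v u = ∑ w, g u w := by
    rw [h1 u, h0, zero_add]
    exact Finset.sum_congr rfl (fun v _ => hg v u)
  rw [← Finset.add_sum_erase _ _ (Finset.mem_univ u)]
  rw [Finset.sum_congr rfl (fun v _ => h1 v), Finset.sum_add_distrib, h3]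
  ring

open Classical in
lemma max_cut {V : Type*} [Fintype V] (G : SimpleGraph V) (d : ℕ) (hG : RegularDeg G d) :
    ∃ side : V → Bool, ∀ u, d ≤ 2 * (Finset.univ.filter (fun v => G.Adj u v ∧ side v ≠ side u)).card ∧
      (Finset.univ.filter (fun v => G.Adj u v ∧ side v ≠ side u)).card ≤ d := by
  let f : (V → Bool) → ℕ := fun s => ∑ v, ∑ w, if G.Adj v w ∧ s w ≠ s v then 1 else 0
  obtain ⟨s, hs⟩ := Finite.exists_max f
  refine ⟨s, fun u => ?_⟩
  have hdeg : (Finset.univ.filter (fun v => G.Adj u v)).card = d := by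
    rw [← hG u]
    unfold deg
    rw [← Set.ncard_coe_finset]
    congr 1
    ext v; simp
  have hsp := Finset.card_filter_add_card_filter_not (s := Finset.univ.filter (fun v => G.Adj u v)) (fun v => s v ≠ s u)
  rw [Finset.filter_filter, Finset.filter_filter, hdeg] at hsp
  refine ⟨?_, by omega⟩
  have hfl := hs (Function.update s u (!(s u)))
  have hsy : ∀ s : V → Bool, ∀ v w, (if G.Adj v w ∧ s w ≠ s v then 1 else 0) = if G.Adj w v ∧ s v ≠ s w then 1 else 0 := by
    intro s v w
    exact if_congr (and_congr (G.adj_comm v w) ne_comm) rfl rfl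
  simp only [f] at hfl
  rw [sum_split_sym _ (hsy _) u (by simp), sum_split_sym _ (hsy _) u (by simp)] at hfl
  have he : ∑ v ∈ Finset.univ.erase u, ∑ w ∈ Finset.univ.erase u,
      (if G.Adj v w ∧ Function.update s u (!(s u)) w ≠ Function.update s u (!(s u)) v then 1 else 0) =
      ∑ v ∈ Finset.univ.erase u, ∑ w ∈ Finset.univ.erase u, (if G.Adj v w ∧ s w ≠ s v then 1 else 0) := by
    apply Finset.sum_congr rfl
    intro v hv
    apply Finset.sum_congr rfl
    intro w hw
    rw [Function.update_of_ne (Finset.ne_of_mem_erase hv), Function.update_of_ne (Finset.ne_of_mem_erase hw)]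
  rw [he] at hfl
  have h2 : ∑ w, (if G.Adj u w ∧ Function.update s u (!(s u)) w ≠ Function.update s u (!(s u)) u then 1 else 0) =
      (Finset.univ.filter (fun v => G.Adj u v ∧ ¬ (s v ≠ s u))).card := by
    rw [Finset.card_filter]
    apply Finset.sum_congr rfl
    intro w _
    by_cases hw : w = u
    · subst hw; simp
    · rw [Function.update_of_ne hw, Function.update_self]
      cases s w <;> cases s u <;> simp
  rw [h2, ← Finset.card_filter] at hfl
  omega

open Classical in
noncomputable def bl {V : Type*} (nb : V → Finset V) : ℕ → V → Finset V
  | 0, u => {u}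
  | (n+1), u => (insert u (nb u)).biUnion (bl nb n)

lemma bl_self {V : Type*} (nb : V → Finset V) (n : ℕ) (u : V) : u ∈ bl nb n u := by
  classical
  induction n generalizing u with
  | zero => simp [bl]
  | succ n ih => simp only [bl]; exact Finset.mem_biUnion.2 ⟨u, Finset.mem_insert_self _ _, ih u⟩

lemma bl_step {V : Type*} (nb : V → Finset V) (n : ℕ) (u v w : V) (hv : v ∈ nb u) (hw : w ∈ bl nb n v) :
    w ∈ bl nb (n+1) u := by
  classical
  simp only [bl]; exact Finset.mem_biUnion.2 ⟨v, Finset.mem_insert_of_mem hv, hw⟩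

lemma bl_stay {V : Type*} (nb : V → Finset V) (n : ℕ) (u w : V) (hw : w ∈ bl nb n u) :
    w ∈ bl nb (n+1) u := by
  classical
  simp only [bl]; exact Finset.mem_biUnion.2 ⟨u, Finset.mem_insert_self _ _, hw⟩

lemma bl_card {V : Type*} (nb : V → Finset V) (d : ℕ) (hd : ∀ v, (nb v).card ≤ d) (n : ℕ) (u : V) :
    (bl nb n u).card ≤ (d + 1) ^ n := by
  classical
  induction n generalizing u with
  | zero => simp [bl]
  | succ n ih =>
    simp only [bl]
    refine (Finset.card_biUnion_le_card_mul _ _ _ (fun v _ => ih v)).trans ?_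
    rw [pow_succ, mul_comm]
    apply Nat.mul_le_mul_left
    exact (Finset.card_insert_le _ _).trans (Nat.succ_le_succ (hd u))

lemma bl_add {V : Type*} (nb : V → Finset V) (m n : ℕ) (u w j : V) (hw : w ∈ bl nb m u) (hj : j ∈ bl nb n w) :
    j ∈ bl nb (n + m) u := by
  classical
  induction m generalizing u with
  | zero => simp [bl] at hw; subst hw; exact hj
  | succ m ih =>
    simp only [bl] at hw
    obtain ⟨v, hv, hw⟩ := Finset.mem_biUnion.1 hw
    have := ih v hw
    rcases Finset.mem_insert.1 hv with rfl | hv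
    · exact bl_stay nb _ _ _ this
    · exact bl_step nb _ _ _ _ hv this

lemma bl_symm {V : Type*} (nb : V → Finset V) (hsym : ∀ u v, v ∈ nb u → u ∈ nb v) (m : ℕ) (u w : V)
    (hw : w ∈ bl nb m u) : u ∈ bl nb m w := by
  classical
  induction m generalizing u with
  | zero => simp [bl] at hw ⊢; exact hw.symm
  | succ m ih =>
    simp only [bl] at hw
    obtain ⟨v, hv, hw⟩ := Finset.mem_biUnion.1 hw
    have h1 := ih v hw
    rcases Finset.mem_insert.1 hv with rfl | hv
    · exact bl_stay nb _ _ _ h1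
    · have h2 : u ∈ bl nb 1 v := bl_step nb 0 _ _ _ (hsym _ _ hv) (bl_self nb 0 u)
      rw [add_comm]
      exact bl_add nb _ _ _ _ _ h1 h2

lemma ovl_congr {V P : Type*} [Fintype V] (nb : V → Finset V) (c c' : V → P) (v : V) (hv : c v = c' v)
    (h : ∀ a ∈ nb v, ∀ w ∈ nb a, c w = c' w) : ovl nb c v = ovl nb c' v := by
  classical
  unfold ovl
  apply Finset.sum_congr rfl
  intro w _
  by_cases h0 : cdg nb v w = 0
  · simp [h0]
  · have : ∃ a ∈ nb v, w ∈ nb a := by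
      obtain ⟨a, ha⟩ := Finset.card_pos.1 (Nat.pos_of_ne_zero h0)
      exact ⟨a, (Finset.mem_filter.1 ha).1, (Finset.mem_filter.1 ha).2⟩
    obtain ⟨a, ha, hw⟩ := this
    rw [h a ha w hw, hv]

open Classical in
noncomputable def Sx {V P X : Type*} (nb : V → Finset V) (e : P → X) (K : ℕ) (c : V → P) (u : V) (x : X) : Finset V :=
  (nb u).filter (fun v => ((nb v).filter (fun w => e (c w) = x)).card ≤ K)

open Classical in
noncomputable def Gx {V P X : Type*} [Fintype V] (nb : V → Finset V) (e : P → X) (d K : ℕ) (c : V → P) (u : V) (x : X)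
    (Y : Finset P) : Finset V :=
  (Sx nb e K c u x).filter (fun v => ¬ (K * d < 8 * ovl nb c v) ∧ c v ∈ Y)

lemma Sx_congr {V P X : Type*} (nb : V → Finset V) (e : P → X) (K : ℕ) (c c' : V → P) (u : V) (x : X)
    (h : ∀ v ∈ nb u, ∀ w ∈ nb v, c w = c' w) : Sx nb e K c u x = Sx nb e K c' u x := by
  classical
  unfold Sx
  apply Finset.filter_congr
  intro v hv
  have : (nb v).filter (fun w => e (c w) = x) = (nb v).filter (fun w => e (c' w) = x) := by
    apply Finset.filter_congr
    intro w hw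
    rw [h v hv w hw]
  rw [this]

open Classical in
lemma lll_app {V P X : Type*} [Fintype V] [Fintype P] [Nonempty P] [Nonempty V] [Fintype X]
    (side : V → Bool) (nb : V → Finset V) (d K k : ℕ) (hd0 : 0 < d) (hd : ∀ v, (nb v).card ≤ d)
    (hsym : ∀ u v, v ∈ nb u → u ∈ nb v) (hside : ∀ u, ∀ v ∈ nb u, side v ≠ side u) (e : P → X)
    (Y : Bool → X → Finset P) (hk : ∀ σ x, (Y σ x).card = k)
    (hN : 16 * Fintype.card P ≤ d) (hK : 256 * d ≤ K * Fintype.card P)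
    (hexp : 12 * (Fintype.card X : ℝ) * ((d + 1 : ℕ) : ℝ) ^ 6 * Real.exp (-k) ≤ 1) :
    ∃ c : V → P, ∀ u x, d ≤ 4 * (Sx nb e K c u x).card →
      k ≤ 4 * ((Gx nb e d K c u x (Y (side u) x)).image c).card := by
  have hmain := lll (V := V) (P := P) (ι := V)
    (fun u c => ∃ x ∈ (Finset.univ : Finset X), d ≤ 4 * (Sx nb e K c u x).card ∧
      4 * ((Gx nb e d K c u x (Y (side u) x)).image c).card < k) (bl nb 3)
    (Fintype.card X * (3 * Real.exp (-k))) ((d + 1) ^ 6) (by positivity) ?_ ?_ ?_ ?_ ?_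
  · obtain ⟨c, hc⟩ := hmain
    refine ⟨c, fun u x hx => ?_⟩
    by_contra hcon
    exact hc u ⟨x, Finset.mem_univ _, hx, not_le.1 hcon⟩
  · rintro u c c' hcc ⟨x, hx, h1, h2⟩
    have b0 : ∀ v, v ∈ bl nb 0 v := bl_self nb 0
    have c1 : ∀ v ∈ nb u, c v = c' v := fun v hv =>
      hcc v (bl_stay nb _ _ _ (bl_stay nb _ _ _ (bl_step nb _ _ _ _ hv (b0 v))))
    have c2 : ∀ v ∈ nb u, ∀ w ∈ nb v, c w = c' w := fun v hv w hw =>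
      hcc w (bl_stay nb _ _ _ (bl_step nb _ _ _ _ hv (bl_step nb _ _ _ _ hw (b0 w))))
    have c3 : ∀ v ∈ nb u, ∀ a ∈ nb v, ∀ w ∈ nb a, c w = c' w := fun v hv a ha w hw =>
      hcc w (bl_step nb _ _ _ _ hv (bl_step nb _ _ _ _ ha (bl_step nb _ _ _ _ hw (b0 w))))
    have hS := Sx_congr nb e K c c' u x c2
    have hGm : ∀ v ∈ nb u, ovl nb c v = ovl nb c' v := fun v hv => ovl_congr nb c c' v (c1 v hv) (c3 v hv)
    have hG : Gx nb e d K c u x (Y (side u) x) = Gx nb e d K c' u x (Y (side u) x) := by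
      unfold Gx
      rw [hS]
      apply Finset.filter_congr
      intro v hv
      have hv' : v ∈ nb u := (Finset.mem_filter.1 hv).1
      rw [hGm v hv', c1 v hv']
    have hI : (Gx nb e d K c u x (Y (side u) x)).image c = (Gx nb e d K c' u x (Y (side u) x)).image c' := by
      rw [← hG]
      apply Finset.image_congr
      intro v hv
      exact c1 v (Finset.mem_filter.1 (Finset.mem_filter.1 hv).1).1
    refine ⟨x, hx, ?_, ?_⟩
    · rw [← hS]; exact h1
    · rw [← hI]; exact h2
  · intro u
    refine (cnt_exists_le _ _).trans ?_
    have hone : ∀ x ∈ (Finset.univ : Finset X), cnt (fun c : V → P => d ≤ 4 * (Sx nb e K c u x).card ∧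
      4 * ((Gx nb e d K c u x (Y (side u) x)).image c).card < k) ≤ 3 * Real.exp (-k) * Fintype.card (V → P) := by
      intro x _
      apply cnt_le_of_resample (Finset.univ.filter (fun v => side v ≠ side u))
      intro c0
      set I := Finset.univ.filter (fun v => side v ≠ side u) with hI
      have hin : ∀ (c1 : V → P) v, side v ≠ side u → I.piecewise c1 c0 v = c1 v := by
        intro c1 v hv
        apply Finset.piecewise_eq_of_mem
        rw [hI]; simpa using hv
      have hout : ∀ (c1 : V → P) v, side v = side u → I.piecewise c1 c0 v = c0 v := by
        intro c1 v hv
        apply Finset.piecewise_eq_of_notMem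
        rw [hI]; simpa using hv
      have hflip : ∀ v ∈ nb u, ∀ w ∈ nb v, side w = side u := by
        intro v hv w hw
        have h1 := hside u v hv
        have h2 := hside v w hw
        revert h1 h2
        cases side u <;> cases side v <;> cases side w <;> simp
      have hS : ∀ c1 : V → P, Sx nb e K (I.piecewise c1 c0) u x = Sx nb e K c0 u x := fun c1 =>
        Sx_congr nb e K _ _ u x (fun v hv w hw => hout c1 w (hflip v hv w hw))
      by_cases hd4 : d ≤ 4 * (Sx nb e K c0 u x).card
      · refine le_trans (cnt_mono ?_) (tail_main nb d K k hd0 hd (Sx nb e K c0 u x) (Y (side u) x) (hk _ _) hN hK hd4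
          ((Finset.card_filter_le _ _).trans (hd u)))
        rintro c1 ⟨-, h2⟩
        refine lt_of_le_of_lt (le_of_eq ?_) h2
        congr 2
        unfold Gx
        rw [hS]
        have hF : (Sx nb e K c0 u x).filter (fun v => ¬ (K * d < 8 * ovl nb c1 v) ∧ c1 v ∈ Y (side u) x) =
          (Sx nb e K c0 u x).filter (fun v => ¬ (K * d < 8 * ovl nb (I.piecewise c1 c0) v) ∧ I.piecewise c1 c0 v ∈ Y (side u) x) := by
          apply Finset.filter_congr
          intro v hv
          have hv' : v ∈ nb u := (Finset.mem_filter.1 hv).1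
          have hsv := hside u v hv'
          rw [hin c1 v hsv, ovl_congr nb (I.piecewise c1 c0) c1 v (hin c1 v hsv)]
          intro a ha w hw
          apply hin
          have h1 := hflip v hv' a ha
          have h2 := hside a w hw
          rw [h1] at h2
          exact h2
        rw [hF]
        apply Finset.image_congr
        intro v hv
        have hv' : v ∈ nb u := (Finset.mem_filter.1 (Finset.mem_filter.1 hv).1).1
        exact (hin c1 v (hside u v hv')).symm
      · refine le_trans (le_of_eq ?_) (show (0 : ℝ) ≤ _ by positivity)
        have : ∀ c1 : V → P, ¬ (d ≤ 4 * (Sx nb e K (I.piecewise c1 c0) u x).card ∧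
          4 * ((Gx nb e d K (I.piecewise c1 c0) u x (Y (side u) x)).image (I.piecewise c1 c0)).card < k) := by
          intro c1 h
          rw [hS] at h
          exact hd4 h.1
        unfold cnt
        simp only [this]
        simp
    refine (Finset.sum_le_sum hone).trans ?_
    rw [Finset.sum_const, nsmul_eq_mul, Finset.card_univ]
    linarith
  · intro u
    refine (Finset.card_le_card ?_).trans (bl_card nb d hd 6 u)
    intro j hj
    obtain ⟨w, hw1, hw2⟩ := Finset.not_disjoint_iff.1 (Finset.mem_filter.1 hj).2
    exact bl_add nb 3 3 _ _ _ hw1 (bl_symm nb hsym _ _ _ hw2)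
  · push_cast at hexp ⊢
    linarith
  · have h1 : (1 : ℝ) ≤ ((d + 1 : ℕ) : ℝ) ^ 6 := one_le_pow₀ (by push_cast; linarith [(Nat.cast_nonneg d : (0:ℝ) ≤ d)])
    have h2 : (0 : ℝ) ≤ 12 * (Fintype.card X : ℝ) * Real.exp (-k) := by positivity
    have h3 := mul_le_mul_of_nonneg_left h1 h2
    linarith

open Classical in
lemma reps {V P : Type*} (c : V → P) (T : Finset V) :
    ∃ R ⊆ T, Set.InjOn c R ∧ R.card = (T.image c).card := by
  obtain ⟨R, h1, h2, h3⟩ := Finset.exists_subset_injOn_image_eq_of_surjOn (f := c) (T : Set V) (T.image c)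
    (by simpa using Set.surjOn_image c (T : Set V))
  refine ⟨R, by exact_mod_cast h1, h2, ?_⟩
  rw [← h3, Finset.card_image_of_injOn h2]

open Classical in
lemma assemble {V P X : Type*} [Fintype V]
    (side : V → Bool) (nb : V → Finset V) (d K k r : ℕ) (hr : 0 < r) (hK0 : 0 < K) (hd0 : 0 < d)
    (hd : ∀ v, (nb v).card ≤ d) (hd2 : ∀ v, d ≤ 2 * (nb v).card)
    (hsym : ∀ u v, v ∈ nb u → u ∈ nb v) (e : P → X) (he : Function.Injective e)
    (Y : Bool → X → Finset P) (c : V → P)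
    (hgood : ∀ u x, d ≤ 4 * (Sx nb e K c u x).card →
      k ≤ 4 * ((Gx nb e d K c u x (Y (side u) x)).image c).card)
    (Q : Finset X) (hQ : 2 * d ≤ Q.card) (hQe : ∀ p, e p ∉ Q) (hKr : 4 * (r * K) ≤ k) (hr8 : 8 * r ≤ k) :
    ∃ (col : V → X) (S : V → Finset V), (∀ u, S u ⊆ nb u) ∧ (∀ u, (S u).card = r) ∧
      (∀ u, ∀ v ∈ S u, ∃ p ∈ Y (side u) (col u), col v = e p) ∧
      (∀ u, ∀ v ∈ S u, ∀ w ∈ S u, col v = col w → v = w) ∧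
      (∀ u u', u ≠ u' → col u = col u' → Disjoint (S u) (S u')) := by
  choose R hRs hRi hRc using fun u x => reps c (Gx nb e d K c u x (Y (side u) x))
  let U : V → Prop := fun v => K * d < 8 * ovl nb c v
  have hRnb : ∀ u x, ∀ v ∈ R u x, v ∈ nb u := fun u x v hv =>
    (Finset.mem_filter.1 (Finset.mem_filter.1 (hRs u x hv)).1).1
  have hRm : ∀ u x, ∀ v ∈ R u x, ((nb v).filter (fun w => e (c w) = x)).card ≤ K := fun u x v hv =>
    (Finset.mem_filter.1 (Finset.mem_filter.1 (hRs u x hv)).1).2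
  have hRU : ∀ u x, ∀ v ∈ R u x, ¬ U v := fun u x v hv => (Finset.mem_filter.1 (hRs u x hv)).2.1
  have hRY : ∀ u x, ∀ v ∈ R u x, c v ∈ Y (side u) x := fun u x v hv => (Finset.mem_filter.1 (hRs u x hv)).2.2
  -- good clients
  have hgoodc : ∀ u, ¬ U u → k ≤ 4 * (R u (e (c u))).card := by
    intro u hu
    rw [hRc]
    apply hgood
    have h1 := ovl_heavy nb c u K
    have h2 := Finset.card_filter_add_card_filter_not (s := nb u)
      (fun a => K < ((nb a).filter (fun w => c w = c u)).card)
    have h3 : (nb u).filter (fun a => ¬ K < ((nb a).filter (fun w => c w = c u)).card) = Sx nb e K c u (e (c u)) := by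
      unfold Sx
      simp only [he.eq_iff, not_lt]
    rw [h3] at h2
    have h4 : 8 * ovl nb c u ≤ K * d := not_lt.1 hu
    have h5 : K * (8 * ((nb u).filter (fun a => K < ((nb a).filter (fun w => c w = c u)).card)).card) ≤ K * d := by
      linarith
    have h6 := Nat.le_of_mul_le_mul_left h5 hK0
    have := hd2 u
    omega
  have hbadc : ∀ u, ∀ x ∈ Q, k ≤ 4 * (R u x).card := by
    intro u x hx
    rw [hRc]
    apply hgood
    have : Sx nb e K c u x = nb u := by
      unfold Sx
      apply Finset.filter_true_of_mem
      intro v _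
      rw [Finset.filter_false_of_mem]
      · simp
      · intro w _ h
        exact hQe (c w) (h ▸ hx)
    rw [this]
    have := hd2 u
    omega
  obtain ⟨S1, hS1a, hS1b, hS1c⟩ := hall_clients (ι := {u // ¬ U u}) (ρ := V × X) r K hK0
    (fun u => (R u.1 (e (c u.1))).image (fun v => (v, e (c u.1)))) (by
      intro u
      rw [Finset.card_image_of_injective _ (fun a b h => (Prod.ext_iff.1 h).1)]
      have := hgoodc u.1 u.2
      omega) (by
      rintro ⟨v, x⟩ C hC
      by_cases hne : C.Nonempty
      · have hC' : ∀ u ∈ C, v ∈ R u.1 (e (c u.1)) ∧ e (c u.1) = x := by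
          intro u hu
          obtain ⟨w, hw, h⟩ := Finset.mem_image.1 (hC u hu)
          obtain ⟨h1, h2⟩ := Prod.ext_iff.1 h
          dsimp only at h1 h2
          subst h1
          exact ⟨hw, h2⟩
        obtain ⟨u0, hu0⟩ := hne
        have hb := hRm u0.1 _ v (hC' u0 hu0).1
        rw [(hC' u0 hu0).2] at hb
        refine le_trans ?_ hb
        apply Finset.card_le_card_of_injOn (fun u => u.1)
        · intro u hu
          have := hC' u hu
          exact Finset.mem_coe.2 (Finset.mem_filter.2 ⟨hsym _ _ (hRnb _ _ _ this.1), this.2⟩)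
        · intro a _ b _ h
          exact Subtype.ext h
      · rw [Finset.not_nonempty_iff_eq_empty] at hne
        simp [hne])
  obtain ⟨f, S2, hS2a, hS2b, hS2c⟩ := assign_clients (ι := {u // U u}) (κ := {x // x ∈ Q}) (V := V) r d hr hd0
    (fun u x => R u.1 x.1) (by
      intro u x
      have := hbadc u.1 x.1 x.2
      omega) (by
      intro x v C hC
      refine le_trans ?_ (hd v)
      apply Finset.card_le_card_of_injOn (fun u => u.1)
      · intro u hu
        exact Finset.mem_coe.2 (hsym _ _ (hRnb _ _ _ (hC u hu)))
      · intro a _ b _ h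
        exact Subtype.ext h) (by simpa using hQ)
  let col : V → X := fun u => if h : U u then (f ⟨u, h⟩).1 else e (c u)
  let S : V → Finset V := fun u => if h : U u then S2 ⟨u, h⟩ else (S1 ⟨u, h⟩).image Prod.fst
  have hcolg : ∀ u, ¬ U u → col u = e (c u) := fun u h => dif_neg h
  have hcolb : ∀ u (h : U u), col u = (f ⟨u, h⟩).1 := fun u h => dif_pos h
  have hSg : ∀ u (h : ¬ U u), S u = (S1 ⟨u, h⟩).image Prod.fst := fun u h => dif_neg h
  have hSb : ∀ u (h : U u), S u = S2 ⟨u, h⟩ := fun u h => dif_pos h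
  have hS1x : ∀ u (h : ¬ U u), ∀ p ∈ S1 ⟨u, h⟩, p.1 ∈ R u (e (c u)) ∧ p.2 = e (c u) := by
    intro u h p hp
    obtain ⟨w, hw, h⟩ := Finset.mem_image.1 (hS1a _ hp)
    rw [← h]
    exact ⟨hw, rfl⟩
  have hSR : ∀ u, S u ⊆ R u (col u) := by
    intro u
    by_cases h : U u
    · rw [hSb u h, hcolb u h]; exact hS2a ⟨u, h⟩
    · rw [hSg u h, hcolg u h]
      intro v hv
      obtain ⟨p, hp, rfl⟩ := Finset.mem_image.1 hv
      exact (hS1x u h p hp).1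
  have hScol : ∀ u, ∀ v ∈ S u, col v = e (c v) := fun u v hv => hcolg v (hRU u _ v (hSR u hv))
  refine ⟨col, S, ?_, ?_, ?_, ?_, ?_⟩
  · intro u v hv
    exact hRnb _ _ _ (hSR u hv)
  · intro u
    by_cases h : U u
    · rw [hSb u h]; exact hS2b _
    · rw [hSg u h, Finset.card_image_of_injOn, hS1b]
      intro p hp p' hp' hpp
      exact Prod.ext hpp (((hS1x u h p hp).2).trans ((hS1x u h p' hp').2).symm)
  · intro u v hv
    exact ⟨c v, hRY _ _ _ (hSR u hv), hScol u v hv⟩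
  · intro u v hv w hw h
    rw [hScol u v hv, hScol u w hw] at h
    exact hRi u _ (hSR u hv) (hSR u hw) (he h)
  · intro u u' hne hc
    by_cases h : U u
    · by_cases h' : U u'
      · rw [hSb u h, hSb u' h']
        apply hS2c
        · intro hh; exact hne (Subtype.ext_iff.1 hh)
        · rw [hcolb u h, hcolb u' h'] at hc
          exact Subtype.ext hc
      · rw [hcolb u h, hcolg u' h'] at hc
        exact absurd (hc ▸ (f ⟨u, h⟩).2) (hQe _)
    · by_cases h' : U u'
      · rw [hcolg u h, hcolb u' h'] at hc
        exact absurd (hc ▸ (f ⟨u', h'⟩).2) (hQe _)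
      · rw [hcolg u h, hcolg u' h'] at hc
        rw [hSg u h, hSg u' h', Finset.disjoint_left]
        intro v hv hv'
        obtain ⟨p, hp, rfl⟩ := Finset.mem_image.1 hv
        obtain ⟨p', hp', hpp⟩ := Finset.mem_image.1 hv'
        have : p' = p := Prod.ext hpp (by rw [(hS1x u h p hp).2, (hS1x u' h' p' hp').2, hc])
        subst this
        exact Finset.disjoint_left.1 (hS1c ⟨u, h⟩ ⟨u', h'⟩ (fun hh => hne (Subtype.ext_iff.1 hh))) hp hp'

lemma exp_large : ∃ k0 : ℕ, ∀ k : ℕ, k0 ≤ k → 192 * (256 * ((k : ℝ) + 1)) ^ 14 * Real.exp (-k) ≤ 1 := by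
  have h := (Real.tendsto_pow_mul_exp_neg_atTop_nhds_zero 14).const_mul ((192 : ℝ) * 512 ^ 14)
  rw [mul_zero] at h
  have h2 := (h.comp tendsto_natCast_atTop_atTop).eventually (eventually_le_nhds (show (0 : ℝ) < 1 by norm_num))
  obtain ⟨k0, hk0⟩ := Filter.eventually_atTop.1 h2
  refine ⟨k0 + 1, fun k hk => ?_⟩
  have h3 := hk0 k (by omega)
  simp only [Function.comp] at h3
  refine le_trans ?_ h3
  have h4 : (1 : ℝ) ≤ k := by exact_mod_cast (show 1 ≤ k by omega)
  have h5 : (256 * ((k : ℝ) + 1)) ^ 14 ≤ (512 * k) ^ 14 := by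
    exact pow_le_pow_left₀ (by positivity) (by linarith) 14
  rw [mul_pow 512] at h5
  calc 192 * (256 * ((k : ℝ) + 1)) ^ 14 * Real.exp (-k) ≤ 192 * (512 ^ 14 * (k : ℝ) ^ 14) * Real.exp (-k) := by gcongr
    _ = _ := by ring

def Yc (q k : ℕ) (σ : Bool) (x : ZMod q × ZMod q) (j : Fin k) : Fin (2 * k) × ZMod q :=
  (⟨2 * j.1 + (x.1.val + σ.toNat) % 2, by have := j.2; omega⟩,
    x.1 * ((2 * j.1 + (x.1.val + σ.toNat) % 2 : ℕ) : ZMod q) - x.2)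

lemma Yc_inj (q k : ℕ) (σ : Bool) (x : ZMod q × ZMod q) : Function.Injective (Yc q k σ x) := by
  intro i j h
  have h1 := congrArg (fun p => p.1.1) h
  simp only [Yc] at h1
  apply Fin.ext
  omega

def eC (q k : ℕ) (p : Fin (2 * k) × ZMod q) : ZMod q × ZMod q := ((p.1.1 : ZMod q), p.2)

lemma eC_inj (q k : ℕ) (h : 2 * k ≤ q) : Function.Injective (eC q k) := by
  intro a b hab
  obtain ⟨h1, h2⟩ := Prod.ext_iff.1 hab
  refine Prod.ext (Fin.ext ?_) h2
  have h3 := congrArg ZMod.val h1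
  simp only [eC] at h3
  rwa [ZMod.val_natCast_of_lt (by omega), ZMod.val_natCast_of_lt (by omega)] at h3

lemma Q_card (q m : ℕ) [NeZero q] :
    (q - m) * q ≤ (Finset.univ.filter (fun x : ZMod q × ZMod q => m ≤ x.1.val)).card := by
  classical
  have h1 : (Finset.univ.filter (fun x : ZMod q × ZMod q => m ≤ x.1.val)) =
      (Finset.univ.filter (fun a : ZMod q => m ≤ a.val)) ×ˢ Finset.univ := by
    ext x; simp
  rw [h1, Finset.card_product, Finset.card_univ, ZMod.card]
  apply Nat.mul_le_mul_right
  have h2 := Finset.card_filter_add_card_filter_not (s := (Finset.univ : Finset (ZMod q))) (fun a => m ≤ a.val)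
  rw [Finset.card_univ, ZMod.card] at h2
  have h3 : (Finset.univ.filter (fun a : ZMod q => ¬ m ≤ a.val)).card ≤ (Finset.range m).card := by
    apply Finset.card_le_card_of_injOn ZMod.val
    · intro a ha
      simpa using ha
    · intro a _ b _ h
      exact ZMod.val_injective q h
  rw [Finset.card_range] at h3
  omega

theorem statement12 (b : ℕ) (hb : 2 ≤ b) :
    ∃ (c : ℝ) (d₀ : ℕ), 0 < c ∧
      ∀ d : ℕ, d₀ ≤ d →
        ∀ (V : Type) [Fintype V] (G : SimpleGraph V), RegularDeg G d →
          ∃ H : SimpleGraph V, H ≤ G ∧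
            ¬ ContainsCopy (completeBipartiteGraph (Fin 2) (Fin b)) H ∧
            ∀ v : V, c * Real.sqrt (d : ℝ) ≤ (deg H v : ℝ) := by
  classical
  obtain ⟨k0, hk0⟩ := exp_large
  refine ⟨1 / 134217728, (256 * (k0 + 262144)) ^ 2, by norm_num, ?_⟩
  intro d hd V _ G hG
  rcases isEmpty_or_nonempty V with hV | hV
  · refine ⟨G, le_refl _, ?_, fun v => (hV.false v).elim⟩
    rintro ⟨f, -⟩
    exact hV.false (f (Sum.inl 0))
  set s := Nat.sqrt d with hs
  have hs1 : s * s ≤ d := Nat.sqrt_le d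
  have hs2 : d < (s + 1) * (s + 1) := Nat.lt_succ_sqrt d
  have hs0 : 256 * (k0 + 262144) ≤ s := by
    rw [hs, Nat.le_sqrt']; exact hd
  obtain ⟨q, hq, hq1, hq2⟩ := Nat.exists_prime_lt_and_le_two_mul (2 * (s + 1)) (by omega)
  have : Fact q.Prime := ⟨hq⟩
  set k := s / 256 with hk
  have hkk0 : k0 + 262144 ≤ k := by
    rw [hk, Nat.le_div_iff_mul_le (by norm_num)]; linarith
  clear hd
  have hks : 256 * k ≤ s := by omega
  have hsk : s + 1 ≤ 256 * (k + 1) := by omega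
  set r := k / 262144 with hr
  have hr1 : 1 ≤ r := by omega
  have hrk : 262144 * r ≤ k := by omega
  have hsr : s + 1 ≤ 134217728 * r := by omega
  have hkq : 2 * k ≤ q := by omega
  have : NeZero (2 * k) := ⟨by omega⟩
  have hd0 : 0 < d := by
    have : 0 < s * s := by apply Nat.mul_pos <;> omega
    omega
  obtain ⟨side, hside⟩ := max_cut G d hG
  set nb : V → Finset V := fun u => Finset.univ.filter (fun v => G.Adj u v ∧ side v ≠ side u) with hnb
  have hnbm : ∀ u v, v ∈ nb u ↔ G.Adj u v ∧ side v ≠ side u := by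
    intro u v; simp [hnb]
  have hsym : ∀ u v, v ∈ nb u → u ∈ nb v := by
    intro u v h
    rw [hnbm] at h ⊢
    exact ⟨h.1.symm, h.2.symm⟩
  have hcP : Fintype.card (Fin (2 * k) × ZMod q) = 2 * k * q := by
    rw [Fintype.card_prod, Fintype.card_fin, ZMod.card]
  obtain ⟨c, hc⟩ := lll_app (P := Fin (2 * k) × ZMod q) (X := ZMod q × ZMod q) side nb d 65536 k hd0
    (fun v => by simpa [hnb] using (hside v).2) hsym (fun u v h => ((hnbm u v).1 h).2) (eC q k)
    (fun σ x => Finset.univ.image (Yc q k σ x))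
    (fun σ x => by rw [Finset.card_image_of_injective _ (Yc_inj q k σ x), Finset.card_univ, Fintype.card_fin])
    (by
      rw [hcP]
      nlinarith [Nat.mul_le_mul hks hq2])
    (by
      rw [hcP]
      have h1 : s + 1 ≤ 512 * k := by omega
      have h2 : (s + 1) * (s + 1) ≤ 512 * k * q := Nat.mul_le_mul h1 (by omega)
      nlinarith)
    (by
      refine le_trans ?_ (hk0 k (by omega))
      refine mul_le_mul_of_nonneg_right ?_ (Real.exp_pos _).le
      rw [Fintype.card_prod, ZMod.card]
      have h1 : (q : ℝ) ≤ 4 * (256 * ((k : ℝ) + 1)) := by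
        have : q ≤ 4 * (256 * (k + 1)) := by omega
        exact_mod_cast this
      have h2 : ((d + 1 : ℕ) : ℝ) ≤ (256 * ((k : ℝ) + 1)) ^ 2 := by
        have : d + 1 ≤ (256 * (k + 1)) ^ 2 := by
          rw [sq]
          exact le_trans hs2 (Nat.mul_le_mul hsk hsk)
        exact_mod_cast this
      set t : ℝ := 256 * ((k : ℝ) + 1) with ht
      have ht0 : 0 ≤ t := by positivity
      calc 12 * ((q * q : ℕ) : ℝ) * ((d + 1 : ℕ) : ℝ) ^ 6 ≤ 12 * ((4 * t) * (4 * t)) * (t ^ 2) ^ 6 := by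
            push_cast at h2 ⊢
            gcongr
        _ = 192 * t ^ 14 := by ring)
  obtain ⟨col, S, hS1, hS2, hS3, hS4, hS5⟩ := assemble side nb d 65536 k r hr1 (by norm_num) hd0
    (fun v => by simpa [hnb] using (hside v).2) (fun v => by simpa [hnb] using (hside v).1) hsym (eC q k)
    (eC_inj q k hkq) (fun σ x => Finset.univ.image (Yc q k σ x)) c hc
    (Finset.univ.filter (fun x : ZMod q × ZMod q => 2 * k ≤ x.1.val))
    (by
      refine le_trans ?_ (Q_card q (2 * k))
      have h1 : s + 1 ≤ q - 2 * k := by omega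
      have h2 := Nat.mul_le_mul h1 hq1.le
      nlinarith)
    (by
      intro p hp
      have h1 := (Finset.mem_filter.1 hp).2
      have h2 := p.1.2
      simp only [eC] at h1
      rw [ZMod.val_natCast_of_lt (by omega)] at h1
      omega) (by omega) (by omega)
  have hcc : ∀ u, ∀ v ∈ S u, ∃ i : ℕ, i < 2 * k ∧ (col v).1 = (i : ZMod q) ∧
      (col v).2 = (col u).1 * (i : ZMod q) - (col u).2 ∧ ((col u).1.val + i) % 2 = (side u).toNat := by
    intro u v hv
    obtain ⟨p, hp, hpe⟩ := hS3 u v hv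
    obtain ⟨j, -, rfl⟩ := Finset.mem_image.1 hp
    refine ⟨2 * j.1 + ((col u).1.val + (side u).toNat) % 2, ?_, ?_, ?_, ?_⟩
    · have := j.2; omega
    · rw [hpe]; rfl
    · rw [hpe]; rfl
    · have : (side u).toNat ≤ 1 := Bool.toNat_le _
      omega
  obtain ⟨H, hH1, hH2, hH3⟩ := final_H b hb G side S col
    (fun x y => decide ((x.val + y.val) % 2 = 1)) (fun x y => by simp only [add_comm]) r
    (fun u v hv => (hnbm u v).1 (hS1 u hv)) hS2
    (by
      intro u v hv
      obtain ⟨i, -, h1, h2, -⟩ := hcc u v hv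
      rw [h1, h2]; ring)
    (by
      intro u v hv
      obtain ⟨i, hi, h1, -, h3⟩ := hcc u v hv
      rw [h1, ZMod.val_natCast_of_lt (by omega), h3]
      cases side u <;> simp) hS4 hS5
  refine ⟨H, hH1, hH2, fun v => ?_⟩
  have h1 : Real.sqrt d ≤ (s : ℝ) + 1 := by
    rw [Real.sqrt_le_left (by positivity)]
    have : d ≤ (s + 1) ^ 2 := by rw [sq]; exact hs2.le
    exact_mod_cast this
  have h2 : (s : ℝ) + 1 ≤ 134217728 * r := by exact_mod_cast hsr
  have h3 : (r : ℝ) ≤ deg H v := by exact_mod_cast hH3 v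
  linarith
end

section
/- For every integer b ≥ 3 there exist a constant c > 0 and an integer d₀ such that for all d ≥ d₀, every d-regular graph G has a spanning subgraph H containing no copy of the complete bipartite graph K_{3,b} and with minimum degree δ(H) ≥ c·d^{2/3}. -/
open SimpleGraph

namespace SB
open Finset Function

lemma sum_update {V Q : Type} [Fintype V] [DecidableEq V] [Fintype Q]
    (v : V) (F : (V → Q) → ℝ) :
    ∑ χ : V → Q, ∑ a : Q, F (update χ v a) = Fintype.card Q * ∑ χ : V → Q, F χ := by
  have h1 : ∑ χ : V → Q, ∑ a : Q, F (update χ v a)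
      = ∑ x : (V → Q) × Q, F (update x.1 v x.2) := by
    rw [Fintype.sum_prod_type]
  have h2 : ∑ x : (V → Q) × Q, F (update x.1 v x.2) = ∑ x : (V → Q) × Q, F x.1 := by
    refine Finset.sum_nbij' (fun x => (update x.1 v x.2, x.1 v)) (fun x => (update x.1 v x.2, x.1 v))
      ?_ ?_ ?_ ?_ ?_ <;> simp
  rw [h1, h2, Fintype.sum_prod_type]
  simp [Finset.mul_sum]

lemma supermart {V Q : Type} [Fintype V] [LinearOrder V] [Fintype Q] [Nonempty Q]
    (w : V → (V → Q) → ℝ) (hw0 : ∀ v χ, 0 ≤ w v χ) (T : Finset V)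
    (hdep : ∀ z ∈ T, ∀ v ∈ T, z < v → ∀ χ a, w z (update χ v a) = w z χ)
    (havg : ∀ v ∈ T, ∀ χ, ∑ a : Q, w v (update χ v a) ≤ Fintype.card Q) :
    ∑ χ : V → Q, ∏ z ∈ T, w z χ ≤ Fintype.card (V → Q) := by
  induction T using Finset.induction_on_max with
  | empty => simp
  | insert v s hs ih =>
    have ih' := ih (fun z hz v' hv' => hdep z (mem_insert_of_mem hz) v' (mem_insert_of_mem hv'))
      (fun z hz => havg z (mem_insert_of_mem hz))
    have hvs : v ∉ s := fun h => lt_irrefl _ (hs v h)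
    have hq : (0 : ℝ) < Fintype.card Q := by exact_mod_cast Fintype.card_pos
    have key : (Fintype.card Q : ℝ) * ∑ χ : V → Q, ∏ z ∈ insert v s, w z χ
        ≤ Fintype.card Q * ∑ χ : V → Q, ∏ z ∈ s, w z χ := by
      rw [← sum_update v, Finset.mul_sum]
      apply Finset.sum_le_sum
      intro χ _
      have : ∀ a, ∏ z ∈ insert v s, w z (update χ v a)
          = (∏ z ∈ s, w z χ) * w v (update χ v a) := by
        intro a
        rw [prod_insert hvs, mul_comm]
        congr 1
        apply prod_congr rfl
        intro z hz
        exact hdep z (mem_insert_of_mem hz) v (mem_insert_self _ _) (hs z hz) χ a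
      simp_rw [this]
      rw [← Finset.mul_sum, mul_comm]
      exact mul_le_mul_of_nonneg_right (havg v (mem_insert_self _ _) χ)
        (prod_nonneg fun z _ => hw0 z χ)
    exact le_trans (le_of_mul_le_mul_left key hq) ih'

open Classical in
lemma indep {V Q : Type} [Fintype V] [Fintype Q] (A B : (V → Q) → Prop) (D : Finset V)
    (hA : ∀ χ χ' : V → Q, (∀ y ∈ D, χ y = χ' y) → (A χ → A χ'))
    (hB : ∀ χ χ' : V → Q, (∀ y, y ∉ D → χ y = χ' y) → (B χ → B χ')) :
    #{χ | A χ ∧ B χ} * Fintype.card (V → Q) = #{χ | A χ} * #{χ | B χ} := by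
  rw [← Finset.card_univ, ← card_product, ← card_product]
  refine Finset.card_nbij' (fun x => (D.piecewise x.1 x.2, D.piecewise x.2 x.1))
    (fun x => (D.piecewise x.1 x.2, D.piecewise x.2 x.1)) ?_ ?_ ?_ ?_
  · rintro ⟨x, y⟩ h
    simp at h ⊢
    exact ⟨hA x _ (fun y hy => by simp [hy]) h.1, hB x _ (fun y hy => by simp [hy]) h.2⟩
  · rintro ⟨x, y⟩ h
    simp at h ⊢
    exact ⟨hA x _ (fun y hy => by simp [hy]) h.1, hB y _ (fun y hy => by simp [hy]) h.2⟩
  · rintro ⟨x, y⟩ h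
    ext z <;> by_cases hz : z ∈ D <;> simp [hz]
  · rintro ⟨x, y⟩ h
    ext z <;> by_cases hz : z ∈ D <;> simp [hz]

open Classical in
lemma lll {V Q : Type} [Fintype V] [Fintype Q] [Nonempty Q] (E : V → (V → Q) → Prop)
    (D : V → Finset V) (K : ℝ) (hK : 1 ≤ K)
    (hE : ∀ v, ∀ χ χ' : V → Q, (∀ y ∈ D v, χ y = χ' y) → (E v χ → E v χ'))
    (hΓ : ∀ v, (#{w | ¬ Disjoint (D v) (D w)} : ℝ) ≤ K)
    (hP : ∀ v, (#{χ | E v χ} : ℝ) * (4 * K) ≤ Fintype.card (V → Q)) :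
    ∃ χ, ∀ v, ¬ E v χ := by
  set g : Finset V → ℝ := fun S => #{χ : V → Q | ∀ w ∈ S, ¬ E w χ} with hg
  have hΩ : (0 : ℝ) < Fintype.card (V → Q) := by exact_mod_cast Fintype.card_pos
  have hg0 : ∀ S, 0 ≤ g S := fun S => by simp [hg]
  have main : ∀ n : ℕ, ∀ S : Finset V, #S = n → ∀ v,
      (#{χ : V → Q | E v χ ∧ ∀ w ∈ S, ¬ E w χ} : ℝ) * (2 * K) ≤ g S := by
    intro n
    induction n using Nat.strong_induction_on with
    | _ n ih =>
      intro S hS v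
      set S1 := S.filter (fun w => ¬ Disjoint (D v) (D w)) with hS1
      set S2 := S.filter (fun w => Disjoint (D v) (D w)) with hS2
      have hle : (#{χ : V → Q | E v χ ∧ ∀ w ∈ S, ¬ E w χ} : ℝ)
          ≤ #{χ : V → Q | E v χ ∧ ∀ w ∈ S2, ¬ E w χ} := by
        norm_cast
        apply card_le_card
        intro χ
        simp only [mem_filter, mem_univ, true_and, hS2]
        rintro ⟨h1, h2⟩
        exact ⟨h1, fun w hw => h2 w hw.1⟩
      have hind : (#{χ : V → Q | E v χ ∧ ∀ w ∈ S2, ¬ E w χ} : ℝ) * Fintype.card (V → Q)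
          = #{χ | E v χ} * g S2 := by
        have := indep (E v) (fun χ => ∀ w ∈ S2, ¬ E w χ) (D v) (hE v) (by
          intro χ χ' h h1 w hw h2
          refine h1 w hw (hE w χ' χ ?_ h2)
          intro y hy
          refine (h y ?_).symm
          intro hy'
          exact Finset.disjoint_left.1 (mem_filter.1 hw).2 hy' hy)
        simp only [hg]
        rw [← Nat.cast_mul, ← Nat.cast_mul, Nat.cast_inj]
        convert this
      have hA : (#{χ : V → Q | E v χ ∧ ∀ w ∈ S2, ¬ E w χ} : ℝ) * (4 * K) ≤ g S2 := by
        have h1 := mul_le_mul_of_nonneg_right (hP v) (hg0 S2)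
        have : (#{χ : V → Q | E v χ ∧ ∀ w ∈ S2, ¬ E w χ} : ℝ) * (4 * K) * Fintype.card (V → Q)
            ≤ g S2 * Fintype.card (V → Q) := by
          calc _ = (#{χ : V → Q | E v χ ∧ ∀ w ∈ S2, ¬ E w χ} : ℝ) * Fintype.card (V → Q) * (4 * K) := by ring
            _ = #{χ | E v χ} * g S2 * (4 * K) := by rw [hind]
            _ = #{χ | E v χ} * (4 * K) * g S2 := by ring
            _ ≤ _ := h1
            _ = _ := by ring
        exact le_of_mul_le_mul_right this hΩ
      have hB : g S2 ≤ 2 * g S := by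
        rcases S1.eq_empty_or_nonempty with h0 | h0
        · have : S2 = S := by
            rw [hS2, filter_eq_self]
            intro w hw
            by_contra hc
            have : w ∈ S1 := mem_filter.2 ⟨hw, hc⟩
            simp [h0] at this
          rw [this]; linarith [hg0 S]
        · have hlt : #S2 < n := by
            rw [← hS]
            apply card_lt_card
            rw [hS2, filter_ssubset]
            obtain ⟨w, hw⟩ := h0
            exact ⟨w, (mem_filter.1 hw).1, (mem_filter.1 hw).2⟩
          have hsub : g S2 ≤ g S + ∑ w ∈ S1, (#{χ : V → Q | E w χ ∧ ∀ w ∈ S2, ¬ E w χ} : ℝ) := by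
            simp only [hg]
            norm_cast
            refine le_trans (card_le_card (t := ({χ : V → Q | ∀ w ∈ S, ¬ E w χ} : Finset _) ∪
              S1.biUnion (fun w => {χ : V → Q | E w χ ∧ ∀ w ∈ S2, ¬ E w χ})) ?_) ?_
            · intro χ
              simp only [mem_filter, mem_univ, true_and, mem_union, mem_biUnion]
              intro h
              by_cases hc : ∀ w ∈ S, ¬ E w χ
              · exact Or.inl hc
              · push Not at hc
                obtain ⟨w, hw, hw2⟩ := hc
                refine Or.inr ⟨w, ?_, hw2, h⟩
                rw [hS1, mem_filter]
                refine ⟨hw, fun hd => h w ?_ hw2⟩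
                rw [hS2, mem_filter]
                exact ⟨hw, hd⟩
            · exact le_trans (card_union_le _ _) (Nat.add_le_add_left card_biUnion_le _)
          have hS1K : (#S1 : ℝ) ≤ K := by
            refine le_trans ?_ (hΓ v)
            norm_cast
            apply card_le_card
            intro w
            simp [hS1]
          have h3 : ∑ w ∈ S1, (#{χ : V → Q | E w χ ∧ ∀ w ∈ S2, ¬ E w χ} : ℝ) * (2 * K)
              ≤ ∑ w ∈ S1, g S2 := sum_le_sum fun w _ => ih _ hlt S2 rfl w
          rw [← sum_mul, sum_const, nsmul_eq_mul] at h3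
          have h4 : (#S1 : ℝ) * g S2 ≤ K * g S2 := mul_le_mul_of_nonneg_right hS1K (hg0 _)
          have h5 : (∑ w ∈ S1, (#{χ : V → Q | E w χ ∧ ∀ w ∈ S2, ¬ E w χ} : ℝ)) * 2 ≤ g S2 := by
            have : K * ((∑ w ∈ S1, (#{χ : V → Q | E w χ ∧ ∀ w ∈ S2, ¬ E w χ} : ℝ)) * 2) ≤ K * g S2 := by
              linarith
            exact le_of_mul_le_mul_left this (by linarith)
          linarith
      have h6 := mul_le_mul_of_nonneg_right hle (by linarith : 0 ≤ 4 * K)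
      linarith
  have pos : ∀ S : Finset V, 0 < g S := by
    intro S
    induction S using Finset.induction_on with
    | empty => simp only [hg]; simpa using hΩ
    | insert v S hv ih =>
      have h1 := main _ S rfl v
      have h2 : g S ≤ g (insert v S) + #{χ : V → Q | E v χ ∧ ∀ w ∈ S, ¬ E w χ} := by
        simp only [hg]
        norm_cast
        refine le_trans (card_le_card ?_) (card_union_le _ _)
        intro χ
        simp only [mem_filter, mem_univ, true_and, mem_union, mem_insert, forall_eq_or_imp]
        tauto
      have h3 : (#{χ : V → Q | E v χ ∧ ∀ w ∈ S, ¬ E w χ} : ℝ) * 2 ≤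
          (#{χ : V → Q | E v χ ∧ ∀ w ∈ S, ¬ E w χ} : ℝ) * (2 * K) :=
        mul_le_mul_of_nonneg_left (by linarith) (by positivity)
      linarith
  have := pos univ
  simp only [hg, Nat.cast_pos, card_pos] at this
  obtain ⟨χ, hχ⟩ := this
  exact ⟨χ, fun v => (mem_filter.1 hχ).2 v (mem_univ v)⟩

end SB
namespace SB
open Finset Function

lemma quad_core {K : Type*} [Field K] (y z : Fin 3 → K) (hy : Injective y)
    (e f : K) (he : e ≠ 0) (κ κ' : K)
    (h1 : ∀ j, y j * f + z j * e = κ) (h2 : ∀ j, y j * z j = κ') (hf : f ≠ 0) : False := by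
  have h01 : y 0 - y 1 ≠ 0 := sub_ne_zero.2 fun h => by simpa using hy h
  have h02 : y 0 - y 2 ≠ 0 := sub_ne_zero.2 fun h => by simpa using hy h
  have h12 : y 1 - y 2 ≠ 0 := sub_ne_zero.2 fun h => by simpa using hy h
  have a1 : (y 0 - y 1) * (κ - f * (y 0 + y 1)) = 0 := by
    linear_combination e * h2 0 - e * h2 1 - y 0 * h1 0 + y 1 * h1 1
  have a2 : (y 0 - y 2) * (κ - f * (y 0 + y 2)) = 0 := by
    linear_combination e * h2 0 - e * h2 2 - y 0 * h1 0 + y 2 * h1 2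
  have b1 := (mul_eq_zero.1 a1).resolve_left h01
  have b2 := (mul_eq_zero.1 a2).resolve_left h02
  have : f * (y 1 - y 2) = 0 := by linear_combination b2 - b1
  exact (mul_ne_zero hf h12) this

lemma norm_k33 {K : Type*} [Field K] (σ : K →+* K) (A B a b : Fin 3 → K)
    (hAi : Injective (fun i => (A i, a i))) (hBi : Injective (fun i => (B i, b i)))
    (ha : ∀ i, a i ≠ 0) (hb : ∀ i, b i ≠ 0)
    (h : ∀ i j, (A i + B j) * σ (A i + B j) = a i * b j) : False := by
  have hA : Injective A := by
    intro i i' hii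
    apply hAi
    have h1 := h i 0
    have h2 := h i' 0
    rw [hii, h2] at h1
    have := mul_right_cancel₀ (hb 0) h1
    simp [hii, this]
  have hB : Injective B := by
    intro i i' hii
    apply hBi
    have h1 := h 0 i
    have h2 := h 0 i'
    rw [hii, h2] at h1
    have := mul_left_cancel₀ (ha 0) h1
    simp [hii, this]
  have hX : ∀ j, A 2 + B j ≠ 0 := by
    intro j hj
    have := h 2 j
    rw [hj, zero_mul] at this
    exact mul_ne_zero (ha 2) (hb j) this.symm
  have hσ : ∀ x, x ≠ 0 → σ x ≠ 0 := fun x hx => (map_ne_zero σ).2 hx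
  have hE0 : A 0 - A 2 ≠ 0 := sub_ne_zero.2 fun h => by simpa using hA h
  have hE1 : A 1 - A 2 ≠ 0 := sub_ne_zero.2 fun h => by simpa using hA h
  have hE01 : A 1 - A 0 ≠ 0 := sub_ne_zero.2 fun h => by simpa using hA h
  have key : ∀ i, A i - A 2 ≠ 0 → ∀ j, ((A 2 + B j)⁻¹ + (A i - A 2)⁻¹) * σ ((A 2 + B j)⁻¹ + (A i - A 2)⁻¹)
      = a i / a 2 / ((A i - A 2) * σ (A i - A 2)) := by
    intro i hi j
    have e1 : (A 2 + B j)⁻¹ + (A i - A 2)⁻¹ = (A i + B j) / ((A 2 + B j) * (A i - A 2)) := by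
      have := hX j
      field_simp
      ring
    rw [e1, map_div₀, div_mul_div_comm, h i j, map_mul]
    have e2 : (A 2 + B j) * (A i - A 2) * (σ (A 2 + B j) * σ (A i - A 2))
        = (a 2 * b j) * ((A i - A 2) * σ (A i - A 2)) := by rw [← h 2 j]; ring
    rw [e2]
    have := ha 2
    have := hb j
    have := hσ _ hi
    field_simp
  have hd : (A 0 - A 2)⁻¹ - (A 1 - A 2)⁻¹ ≠ 0 := by
    intro h0
    have h1 := inv_injective (sub_eq_zero.1 h0)
    exact hE01 (by linear_combination -h1)
  refine quad_core (fun j => (A 2 + B j)⁻¹ + (A 0 - A 2)⁻¹)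
    (fun j => σ ((A 2 + B j)⁻¹ + (A 0 - A 2)⁻¹)) ?_ ((A 0 - A 2)⁻¹ - (A 1 - A 2)⁻¹)
    (σ ((A 0 - A 2)⁻¹ - (A 1 - A 2)⁻¹)) hd
    (a 0 / a 2 / ((A 0 - A 2) * σ (A 0 - A 2)) - a 1 / a 2 / ((A 1 - A 2) * σ (A 1 - A 2))
      + ((A 0 - A 2)⁻¹ - (A 1 - A 2)⁻¹) * σ ((A 0 - A 2)⁻¹ - (A 1 - A 2)⁻¹))
    (a 0 / a 2 / ((A 0 - A 2) * σ (A 0 - A 2))) ?_ (key 0 hE0) (hσ _ hd)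
  · intro j j' hjj
    have h1 : (A 2 + B j)⁻¹ = (A 2 + B j')⁻¹ := add_right_cancel hjj
    exact hB (add_left_cancel (inv_injective h1))
  · intro j
    rw [← key 0 hE0 j, ← key 1 hE1 j]
    simp only [map_sub, map_add]
    ring

open Classical in
lemma normgraph (p : ℕ) [hp : Fact p.Prime] :
    ∃ (Q1 Q2 : Type) (_ : Fintype Q1) (_ : Fintype Q2) (R : Q1 ⊕ Q2 → Q1 ⊕ Q2 → Prop),
      (∀ x y, R x y → R y x) ∧
      (∀ f g : Fin 3 → Q1 ⊕ Q2, Injective f → Injective g → ¬ ∀ i j, R (f i) (g j)) ∧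
      Fintype.card Q1 = (p ^ 2 / 2) * (p - 1) ∧ (p ^ 2 / 2) * (p - 1) ≤ Fintype.card Q2 ∧
      ∀ k, p ^ 2 / 2 - 1 ≤ #{a : Q1 | R k (Sum.inl a)} ∧ #{a : Q1 | R k (Sum.inl a)} ≤ p ^ 2 / 2 := by
  let K := GaloisField p 2
  have : Finite K := inferInstanceAs (Finite (GaloisField p 2))
  let _ : Fintype K := Fintype.ofFinite K
  have hK : Fintype.card K = p ^ 2 := by
    rw [Fintype.card_eq_nat_card]; exact GaloisField.card p 2 (by norm_num)
  have hpp := hp.out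
  obtain ⟨𝒜, -, h𝒜⟩ := Finset.exists_subset_card_eq (s := (univ : Finset K)) (n := p ^ 2 / 2)
    (by rw [card_univ, hK]; exact Nat.div_le_self _ _)
  have hN : ∀ x : K, algebraMap (ZMod p) K (Algebra.norm (ZMod p) x) = x * frobenius K p x := by
    intro x
    rw [FiniteField.algebraMap_norm_eq_pow, ← Fintype.card_eq_nat_card, hK, Nat.card_zmod,
      frobenius_def]
    have : (p ^ 2 - 1) / (p - 1) = p + 1 := by
      apply Nat.div_eq_of_eq_mul_left (Nat.sub_pos_of_lt hpp.one_lt)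
      have := Nat.sq_sub_sq p 1
      simpa using this
    rw [this, pow_succ, mul_comm]
  let R0 : K × (ZMod p)ˣ → K × (ZMod p)ˣ → Prop :=
    fun x y => Algebra.norm (ZMod p) (x.1 + y.1) = (x.2 : ZMod p) * (y.2 : ZMod p)
  let Q1 := {x : K × (ZMod p)ˣ // x.1 ∈ 𝒜}
  let Q2 := {x : K × (ZMod p)ˣ // x.1 ∉ 𝒜}
  let em : Q1 ⊕ Q2 → K × (ZMod p)ˣ := Sum.elim Subtype.val Subtype.val
  have hem : Injective em := by
    rintro (⟨x, hx⟩ | ⟨x, hx⟩) (⟨y, hy⟩ | ⟨y, hy⟩) h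
    · have h : x = y := h
      subst h; rfl
    · simp only [em, Sum.elim_inl, Sum.elim_inr] at h; exact absurd (h ▸ hx) hy
    · simp only [em, Sum.elim_inl, Sum.elim_inr] at h; exact absurd (h ▸ hy) hx
    · have h : x = y := h
      subst h; rfl
  have hU : Fintype.card (ZMod p)ˣ = p - 1 := ZMod.card_units p
  have c1 : Fintype.card Q1 = (p ^ 2 / 2) * (p - 1) := by
    rw [← h𝒜, ← hU, ← Finset.card_univ (α := (ZMod p)ˣ), ← card_product, Fintype.card_subtype]
    congr 1
    ext ⟨x, y⟩
    simp
  have c12 : Fintype.card Q1 + Fintype.card Q2 = p ^ 2 * (p - 1) := by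
    rw [← hK, ← hU, ← Fintype.card_prod]
    have := Fintype.card_subtype_compl (fun x : K × (ZMod p)ˣ => x.1 ∈ 𝒜)
    have h2 := Fintype.card_subtype_le (fun x : K × (ZMod p)ˣ => x.1 ∈ 𝒜)
    have h3 : Fintype.card Q2 = Fintype.card (K × (ZMod p)ˣ) - Fintype.card Q1 := this
    have h4 : Fintype.card Q1 ≤ Fintype.card (K × (ZMod p)ˣ) := h2
    omega
  refine ⟨Q1, Q2, inferInstance, inferInstance, fun x y => R0 (em x) (em y), ?_, ?_, c1, ?_, ?_⟩
  · intro x y h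
    simp only [R0] at h ⊢
    rw [add_comm, h, mul_comm]
  · intro f g hf hg h
    refine norm_k33 (frobenius K p) (fun i => (em (f i)).1) (fun i => (em (g i)).1)
      (fun i => algebraMap (ZMod p) K (em (f i)).2) (fun i => algebraMap (ZMod p) K (em (g i)).2)
      ?_ ?_ ?_ ?_ ?_
    · intro i i' h
      apply hf; apply hem
      simp only [Prod.mk.injEq] at h
      exact Prod.ext h.1 (Units.ext ((algebraMap (ZMod p) K).injective h.2))
    · intro i i' h
      apply hg; apply hem
      simp only [Prod.mk.injEq] at h
      exact Prod.ext h.1 (Units.ext ((algebraMap (ZMod p) K).injective h.2))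
    · intro i; exact (map_ne_zero _).2 (Units.ne_zero _)
    · intro i; exact (map_ne_zero _).2 (Units.ne_zero _)
    · intro i j
      rw [← hN, ← map_mul]
      exact congrArg _ (h i j)
  · have : p ^ 2 / 2 * (p - 1) * 2 ≤ p ^ 2 * (p - 1) := by
      calc p ^ 2 / 2 * (p - 1) * 2 = (p ^ 2 / 2 * 2) * (p - 1) := by ring
        _ ≤ _ := Nat.mul_le_mul_right _ (Nat.div_mul_le_self _ _)
    omega
  · intro k
    have him : 𝒜.erase (-(em k).1) ⊆
        ({a : Q1 | R0 (em k) (em (Sum.inl a))} : Finset Q1).image (fun a => a.1.1) := by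
      intro A hA
      rw [mem_erase] at hA
      have hne : Algebra.norm (ZMod p) ((em k).1 + A) ≠ 0 := by
        intro h0
        have := hN ((em k).1 + A)
        rw [h0, map_zero] at this
        have h2 := this.symm
        rw [mul_eq_zero, map_eq_zero, or_self] at h2
        exact hA.1 (eq_neg_of_add_eq_zero_right h2)
      rw [mem_image]
      refine ⟨⟨(A, (em k).2⁻¹ * Units.mk0 _ hne), hA.2⟩, ?_, rfl⟩
      rw [mem_filter]
      refine ⟨mem_univ _, ?_⟩
      change Algebra.norm (ZMod p) ((em k).1 + A) = ((em k).2 : ZMod p) *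
        (((em k).2⁻¹ * Units.mk0 _ hne : (ZMod p)ˣ) : ZMod p)
      rw [← Units.val_mul, mul_inv_cancel_left, Units.val_mk0]
    have hinj : Set.InjOn (fun a : Q1 => a.1.1)
        (({a : Q1 | R0 (em k) (em (Sum.inl a))} : Finset Q1) : Set Q1) := by
      rintro ⟨⟨A, a⟩, hA⟩ h1 ⟨⟨B, b⟩, hB⟩ h2 h
      have h1 := (mem_filter.1 (mem_coe.1 h1)).2
      have h2 := (mem_filter.1 (mem_coe.1 h2)).2
      have h : A = B := h
      subst h
      have : a = b := by
        have h3 : ((em k).2 : ZMod p) * (a : ZMod p) = ((em k).2 : ZMod p) * (b : ZMod p) := h1.symm.trans h2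
        exact Units.ext (mul_left_cancel₀ (Units.ne_zero _) h3)
      subst this
      rfl
    have hc := Finset.card_image_of_injOn hinj
    suffices hgoal : p ^ 2 / 2 - 1 ≤ #{a : Q1 | R0 (em k) (em (Sum.inl a))} ∧
        #{a : Q1 | R0 (em k) (em (Sum.inl a))} ≤ p ^ 2 / 2 by
      convert hgoal
    constructor
    · rw [← hc, ← h𝒜]
      exact le_trans pred_card_le_card_erase (card_le_card him)
    · rw [← hc, ← h𝒜]
      apply card_le_card
      intro A hA
      obtain ⟨a, _, rfl⟩ := mem_image.1 hA
      exact a.2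

end SB
namespace SB
open Finset Function

open Classical in
lemma upper {V Q : Type} [Fintype V] [LinearOrder V] [Fintype Q] [Nonempty Q]
    (T : Finset V) (d m L : ℕ) (hT : #T ≤ d) (M : (V → Q) → Finset Q) (hM : ∀ χ, #(M χ) ≤ m)
    (hinv : ∀ v ∈ T, ∀ χ a, M (update χ v a) = M χ) :
    (#{χ : V → Q | L < #{z ∈ T | χ z ∈ M χ}} : ℝ) ≤
      Fintype.card (V → Q) * ((1 + (m : ℝ) / Fintype.card Q) ^ d / 2 ^ L) := by
  set n : ℝ := (Fintype.card Q : ℝ) with hn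
  have hn0 : 0 < n := by rw [hn]; exact_mod_cast Fintype.card_pos
  set q : ℝ := 1 + (m : ℝ) / n with hq
  have hq1 : 1 ≤ q := by
    have : 0 ≤ (m : ℝ) / n := by positivity
    linarith
  have hq0 : 0 < q := by linarith
  have key := supermart (fun z (χ : V → Q) => (if χ z ∈ M χ then (2 : ℝ) else 1) / q)
    (fun v χ => by positivity) T ?_ ?_
  · have h1 : ∀ χ : V → Q, ∏ z ∈ T, ((if χ z ∈ M χ then (2 : ℝ) else 1) / q)
        = 2 ^ #{z ∈ T | χ z ∈ M χ} / q ^ #T := by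
      intro χ
      rw [prod_div_distrib, prod_const, prod_ite]
      simp
    simp_rw [h1] at key
    have h2 : (#{χ : V → Q | L < #{z ∈ T | χ z ∈ M χ}} : ℝ) * (2 ^ L / q ^ d)
        ≤ ∑ χ : V → Q, 2 ^ #{z ∈ T | χ z ∈ M χ} / q ^ #T := by
      rw [← nsmul_eq_mul, ← sum_const]
      refine le_trans (sum_le_sum (g := fun χ : V → Q => 2 ^ #{z ∈ T | χ z ∈ M χ} / q ^ #T) ?_)
        (sum_le_sum_of_subset_of_nonneg (subset_univ _) fun χ _ _ => by positivity)
      intro χ hχ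
      have := (mem_filter.1 hχ).2
      apply div_le_div₀ (by positivity) _ (by positivity) (pow_le_pow_right₀ hq1 hT)
      exact pow_le_pow_right₀ (by norm_num) this.le
    have h3 := h2.trans key
    rw [← le_div_iff₀ (by positivity)] at h3
    refine h3.trans (le_of_eq ?_)
    field_simp
  · intro z hz v hv hzv χ a
    simp only [hinv v hv, update_of_ne hzv.ne]
  · intro v hv χ
    simp only [hinv v hv, update_self]
    rw [← sum_div, div_le_iff₀ hq0, sum_ite]
    have h4 : (#(M χ) : ℝ) ≤ m := by exact_mod_cast hM χ
    have h5 : (#{x : Q | x ∈ M χ} : ℝ) + #{x : Q | x ∉ M χ} = n := by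
      rw [hn, ← card_univ]
      exact_mod_cast card_filter_add_card_filter_not (s := (univ : Finset Q)) (fun x => x ∈ M χ)
    have h6 : #{x : Q | x ∈ M χ} = #(M χ) := by congr 1; ext; simp
    simp only [sum_const, nsmul_eq_mul, mul_one]
    have : n * q = n + m := by rw [hq]; field_simp
    rw [this]
    rw [h6] at h5 ⊢
    linarith

open Classical in
lemma lower {V Q : Type} [Fintype V] [LinearOrder V] [Fintype Q] [Nonempty Q]
    (T : Finset V) (t r h : ℕ) (hh : h ≤ Fintype.card Q) (S : (V → Q) → Finset V)
    (hS : ∀ χ, S χ ⊆ T) (hr : ∀ χ, r ≤ #(S χ))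
    (hinv : ∀ v ∈ T, ∀ χ a, S (update χ v a) = S χ)
    (P : V → (V → Q) → Prop)
    (hPi : ∀ z ∈ T, ∀ v ∈ T, z < v → ∀ χ a, (P z (update χ v a) ↔ P z χ))
    (hP : ∀ z ∈ T, ∀ χ, h ≤ #{a : Q | P z (update χ z a)}) :
    (#{χ : V → Q | #{z ∈ S χ | P z χ} < t} : ℝ) ≤
      Fintype.card (V → Q) * (2 ^ t * (1 - (h : ℝ) / (2 * Fintype.card Q)) ^ r) := by
  set n : ℝ := (Fintype.card Q : ℝ) with hn
  have hn0 : 0 < n := by rw [hn]; exact_mod_cast Fintype.card_pos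
  have hhn : (h : ℝ) ≤ n := by rw [hn]; exact_mod_cast hh
  set q : ℝ := 1 - (h : ℝ) / (2 * n) with hq
  have hq1 : q ≤ 1 := by
    have : 0 ≤ (h : ℝ) / (2 * n) := by positivity
    linarith
  have hq0 : 0 < q := by
    have : (h : ℝ) / (2 * n) ≤ 1 / 2 := by
      rw [div_le_div_iff₀ (by positivity) (by norm_num)]; linarith
    linarith
  have key := supermart (fun z (χ : V → Q) => if z ∈ S χ then (if P z χ then (1/2 : ℝ) else 1) / q else 1)
    (fun v χ => by positivity) T ?_ ?_
  · have h1 : ∀ χ : V → Q, ∏ z ∈ T, (if z ∈ S χ then (if P z χ then (1/2 : ℝ) else 1) / q else 1)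
        = (1/2) ^ #{z ∈ S χ | P z χ} / q ^ #(S χ) := by
      intro χ
      rw [prod_ite_mem, inter_eq_right.2 (hS χ), prod_div_distrib, prod_const, prod_ite]
      simp
    simp_rw [h1] at key
    have h2 : (#{χ : V → Q | #{z ∈ S χ | P z χ} < t} : ℝ) * ((1/2) ^ t / q ^ r)
        ≤ ∑ χ : V → Q, (1/2) ^ #{z ∈ S χ | P z χ} / q ^ #(S χ) := by
      rw [← nsmul_eq_mul, ← sum_const]
      refine le_trans (sum_le_sum (g := fun χ : V → Q => (1/2) ^ #{z ∈ S χ | P z χ} / q ^ #(S χ)) ?_)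
        (sum_le_sum_of_subset_of_nonneg (subset_univ _) fun χ _ _ => by positivity)
      intro χ hχ
      have := (mem_filter.1 hχ).2
      apply div_le_div₀ (by positivity) _ (by positivity) (pow_le_pow_of_le_one hq0.le hq1 (hr χ))
      exact pow_le_pow_of_le_one (by norm_num) (by norm_num) this.le
    have h3 := h2.trans key
    rw [← le_div_iff₀ (by positivity)] at h3
    refine h3.trans (le_of_eq ?_)
    rw [one_div, inv_pow]
    field_simp
  · intro z hz v hv hzv χ a
    simp only [hinv v hv, hPi z hz v hv hzv]
  · intro v hv χ
    simp only [hinv v hv]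
    by_cases hvS : v ∈ S χ
    · simp only [hvS, if_true]
      rw [← sum_div, div_le_iff₀ hq0, sum_ite]
      have h4 : (h : ℝ) ≤ #{a : Q | P v (update χ v a)} := by exact_mod_cast hP v hv χ
      have h5 : (#{a : Q | P v (update χ v a)} : ℝ) + #{a : Q | ¬ P v (update χ v a)} = n := by
        rw [hn, ← card_univ]
        exact_mod_cast card_filter_add_card_filter_not (s := (univ : Finset Q))
          (fun a => P v (update χ v a))
      simp only [sum_const, nsmul_eq_mul, mul_one]
      have : n * q = n - h / 2 := by rw [hq]; field_simp
      rw [this]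
      linarith
    · simp [hvS]

end SB
namespace SB
open Finset Function

open Classical in
noncomputable def load {V Q : Type} [LinearOrder V] (N : V → Finset V) (χ : V → Q) (v : V) (a : Q) :
    Finset V := {u ∈ N v | ∃ v' ∈ N u, v' < v ∧ χ v' = a}

def win {V Q : Type} [LinearOrder V] (N : V → Finset V) (χ : V → Q) (v u : V) : Prop :=
  ∀ v' ∈ N u, v' < v → χ v' ≠ χ v

def good {V Q : Type} [LinearOrder V] (N : V → Finset V) (d : ℕ) (χ : V → Q) (v : V) : Prop :=
  10 * #(load N χ v (χ v)) ≤ d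

open Classical in
noncomputable def fc {V Q1 Q2 : Type} [LinearOrder V] (N : V → Finset V) (d : ℕ) (ψ : V → Q2)
    (χ : V → Q1) (v : V) : Q1 ⊕ Q2 :=
  if good N d χ v then Sum.inl (χ v) else Sum.inr (ψ v)

open Classical in
def wins {V Q1 Q2 : Type} [LinearOrder V] (N : V → Finset V) (d : ℕ) (ψ : V → Q2)
    (χ : V → Q1) (v u : V) : Prop :=
  if good N d χ v then win N χ v u else win N ψ v u

def hadj {V Q1 Q2 : Type} [LinearOrder V] (N : V → Finset V) (d : ℕ) (ψ : V → Q2)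
    (R : Q1 ⊕ Q2 → Q1 ⊕ Q2 → Prop) (χ : V → Q1) (x z : V) : Prop :=
  z ∈ N x ∧ R (fc N d ψ χ x) (fc N d ψ χ z) ∧ wins N d ψ χ x z ∧ wins N d ψ χ z x

section
variable {V Q1 Q2 : Type} [LinearOrder V] (N : V → Finset V) (d : ℕ) (ψ : V → Q2)
  (R : Q1 ⊕ Q2 → Q1 ⊕ Q2 → Prop)

lemma load_congr {Q : Type} (χ χ' : V → Q) (v : V) (a : Q)
    (h2 : ∀ u ∈ N v, ∀ v' ∈ N u, χ v' = χ' v') : load N χ v a = load N χ' v a := by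
  classical
  unfold load
  apply filter_congr
  intro u hu
  constructor
  · rintro ⟨v', h, h', h''⟩
    exact ⟨v', h, h', by rw [← h2 u hu v' h, h'']⟩
  · rintro ⟨v', h, h', h''⟩
    exact ⟨v', h, h', by rw [h2 u hu v' h, h'']⟩

lemma good_congr (χ χ' : V → Q1) (v : V) (h1 : χ v = χ' v)
    (h2 : ∀ u ∈ N v, ∀ v' ∈ N u, χ v' = χ' v') : good N d χ v ↔ good N d χ' v := by
  unfold good
  rw [h1, load_congr N χ χ' v _ h2]

lemma fc_congr (χ χ' : V → Q1) (v : V) (h1 : χ v = χ' v)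
    (h2 : ∀ u ∈ N v, ∀ v' ∈ N u, χ v' = χ' v') : fc N d ψ χ v = fc N d ψ χ' v := by
  unfold fc
  have h3 := good_congr N d χ χ' v h1 h2
  by_cases g : good N d χ v
  · rw [if_pos g, if_pos (h3.1 g), h1]
  · rw [if_neg g, if_neg (fun h => g (h3.2 h))]

lemma wins_congr (χ χ' : V → Q1) (v : V) (h1 : χ v = χ' v)
    (h2 : ∀ u ∈ N v, ∀ v' ∈ N u, χ v' = χ' v') (u : V) (hu : u ∈ N v) :
    wins N d ψ χ v u ↔ wins N d ψ χ' v u := by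
  unfold wins
  have h3 := good_congr N d χ χ' v h1 h2
  have : win N χ v u ↔ win N χ' v u := by
    unfold win
    rw [← h1]
    exact forall₂_congr fun v' hv' => by rw [h2 u hu v' hv']
  by_cases g : good N d χ v
  · rw [if_pos g, if_pos (h3.1 g), this]
  · rw [if_neg g, if_neg (fun h => g (h3.2 h))]

open Classical in
lemma wins_card (hψ : ∀ v, good N d ψ v) (χ : V → Q1) (v : V) :
    10 * #(N v) ≤ 10 * #{u ∈ N v | wins N d ψ χ v u} + d := by
  have h0 := card_filter_add_card_filter_not (s := N v) (fun u => wins N d ψ χ v u)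
  have h1 : 10 * #{u ∈ N v | ¬ wins N d ψ χ v u} ≤ d := by
    by_cases hg : good N d χ v
    · refine le_trans (Nat.mul_le_mul_left 10 (card_le_card ?_)) hg
      intro u hu
      rw [mem_filter] at hu
      obtain ⟨hu, hw⟩ := hu
      simp only [wins, hg, if_true, win] at hw
      push Not at hw
      unfold load
      rw [mem_filter]
      exact ⟨hu, hw⟩
    · refine le_trans (Nat.mul_le_mul_left 10 (card_le_card ?_)) (hψ v)
      intro u hu
      rw [mem_filter] at hu
      obtain ⟨hu, hw⟩ := hu
      simp only [wins, hg, if_false, win] at hw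
      push Not at hw
      unfold load
      rw [mem_filter]
      exact ⟨hu, hw⟩
  omega

lemma fc_inj (χ : V → Q1) (u v v' : V) (hv : v ∈ N u) (hv' : v' ∈ N u)
    (h1 : wins N d ψ χ v u) (h2 : wins N d ψ χ v' u) (h : fc N d ψ χ v = fc N d ψ χ v') : v = v' := by
  by_contra hne
  wlog hlt : v' < v generalizing v v'
  · exact this v' v hv' hv h2 h1 h.symm (Ne.symm hne) (lt_of_le_of_ne (not_lt.1 hlt) hne)
  unfold fc at h
  unfold wins at h1
  split_ifs at h h1 with g1 g2
  · exact h1 v' hv' hlt (Sum.inl_injective h).symm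
  · exact h1 v' hv' hlt (Sum.inr_injective h).symm

open Classical in
noncomputable def outl {Q : Type} (χ : V → Q) (x z : V) (a : Q) : Finset V :=
  {u ∈ N z | ∃ z' ∈ N u, z' ∉ N x ∧ z' < z ∧ χ z' = a}

open Classical in
noncomputable def Mk [Fintype Q1] (x : V) (χ : V → Q1) : Finset Q1 :=
  {a : Q1 | R (fc N d ψ χ x) (Sum.inl a)}

open Classical in
def succs [Fintype Q1] (L : ℕ) (x z : V) (χ : V → Q1) : Prop :=
  (χ z ∈ Mk N d ψ R x χ ∧ 10 * #(outl N χ x z (χ z)) ≤ d ∧ ∀ z' ∈ N x, z' < z → χ z' ≠ χ z) ∨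
  (∃ u ∈ N z, L < #{z' ∈ N u | z' ∉ N x ∧ χ z' ∈ Mk N d ψ R x χ}) ∨
  L < #{z' ∈ N x | z' < z ∧ χ z' ∈ Mk N d ψ R x χ}

lemma outl_congr {Q : Type} (χ χ' : V → Q) (x z : V) (a : Q)
    (h : ∀ y, y ∉ N x → χ y = χ' y) : outl N χ x z a = outl N χ' x z a := by
  classical
  unfold outl
  apply filter_congr
  intro u hu
  constructor
  · rintro ⟨v', h1, h', h''⟩
    exact ⟨v', h1, h', by rw [← h v' h']; exact h''⟩
  · rintro ⟨v', h1, h', h''⟩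
    exact ⟨v', h1, h', by rw [h v' h']; exact h''⟩

open Classical in
lemma outl_sum {Q : Type} [Fintype Q] (χ : V → Q) (x z : V) (M : Finset Q) (d L : ℕ) (hd : #(N z) ≤ d)
    (hd0 : 0 < d)
    (h : ∀ u ∈ N z, #{z' ∈ N u | z' ∉ N x ∧ χ z' ∈ M} ≤ L) :
    #{a ∈ M | d < 10 * #(outl N χ x z a)} ≤ 10 * L := by
  classical
  have h1 : ∑ a ∈ M, #(outl N χ x z a) ≤ d * L := by
    have : ∀ a ∈ M, #(outl N χ x z a)
        = ∑ u ∈ N z, if ∃ z' ∈ N u, z' ∉ N x ∧ z' < z ∧ χ z' = a then 1 else 0 := by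
      intro a _
      unfold outl
      rw [card_filter]
    rw [sum_congr rfl this, sum_comm]
    calc _ ≤ ∑ u ∈ N z, L := by
          apply sum_le_sum
          intro u hu
          rw [← card_filter]
          refine le_trans (le_trans (card_le_card (t := ({z' ∈ N u | z' ∉ N x ∧ χ z' ∈ M}).image χ) ?_)
            card_image_le) (h u hu)
          intro a ha
          rw [mem_filter] at ha
          obtain ⟨ha, z', h1, h2, h3, h4⟩ := ha
          rw [mem_image]
          exact ⟨z', mem_filter.2 ⟨h1, h2, h4 ▸ ha⟩, h4⟩
      _ = #(N z) * L := by simp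
      _ ≤ d * L := Nat.mul_le_mul_right _ hd
  have h2 : #{a ∈ M | d < 10 * #(outl N χ x z a)} * d ≤ 10 * (d * L) := by
    calc _ = ∑ a ∈ M with d < 10 * #(outl N χ x z a), d := by simp
      _ ≤ ∑ a ∈ M with d < 10 * #(outl N χ x z a), 10 * #(outl N χ x z a) :=
          sum_le_sum fun a ha => (mem_filter.1 ha).2.le
      _ ≤ ∑ a ∈ M, 10 * #(outl N χ x z a) := sum_le_sum_of_subset (filter_subset _ _)
      _ ≤ _ := by rw [← mul_sum]; exact Nat.mul_le_mul_left _ h1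
  have h3 : #{a ∈ M | d < 10 * #(outl N χ x z a)} * d ≤ (10 * L) * d := by
    calc _ ≤ _ := h2
      _ = _ := by ring
  convert Nat.le_of_mul_le_mul_right h3 hd0

lemma upd_same (side : V → Bool) (hside : ∀ u v, u ∈ N v → side u ≠ side v) (x z : V) (hz : side z ≠ side x) (χ : V → Q1) (a : Q1) :
    update χ z a x = χ x ∧ ∀ u ∈ N x, ∀ v' ∈ N u, update χ z a v' = χ v' := by
  constructor
  · rw [update_of_ne]; rintro rfl; exact hz rfl
  · intro u hu v' hv'
    rw [update_of_ne]
    rintro rfl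
    have h1 := hside _ _ hu
    have h2 := hside _ _ hv'
    cases h : side u <;> cases h' : side v' <;> cases h'' : side x <;> simp_all

end
end SB
namespace SB
open Finset Function

section
variable {V Q1 Q2 : Type} [LinearOrder V] (N : V → Finset V) (d : ℕ) (ψ : V → Q2)
  (R : Q1 ⊕ Q2 → Q1 ⊕ Q2 → Prop)

lemma Mk_upd [Fintype Q1] (side : V → Bool) (hside : ∀ u v, u ∈ N v → side u ≠ side v) (x z : V)
    (hz : side z ≠ side x) (χ : V → Q1) (a : Q1) :
    Mk N d ψ R x (update χ z a) = Mk N d ψ R x χ := by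
  obtain ⟨h1, h2⟩ := upd_same N side hside x z hz χ a
  unfold Mk
  rw [fc_congr N d ψ _ χ x h1 h2]

lemma succs_upd [Fintype Q1] (side : V → Bool) (hside : ∀ u v, u ∈ N v → side u ≠ side v) (L : ℕ)
    (x z v : V) (hv : v ∈ N x) (hzv : z < v) (χ : V → Q1) (a : Q1) :
    succs N d ψ R L x z (update χ v a) ↔ succs N d ψ R L x z χ := by
  classical
  have hM := Mk_upd N d ψ R side hside x v (hside _ _ hv) χ a
  have ho : ∀ b, outl N (update χ v a) x z b = outl N χ x z b := fun b =>
    outl_congr N _ _ x z b fun y hy => update_of_ne (by rintro rfl; exact hy hv) _ _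
  have e1 : ∀ y, y < z → update χ v a y = χ y := fun y hy => update_of_ne (hy.trans hzv).ne _ _
  have e2 : ∀ y, y ∉ N x → update χ v a y = χ y := fun y hy =>
    update_of_ne (by rintro rfl; exact hy hv) _ _
  unfold succs
  rw [hM, ho, update_of_ne hzv.ne]
  have f1 : (∀ z' ∈ N x, z' < z → update χ v a z' ≠ χ z) ↔ (∀ z' ∈ N x, z' < z → χ z' ≠ χ z) :=
    forall₂_congr fun y _ => forall_congr' fun hy => by rw [e1 y hy]
  have f2 : ∀ u, ({z' ∈ N u | z' ∉ N x ∧ update χ v a z' ∈ Mk N d ψ R x χ} : Finset V)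
      = {z' ∈ N u | z' ∉ N x ∧ χ z' ∈ Mk N d ψ R x χ} := fun u =>
    filter_congr fun y _ => and_congr_right fun hy => by rw [e2 y hy]
  have f3 : ({z' ∈ N x | z' < z ∧ update χ v a z' ∈ Mk N d ψ R x χ} : Finset V)
      = {z' ∈ N x | z' < z ∧ χ z' ∈ Mk N d ψ R x χ} :=
    filter_congr fun y _ => and_congr_right fun hy => by rw [e1 y hy]
  rw [f1, f3]
  simp_rw [f2]

open Classical in
lemma succs_count [Fintype Q1] (side : V → Bool) (hside : ∀ u v, u ∈ N v → side u ≠ side v)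
    (L s : ℕ) (hd0 : 0 < d) (hd : ∀ v, #(N v) ≤ d) (x z : V) (hv : z ∈ N x) (χ : V → Q1)
    (hs : s ≤ #(Mk N d ψ R x χ)) :
    s - 11 * L ≤ #{a : Q1 | succs N d ψ R L x z (update χ z a)} := by
  have hM : ∀ a, Mk N d ψ R x (update χ z a) = Mk N d ψ R x χ :=
    Mk_upd N d ψ R side hside x z (hside _ _ hv) χ
  have ho : ∀ a b, outl N (update χ z a) x z b = outl N χ x z b := fun a b =>
    outl_congr N _ _ x z b fun y hy => update_of_ne (by rintro rfl; exact hy hv) _ _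
  have e1 : ∀ a y, y < z → update χ z a y = χ y := fun a y hy => update_of_ne hy.ne _ _
  have e2 : ∀ a y, y ∉ N x → update χ z a y = χ y := fun a y hy =>
    update_of_ne (by rintro rfl; exact hy hv) _ _
  have f1 : ∀ a, (∀ z' ∈ N x, z' < z → update χ z a z' ≠ a) ↔ (∀ z' ∈ N x, z' < z → χ z' ≠ a) :=
    fun a => forall₂_congr fun y _ => forall_congr' fun hy => by rw [e1 a y hy]
  have f2 : ∀ a u, ({z' ∈ N u | z' ∉ N x ∧ update χ z a z' ∈ Mk N d ψ R x χ} : Finset V)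
      = {z' ∈ N u | z' ∉ N x ∧ χ z' ∈ Mk N d ψ R x χ} := fun a u =>
    filter_congr fun y _ => and_congr_right fun hy => by rw [e2 a y hy]
  have f3 : ∀ a, ({z' ∈ N x | z' < z ∧ update χ z a z' ∈ Mk N d ψ R x χ} : Finset V)
      = {z' ∈ N x | z' < z ∧ χ z' ∈ Mk N d ψ R x χ} := fun a =>
    filter_congr fun y _ => and_congr_right fun hy => by rw [e1 a y hy]
  have hsc : ∀ a, succs N d ψ R L x z (update χ z a) ↔
      ((a ∈ Mk N d ψ R x χ ∧ 10 * #(outl N χ x z a) ≤ d ∧ ∀ z' ∈ N x, z' < z → χ z' ≠ a) ∨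
      (∃ u ∈ N z, L < #{z' ∈ N u | z' ∉ N x ∧ χ z' ∈ Mk N d ψ R x χ}) ∨
      L < #{z' ∈ N x | z' < z ∧ χ z' ∈ Mk N d ψ R x χ}) := by
    intro a
    unfold succs
    rw [hM, ho, update_self, f1, f3]
    simp_rw [f2]
  set M := Mk N d ψ R x χ with hMd
  by_cases hc : (∃ u ∈ N z, L < #{z' ∈ N u | z' ∉ N x ∧ χ z' ∈ M}) ∨
      L < #{z' ∈ N x | z' < z ∧ χ z' ∈ M}
  · have : ({a : Q1 | succs N d ψ R L x z (update χ z a)} : Finset Q1) = univ := by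
      apply filter_true_of_mem
      intro a _
      exact (hsc a).2 (Or.inr hc)
    rw [this]
    exact (Nat.sub_le _ _).trans (hs.trans (card_le_card (subset_univ _)))
  · push Not at hc
    have b1 := outl_sum N χ x z M d L (hd z) hd0 hc.1
    have b2 : #{a ∈ M | ∃ z' ∈ N x, z' < z ∧ χ z' = a} ≤ L := by
      refine le_trans (le_trans (card_le_card (t := ({z' ∈ N x | z' < z ∧ χ z' ∈ M}).image χ) ?_)
            card_image_le) hc.2
      intro a ha
      rw [mem_filter] at ha
      obtain ⟨ha, z', h1, h3, h4⟩ := ha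
      rw [mem_image]
      exact ⟨z', mem_filter.2 ⟨h1, h3, h4 ▸ ha⟩, h4⟩
    have hsub : M ⊆ ({a : Q1 | succs N d ψ R L x z (update χ z a)} : Finset Q1) ∪
        (({a ∈ M | d < 10 * #(outl N χ x z a)} : Finset Q1) ∪
          ({a ∈ M | ∃ z' ∈ N x, z' < z ∧ χ z' = a} : Finset Q1)) := by
      intro a ha
      rw [mem_union, mem_union, mem_filter, mem_filter, mem_filter]
      by_cases g1 : d < 10 * #(outl N χ x z a)
      · exact Or.inr (Or.inl ⟨ha, g1⟩)
      by_cases g2 : ∃ z' ∈ N x, z' < z ∧ χ z' = a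
      · exact Or.inr (Or.inr ⟨ha, g2⟩)
      refine Or.inl ⟨mem_univ _, (hsc a).2 (Or.inl ⟨ha, not_lt.1 g1, ?_⟩)⟩
      push Not at g2
      exact g2
    have h1 := card_le_card hsub
    have h2 := card_union_le ({a : Q1 | succs N d ψ R L x z (update χ z a)} : Finset Q1)
        (({a ∈ M | d < 10 * #(outl N χ x z a)} : Finset Q1) ∪
          ({a ∈ M | ∃ z' ∈ N x, z' < z ∧ χ z' = a} : Finset Q1))
    have h3 := card_union_le ({a ∈ M | d < 10 * #(outl N χ x z a)} : Finset Q1)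
          ({a ∈ M | ∃ z' ∈ N x, z' < z ∧ χ z' = a} : Finset Q1)
    omega

lemma succs_hadj [Fintype Q1] (x z : V)
    (hv : z ∈ N x) (χ : V → Q1) (hw : wins N d ψ χ x z)
    (hs : χ z ∈ Mk N d ψ R x χ ∧ 10 * #(outl N χ x z (χ z)) ≤ d ∧ ∀ z' ∈ N x, z' < z → χ z' ≠ χ z) :
    hadj N d ψ R χ x z := by
  classical
  obtain ⟨h1, h2, h3⟩ := hs
  have hg : good N d χ z := by
    refine le_trans (Nat.mul_le_mul_left 10 (card_le_card ?_)) h2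
    intro u hu
    unfold load at hu
    unfold outl
    rw [mem_filter] at hu ⊢
    obtain ⟨hu, z', a1, a2, a3⟩ := hu
    exact ⟨hu, z', a1, fun h => h3 z' h a2 a3, a2, a3⟩
  refine ⟨hv, ?_, hw, ?_⟩
  · have : fc N d ψ χ z = Sum.inl (χ z) := by unfold fc; rw [if_pos hg]
    rw [this]
    exact (mem_filter.1 h1).2
  · unfold wins
    rw [if_pos hg]
    exact h3

open Classical in
lemma prob [Fintype V] [Fintype Q1] [Nonempty Q1] (side : V → Bool)
    (hside : ∀ u v, u ∈ N v → side u ≠ side v)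
    (hNs : ∀ u v, u ∈ N v → v ∈ N u) (hψ : ∀ v, good N d ψ v)
    (hd0 : 0 < d) (hd : ∀ v, #(N v) ≤ d) (hd2 : ∀ v, d ≤ 2 * #(N v))
    (s m L t r : ℕ) (hr : 10 * r ≤ 4 * d)
    (hRs : ∀ k, s ≤ #{a : Q1 | R k (Sum.inl a)}) (hRm : ∀ k, #{a : Q1 | R k (Sum.inl a)} ≤ m)
    (x : V) :
    (#{χ : V → Q1 | #{z ∈ N x | hadj N d ψ R χ x z} < t} : ℝ) ≤
      Fintype.card (V → Q1) * (2 ^ t * (1 - ((s - 11 * L : ℕ) : ℝ) / (2 * Fintype.card Q1)) ^ r +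
        (d : ℝ) ^ 2 * ((1 + (m : ℝ) / Fintype.card Q1) ^ d / 2 ^ L)) := by
  set U : Finset V := (N x).biUnion N with hU
  have hUc : #U ≤ d ^ 2 := by
    rw [hU]
    refine (card_biUnion_le_card_mul _ _ d (fun v _ => hd v)).trans ?_
    rw [pow_two]
    exact Nat.mul_le_mul_right _ (hd x)
  have hMs : ∀ χ, s ≤ #(Mk N d ψ R x χ) := fun χ => hRs _
  have hMm : ∀ χ, #(Mk N d ψ R x χ) ≤ m := fun χ => hRm _
  have lo := lower (Q := Q1) (N x) t r (s - 11 * L)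
    (by
      obtain ⟨a⟩ := (inferInstance : Nonempty Q1)
      exact (Nat.sub_le _ _).trans ((hMs (fun _ => a)).trans (card_le_card (subset_univ _))))
    (fun χ => {z ∈ N x | wins N d ψ χ x z}) (fun χ => filter_subset _ _)
    (by
      intro χ
      have h1 := wins_card N d ψ hψ χ x
      have h2 := hd2 x
      omega)
    (by
      intro v hv χ a
      obtain ⟨h1, h2⟩ := upd_same N side hside x v (hside _ _ hv) χ a
      exact filter_congr fun z hz => wins_congr N d ψ _ χ x h1 h2 z hz)
    (succs N d ψ R L x)
    (fun z _ v hv hzv χ a => succs_upd N d ψ R side hside L x z v hv hzv χ a)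
    (fun z hz χ => succs_count N d ψ R side hside L s hd0 hd x z hz χ (hMs χ))
  have up : ∀ u ∈ U, _ := fun u hu => upper (Q := Q1) (N u) d m L (hd u) (Mk N d ψ R x) hMm
    (by
      intro v hv χ a
      apply Mk_upd N d ψ R side hside
      rw [hU, mem_biUnion] at hu
      obtain ⟨z, hz, huz⟩ := hu
      have h1 := hside _ _ hz
      have h2 := hside _ _ huz
      have h3 := hside _ _ hv
      cases h : side u <;> cases h' : side v <;> cases h'' : side x <;> cases h''' : side z <;> simp_all)
  have hsub : ({χ : V → Q1 | #{z ∈ N x | hadj N d ψ R χ x z} < t} : Finset (V → Q1)) ⊆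
      ({χ : V → Q1 | #{z ∈ ({z ∈ N x | wins N d ψ χ x z} : Finset V) | succs N d ψ R L x z χ} < t}
        : Finset (V → Q1)) ∪
      U.biUnion (fun u => ({χ : V → Q1 | L < #{z ∈ N u | χ z ∈ Mk N d ψ R x χ}} : Finset (V → Q1))) := by
    intro χ hχ
    rw [mem_union, mem_biUnion]
    by_cases hA : ∃ a ∈ U, χ ∈ ({χ : V → Q1 | L < #{z ∈ N a | χ z ∈ Mk N d ψ R x χ}} : Finset (V → Q1))
    · exact Or.inr hA
    left
    push Not at hA
    rw [mem_filter] at hχ ⊢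
    refine ⟨mem_univ _, lt_of_le_of_lt (card_le_card ?_) hχ.2⟩
    intro z hz
    rw [mem_filter, mem_filter] at hz
    obtain ⟨⟨hz, hw⟩, hsu⟩ := hz
    rw [mem_filter]
    refine ⟨hz, succs_hadj N d ψ R x z hz χ hw ?_⟩
    have hA' : ∀ u ∈ N z, #{z ∈ N u | χ z ∈ Mk N d ψ R x χ} ≤ L := by
      intro u hu
      have := hA u (mem_biUnion.2 ⟨z, hz, hu⟩)
      rw [mem_filter] at this
      push Not at this
      exact this (mem_univ _)
    rcases hsu with h | ⟨u, hu, h⟩ | h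
    · exact h
    · exfalso
      have h1 := hA' u hu
      refine absurd (lt_of_lt_of_le h (card_le_card ?_)) (not_lt.2 h1)
      intro y hy
      rw [mem_filter] at hy ⊢
      exact ⟨hy.1, hy.2.2⟩
    · exfalso
      have h1 := hA' x (hNs _ _ hz)
      refine absurd (lt_of_lt_of_le h (card_le_card ?_)) (not_lt.2 h1)
      intro y hy
      rw [mem_filter] at hy ⊢
      exact ⟨hy.1, hy.2.2⟩
  have hc := (card_le_card hsub).trans (card_union_le _ _)
  have hc2 : (#{χ : V → Q1 | #{z ∈ N x | hadj N d ψ R χ x z} < t} : ℝ) ≤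
      #{χ : V → Q1 | #{z ∈ ({z ∈ N x | wins N d ψ χ x z} : Finset V) | succs N d ψ R L x z χ} < t} +
      #(U.biUnion (fun u => ({χ : V → Q1 | L < #{z ∈ N u | χ z ∈ Mk N d ψ R x χ}} : Finset (V → Q1)))) := by
    exact_mod_cast hc
  have hc3 : (#(U.biUnion (fun u => ({χ : V → Q1 | L < #{z ∈ N u | χ z ∈ Mk N d ψ R x χ}}
      : Finset (V → Q1)))) : ℝ) ≤ (d : ℝ) ^ 2 * (Fintype.card (V → Q1) *
        ((1 + (m : ℝ) / Fintype.card Q1) ^ d / 2 ^ L)) := by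
    have h1 : (#(U.biUnion (fun u => ({χ : V → Q1 | L < #{z ∈ N u | χ z ∈ Mk N d ψ R x χ}}
      : Finset (V → Q1)))) : ℝ) ≤ ∑ u ∈ U, (#{χ : V → Q1 | L < #{z ∈ N u | χ z ∈ Mk N d ψ R x χ}} : ℝ) := by
      exact_mod_cast card_biUnion_le
    refine h1.trans ((sum_le_sum up).trans ?_)
    rw [sum_const, nsmul_eq_mul]
    apply mul_le_mul_of_nonneg_right _ (by positivity)
    exact_mod_cast hUc
  calc _ ≤ _ := hc2
    _ ≤ _ := add_le_add lo hc3
    _ = _ := by ring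

end
end SB
namespace SB
open Finset Function

lemma greedy {V Q : Type} [Fintype V] [LinearOrder V] [Fintype Q] (N : V → Finset V) (d : ℕ)
    (hd0 : 0 < d) (hd : ∀ v, #(N v) ≤ d) (hQ : 10 * d ≤ Fintype.card Q) :
    ∃ ψ : V → Q, ∀ v, good N d ψ v := by
  classical
  have hne : Nonempty Q := Fintype.card_pos_iff.1 (by omega)
  have hstep : ∀ (ψ : V → Q) v, ∃ a, 10 * #(load N ψ v a) ≤ d := by
    intro ψ v
    by_contra hcon
    push Not at hcon
    have h1 : ∑ a : Q, #(load N ψ v a) ≤ d * d := by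
      have : ∀ a ∈ (univ : Finset Q), #(load N ψ v a)
          = ∑ u ∈ N v, if ∃ v' ∈ N u, v' < v ∧ ψ v' = a then 1 else 0 := by
        intro a _
        unfold load
        rw [card_filter]
      rw [sum_congr rfl this, sum_comm]
      calc _ ≤ ∑ u ∈ N v, d := by
            apply sum_le_sum
            intro u hu
            rw [← card_filter]
            refine le_trans (le_trans (card_le_card (t := (N u).image ψ) ?_) card_image_le) (hd u)
            intro a ha
            rw [mem_filter] at ha
            obtain ⟨ha, z', h1, h3, h4⟩ := ha
            rw [mem_image]
            exact ⟨z', h1, h4⟩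
        _ = #(N v) * d := by simp
        _ ≤ d * d := Nat.mul_le_mul_right _ (hd v)
    have h2 : Fintype.card Q * (d + 1) ≤ 10 * ∑ a : Q, #(load N ψ v a) := by
      rw [mul_sum, ← card_univ, ← smul_eq_mul, ← sum_const]
      exact sum_le_sum fun a _ => hcon a
    have h3 : 10 * d * (d + 1) ≤ Fintype.card Q * (d + 1) := Nat.mul_le_mul_right _ hQ
    nlinarith
  have : ∀ s : Finset V, ∃ ψ : V → Q, ∀ v ∈ s, good N d ψ v := by
    intro s
    induction s using Finset.induction_on_max with
    | empty => exact ⟨fun _ => hne.some, by simp⟩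
    | insert v s hs ih =>
      obtain ⟨ψ, hψ⟩ := ih
      obtain ⟨a, ha⟩ := hstep ψ v
      have hl : ∀ z b, z ≤ v → load N (update ψ v a) z b = load N ψ z b := by
        intro z b hz
        unfold load
        apply filter_congr
        intro u hu
        refine exists_congr fun v' => and_congr_right fun _ => and_congr_right fun h => ?_
        rw [update_of_ne (h.trans_le hz).ne]
      refine ⟨update ψ v a, ?_⟩
      intro z hz
      rcases mem_insert.1 hz with rfl | hz
      · unfold good
        rw [update_self, hl _ _ le_rfl]
        exact ha
      · unfold good
        rw [update_of_ne (hs z hz).ne, hl _ _ (hs z hz).le]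
        exact hψ z hz
  obtain ⟨ψ, hψ⟩ := this univ
  exact ⟨ψ, fun v => hψ v (mem_univ v)⟩

open Classical in
lemma maxcut {V : Type} [Fintype V] (G : SimpleGraph V) :
    ∃ side : V → Bool, ∀ v, #{w | G.Adj v w} ≤ 2 * #{w | G.Adj v w ∧ side v ≠ side w} := by
  let g : (V → Bool) → V → V → ℕ := fun σ u w => if G.Adj u w ∧ σ u ≠ σ w then 1 else 0
  have gsymm : ∀ σ u w, g σ u w = g σ w u := by
    intro σ u w
    simp only [g, G.adj_comm u w, ne_comm (a := σ u)]
  let f : (V → Bool) → ℕ := fun σ => ∑ u, ∑ w, g σ u w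
  obtain ⟨σ, hσ⟩ := Finite.exists_max f
  refine ⟨σ, fun v => ?_⟩
  have hf : ∀ σ, f σ = 2 * (∑ w ∈ ({v}ᶜ : Finset V), g σ v w) +
      ∑ u ∈ ({v}ᶜ : Finset V), ∑ w ∈ ({v}ᶜ : Finset V), g σ u w := by
    intro σ
    have h1 : ∀ u, ∑ w, g σ u w = g σ u v + ∑ w ∈ ({v}ᶜ : Finset V), g σ u w := fun u =>
      Fintype.sum_eq_add_sum_compl v _
    change ∑ u, ∑ w, g σ u w = _
    rw [Fintype.sum_eq_add_sum_compl v, h1 v]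
    simp_rw [h1]
    rw [sum_add_distrib]
    have h2 : ∑ u ∈ ({v}ᶜ : Finset V), g σ u v = ∑ w ∈ ({v}ᶜ : Finset V), g σ v w :=
      sum_congr rfl fun u _ => gsymm σ u v
    have h3 : g σ v v = 0 := by simp [g]
    rw [h2, h3]
    ring
  have hA : ∀ σ, #{w | G.Adj v w ∧ σ v ≠ σ w} = ∑ w ∈ ({v}ᶜ : Finset V), g σ v w := by
    intro σ
    rw [card_filter, Fintype.sum_eq_add_sum_compl v]
    simp [g]
  set σ' := update σ v (!σ v) with hσ'
  have hm := hσ σ'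
  rw [hf, hf] at hm
  have hrest : ∑ u ∈ ({v}ᶜ : Finset V), ∑ w ∈ ({v}ᶜ : Finset V), g σ' u w =
      ∑ u ∈ ({v}ᶜ : Finset V), ∑ w ∈ ({v}ᶜ : Finset V), g σ u w := by
    refine sum_congr rfl fun u hu => sum_congr rfl fun w hw => ?_
    simp only [mem_compl, mem_singleton] at hu hw
    simp only [g, hσ', update_of_ne hu, update_of_ne hw]
  have hsum : #{w | G.Adj v w} = ∑ w ∈ ({v}ᶜ : Finset V), g σ v w + ∑ w ∈ ({v}ᶜ : Finset V), g σ' v w := by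
    rw [card_filter, Fintype.sum_eq_add_sum_compl v, ← sum_add_distrib]
    simp only [G.irrefl, if_false, zero_add]
    refine sum_congr rfl fun w hw => ?_
    simp only [mem_compl, mem_singleton] at hw
    simp only [g, hσ', update_of_ne hw, update_self]
    by_cases h : G.Adj v w <;> cases h1 : σ v <;> cases h2 : σ w <;> simp [h]
  rw [hA, hsum]
  omega

open Classical in
noncomputable def nb {V : Type} (N : V → Finset V) (s : Finset V) : Finset V := s ∪ s.biUnion N

lemma nb_card {V : Type} (N : V → Finset V) (d : ℕ) (hd : ∀ v, #(N v) ≤ d) (s : Finset V) :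
    #(nb N s) ≤ (d + 1) * #s := by
  classical
  unfold nb
  refine (card_union_le _ _).trans ?_
  have := card_biUnion_le_card_mul s N d (fun v _ => hd v)
  nlinarith

lemma nb_sub {V : Type} (N : V → Finset V) (s : Finset V) : s ⊆ nb N s := by
  classical
  exact subset_union_left

lemma nb_mem {V : Type} (N : V → Finset V) (s : Finset V) (u v : V) (hu : u ∈ s) (hv : v ∈ N u) :
    v ∈ nb N s := by
  classical
  exact mem_union_right _ (mem_biUnion.2 ⟨u, hu, hv⟩)

lemma nb_back {V : Type} (N : V → Finset V) (hNs : ∀ u v, u ∈ N v → v ∈ N u)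
    (k : ℕ) : ∀ (s : Finset V) (y : V), y ∈ (nb N)^[k] s → ∀ s', y ∈ s' →
      ∃ w ∈ s, w ∈ (nb N)^[k] s' := by
  classical
  induction k with
  | zero => intro s y hy s' hs'; exact ⟨y, hy, hs'⟩
  | succ k ih =>
    intro s y hy s' hs'
    rw [iterate_succ_apply'] at hy
    rcases mem_union.1 hy with hy | hy
    · obtain ⟨w, h1, h2⟩ := ih s y hy s' hs'
      exact ⟨w, h1, by rw [iterate_succ_apply']; exact nb_sub N _ h2⟩
    · obtain ⟨u, hu, hyu⟩ := mem_biUnion.1 hy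
      obtain ⟨w, h1, h2⟩ := ih s u hu (nb N s') (nb_mem N s' y u hs' (hNs _ _ hyu))
      exact ⟨w, h1, h2⟩

lemma nb_iter_card {V : Type} (N : V → Finset V) (d : ℕ) (hd : ∀ v, #(N v) ≤ d) (v : V) (k : ℕ) :
    #((nb N)^[k] {v}) ≤ (d + 1) ^ k := by
  induction k with
  | zero => simp
  | succ k ih =>
    rw [iterate_succ_apply', pow_succ, mul_comm]
    exact (nb_card N d hd _).trans (Nat.mul_le_mul_left _ ih)

open Classical in
lemma nb_dep {V : Type} [Fintype V] (N : V → Finset V) (d : ℕ) (hNs : ∀ u v, u ∈ N v → v ∈ N u)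
    (hd : ∀ v, #(N v) ≤ d) (v : V) :
    #{w | ¬ Disjoint ((nb N)^[3] {v}) ((nb N)^[3] {w})} ≤ (d + 1) ^ 6 := by
  refine le_trans (card_le_card ?_) (nb_iter_card N d hd v 6)
  intro w hw
  have hw := (mem_filter.1 hw).2
  rw [not_disjoint_iff] at hw
  obtain ⟨y, h1, h2⟩ := hw
  obtain ⟨w', h3, h4⟩ := nb_back N hNs 3 {w} y h2 _ h1
  rw [mem_singleton] at h3
  subst h3
  rw [← iterate_add_apply] at h4
  exact h4

section
variable {V Q1 Q2 : Type} [LinearOrder V] (N : V → Finset V) (d : ℕ) (ψ : V → Q2)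
  (R : Q1 ⊕ Q2 → Q1 ⊕ Q2 → Prop)

lemma hadj_congr (hNs : ∀ u v, u ∈ N v → v ∈ N u) (χ χ' : V → Q1) (x : V)
    (h : ∀ y ∈ (nb N)^[3] {x}, χ y = χ' y) (z : V) (hz : z ∈ N x) :
    hadj N d ψ R χ x z ↔ hadj N d ψ R χ' x z := by
  have m0 : x ∈ ({x} : Finset V) := mem_singleton_self x
  have hx : ∀ u ∈ N x, u ∈ nb N {x} := fun u hu => nb_mem N _ x u m0 hu
  have hx2 : ∀ u ∈ N x, ∀ v ∈ N u, v ∈ nb N (nb N {x}) := fun u hu v hv => nb_mem N _ u v (hx u hu) hv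
  have hx3 : ∀ u ∈ N x, ∀ v ∈ N u, ∀ w ∈ N v, w ∈ nb N (nb N (nb N {x})) := fun u hu v hv w hw =>
    nb_mem N _ v w (hx2 u hu v hv) hw
  have a1 : χ x = χ' x := h x (nb_sub N _ (nb_sub N _ (nb_sub N _ m0)))
  have a2 : ∀ u ∈ N x, ∀ v' ∈ N u, χ v' = χ' v' := fun u hu v hv =>
    h v (nb_sub N _ (hx2 u hu v hv))
  have b1 : χ z = χ' z := h z (nb_sub N _ (nb_sub N _ (hx z hz)))
  have b2 : ∀ u ∈ N z, ∀ v' ∈ N u, χ v' = χ' v' := fun u hu v hv =>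
    h v (hx3 z hz u hu v hv)
  unfold hadj
  rw [fc_congr N d ψ χ χ' x a1 a2, fc_congr N d ψ χ χ' z b1 b2,
    wins_congr N d ψ χ χ' x a1 a2 z hz, wins_congr N d ψ χ χ' z b1 b2 x (hNs _ _ hz)]

end

lemma struct {V Q1 Q2 : Type} [Fintype V] [Fintype Q1] [Nonempty Q1] [Fintype Q2] (G : SimpleGraph V)
    (d : ℕ) (hG : ∀ v, (G.neighborSet v).ncard = d) (R : Q1 ⊕ Q2 → Q1 ⊕ Q2 → Prop)
    (hRsymm : ∀ x y, R x y → R y x)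
    (hR : ∀ f g : Fin 3 → Q1 ⊕ Q2, Injective f → Injective g → ¬ ∀ i j, R (f i) (g j))
    (hd0 : 0 < d) (hQ : 10 * d ≤ Fintype.card Q2)
    (s m L t r : ℕ) (hr : 10 * r ≤ 4 * d)
    (hRs : ∀ k, s ≤ ({a : Q1 | R k (Sum.inl a)} : Set Q1).ncard)
    (hRm : ∀ k, ({a : Q1 | R k (Sum.inl a)} : Set Q1).ncard ≤ m)
    (hb : (2 ^ t * (1 - ((s - 11 * L : ℕ) : ℝ) / (2 * Fintype.card Q1)) ^ r +
        (d : ℝ) ^ 2 * ((1 + (m : ℝ) / Fintype.card Q1) ^ d / 2 ^ L)) * (4 * ((d : ℝ) + 1) ^ 6) ≤ 1) :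
    ∃ H : SimpleGraph V, H ≤ G ∧
      (∀ f g : Fin 3 → V, Injective f → Injective g → ¬ ∀ i j, H.Adj (f i) (g j)) ∧
      ∀ v, t ≤ (H.neighborSet v).ncard := by
  classical
  let _ : LinearOrder V := LinearOrder.lift' (Fintype.equivFin V) (Fintype.equivFin V).injective
  obtain ⟨side, hcut⟩ := maxcut G
  have hdeg : ∀ v, #{w | G.Adj v w} = d := by
    intro v
    rw [← hG v, Set.ncard_eq_toFinset_card']
    congr 1
    ext w
    simp
  let N : V → Finset V := fun v => {w | G.Adj v w ∧ side v ≠ side w}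
  have hN : ∀ u v, u ∈ N v ↔ G.Adj v u ∧ side v ≠ side u := by
    intro u v; simp only [N, mem_filter, mem_univ, true_and]
  have hNs : ∀ u v, u ∈ N v → v ∈ N u := by
    intro u v h
    rw [hN] at h ⊢
    exact ⟨h.1.symm, h.2.symm⟩
  have hside : ∀ u v, u ∈ N v → side u ≠ side v := fun u v h => ((hN u v).1 h).2.symm
  have hd : ∀ v, #(N v) ≤ d := by
    intro v
    rw [← hdeg v]
    apply card_le_card
    intro w hw
    rw [hN] at hw
    simp [hw.1]
  have hd2 : ∀ v, d ≤ 2 * #(N v) := fun v => by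
    have := hcut v
    rw [hdeg v] at this
    convert this
  obtain ⟨ψ, hψ⟩ := greedy (Q := Q2) N d hd0 hd hQ
  have hcv : ∀ k, ({a : Q1 | R k (Sum.inl a)} : Set Q1).ncard = #{a : Q1 | R k (Sum.inl a)} := by
    intro k
    rw [Set.ncard_eq_toFinset_card']
    congr 1
    ext w
    simp
  have hpr := prob N d ψ R side hside hNs hψ hd0 hd hd2 s m L t r hr
    (fun k => hcv k ▸ hRs k) (fun k => hcv k ▸ hRm k)
  obtain ⟨χ, hχ⟩ := lll (Q := Q1) (fun x χ => #{z ∈ N x | hadj N d ψ R χ x z} < t)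
    (fun v => (nb N)^[3] {v}) (((d : ℝ) + 1) ^ 6)
    (one_le_pow₀ (by have : (0:ℝ) ≤ d := Nat.cast_nonneg d
                     linarith))
    (by
      intro v χ χ' h hE
      refine lt_of_le_of_lt (le_of_eq ?_) hE
      congr 1
      exact filter_congr fun z hz => (hadj_congr N d ψ R hNs χ χ' v h z hz).symm)
    (by
      intro v
      have := nb_dep N d hNs hd v
      exact_mod_cast this)
    (by
      intro v
      have h1 := hpr v
      have h2 : (0 : ℝ) ≤ Fintype.card (V → Q1) := Nat.cast_nonneg _
      have h3 : (0 : ℝ) ≤ 4 * ((d : ℝ) + 1) ^ 6 := by positivity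
      have h4 := mul_le_mul_of_nonneg_right h1 h3
      have h5 := h4.trans (calc
        _ = Fintype.card (V → Q1) * ((2 ^ t * (1 - ((s - 11 * L : ℕ) : ℝ) / (2 * Fintype.card Q1)) ^ r +
        (d : ℝ) ^ 2 * ((1 + (m : ℝ) / Fintype.card Q1) ^ d / 2 ^ L)) * (4 * ((d : ℝ) + 1) ^ 6)) := by ring
        _ ≤ Fintype.card (V → Q1) * 1 := mul_le_mul_of_nonneg_left hb h2
        _ = _ := mul_one _)
      convert h5
      rfl)
  let H : SimpleGraph V :=
    { Adj := fun u v => hadj N d ψ R χ u v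
      symm := ⟨fun u v h => ⟨hNs _ _ h.1, hRsymm _ _ h.2.1, h.2.2.2, h.2.2.1⟩⟩
      loopless := ⟨fun u h => hside _ _ h.1 rfl⟩ }
  refine ⟨H, fun u v h => ((hN v u).1 h.1).1, ?_, ?_⟩
  · intro f g hf hg h
    have h : ∀ i j, hadj N d ψ R χ (f i) (g j) := h
    refine hR (fun i => fc N d ψ χ (f i)) (fun j => fc N d ψ χ (g j)) ?_ ?_ (fun i j => (h i j).2.1)
    · intro i i' e
      exact hf (fc_inj N d ψ χ (g 0) (f i) (f i') (hNs _ _ (h i 0).1) (hNs _ _ (h i' 0).1)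
        (h i 0).2.2.1 (h i' 0).2.2.1 e)
    · intro i i' e
      exact hg (fc_inj N d ψ χ (f 0) (g i) (g i') (h 0 i).1 (h 0 i').1
        (h 0 i).2.2.2 (h 0 i').2.2.2 e)
  · intro v
    refine (not_lt.1 (hχ v)).trans (le_of_eq ?_)
    rw [Set.ncard_eq_toFinset_card']
    congr 1
    ext w
    simp only [mem_filter, Set.mem_toFinset, SimpleGraph.mem_neighborSet]
    exact ⟨fun h => h.2, fun h => ⟨h.1, h⟩⟩

end SB
namespace SB
open Finset Function Filter

set_option maxHeartbeats 2000000 in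
lemma num_one (d p : ℕ) (y : ℝ) (hy : 36 ≤ y) (hyd : y ^ 3 = d) (hp1 : 15 * y ≤ p) (hp2 : (p : ℝ) ≤ 32 * y)
    (hexp : 512 * (y ^ 2) ^ 12 ≤ Real.exp (y ^ 2 / 1280)) :
    (2 ^ (d / (20 * (p - 1))) * (1 - ((p ^ 2 / 2 - 1 - 11 * (p ^ 2 / 2 / 40) : ℕ) : ℝ) /
          (2 * ((p ^ 2 / 2 * (p - 1) : ℕ) : ℝ))) ^ (2 * d / 5) +
        (d : ℝ) ^ 2 * ((1 + ((p ^ 2 / 2 : ℕ) : ℝ) / ((p ^ 2 / 2 * (p - 1) : ℕ) : ℝ)) ^ d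
          / 2 ^ (p ^ 2 / 2 / 40))) * (4 * ((d : ℝ) + 1) ^ 6) ≤ 1 ∧
    10 * d ≤ p ^ 2 / 2 * (p - 1) ∧ 1 / 1280 * y ^ 2 ≤ ((d / (20 * (p - 1)) : ℕ) : ℝ) ∧
    0 < p ^ 2 / 2 * (p - 1) ∧ 0 < d := by
  have hP : (540 : ℝ) ≤ p := by linarith
  have hpn : 540 ≤ p := by exact_mod_cast hP
  obtain ⟨P', hP'⟩ : ∃ k, p = k + 1 := ⟨p - 1, by omega⟩
  have hp' : p - 1 = P' := by omega
  have hP'r : (P' : ℝ) = p - 1 := by rw [hP']; push_cast; ring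
  rw [hp']
  set m := p ^ 2 / 2 with hm
  set L := m / 40 with hL
  set t := d / (20 * P') with ht
  set r := 2 * d / 5 with hr
  have hP'pos : (0 : ℝ) < P' := by rw [hP'r]; linarith
  have hP'n : 0 < P' := by exact_mod_cast hP'pos
  have hmn1 : p ^ 2 ≤ 2 * m + 1 := by omega
  have hmr : (p : ℝ) ^ 2 ≤ 2 * m + 1 := by exact_mod_cast hmn1
  have hm4 : (p : ℝ) ^ 2 / 4 ≤ m := by nlinarith
  have hmbig : (5 : ℝ) ≤ m := by nlinarith
  have hm5 : 5 ≤ m := by exact_mod_cast hmbig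
  have hd1 : (1 : ℝ) ≤ d := by
    rw [← hyd]; exact one_le_pow₀ (by linarith)
  have hd36 : (36 : ℝ) ≤ d := by
    rw [← hyd]; nlinarith [sq_nonneg y]
  have hdn : 36 ≤ d := by exact_mod_cast hd36
  have hn400 : 400 * (d : ℝ) ≤ m * P' := by
    rw [← hyd, hP'r]
    have h1 : (p : ℝ) / 2 ≤ p - 1 := by linarith
    have h2 : (p : ℝ) ^ 2 / 4 * (p / 2) ≤ m * (p - 1) := by
      apply mul_le_mul hm4 h1 (by positivity) (by positivity)
    have h3 : (15 * y) ^ 3 ≤ (p : ℝ) ^ 3 := pow_le_pow_left₀ (by linarith) hp1 3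
    have h4 : 0 ≤ y ^ 3 := by positivity
    nlinarith
  set X : ℝ := d / P' with hX
  have hXlow : y ^ 2 / 32 ≤ X := by
    rw [hX, le_div_iff₀ hP'pos, hP'r, ← hyd]
    have : y ^ 2 / 32 * (p - 1) ≤ y ^ 2 / 32 * (32 * y) :=
      mul_le_mul_of_nonneg_left (by linarith) (by positivity)
    nlinarith
  have hXup : X ≤ m / 400 := by
    rw [hX, div_le_iff₀ hP'pos]; linarith
  have hX0 : 0 ≤ X := by positivity
  have htup : (t : ℝ) ≤ X / 20 := by
    have := Nat.cast_div_le (α := ℝ) (m := d) (n := 20 * P')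
    refine this.trans (le_of_eq ?_)
    rw [hX]; push_cast; field_simp
  have htlow : X / 20 - 1 ≤ t := by
    have h1 : d < (t + 1) * (20 * P') := by
      rw [ht, mul_comm]; exact Nat.lt_mul_div_succ d (by omega)
    have h2 : (d : ℝ) < (t + 1) * (20 * P') := by exact_mod_cast h1
    have h3 : X < (t + 1) * 20 := by
      rw [hX, div_lt_iff₀ hP'pos]; linarith
    linarith
  have hrlow : 3 * (d : ℝ) / 10 ≤ r := by
    have : 3 * d ≤ 10 * r := by omega
    have : 3 * (d : ℝ) ≤ 10 * r := by exact_mod_cast this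
    linarith
  set h := m - 1 - 11 * L with hh
  have hh2 : (m : ℝ) ≤ 2 * h := by
    have : m ≤ 2 * h := by omega
    exact_mod_cast this
  have hhm : (h : ℝ) ≤ m := by
    have : h ≤ m := by omega
    exact_mod_cast this
  have hLlow : (m : ℝ) / 40 - 1 ≤ L := by
    have : m ≤ 40 * L + 40 := by omega
    have : (m : ℝ) ≤ 40 * L + 40 := by exact_mod_cast this
    linarith
  have hmpos : (0 : ℝ) < m := by linarith
  have hcast : ((m * P' : ℕ) : ℝ) = m * P' := by push_cast; ring
  rw [hcast]
  have hy2 : (1296 : ℝ) ≤ y ^ 2 := by nlinarith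
  have hP'1 : (1 : ℝ) ≤ P' := by exact_mod_cast hP'n
  have T1 : (2 : ℝ) ^ t * (1 - (h : ℝ) / (2 * (m * P'))) ^ r ≤ Real.exp (-(y ^ 2 / 1280)) := by
    have q0 : 1 / (4 * (P' : ℝ)) ≤ (h : ℝ) / (2 * (m * P')) := by
      rw [div_le_div_iff₀ (by positivity) (by positivity)]
      nlinarith
    have q1 : (h : ℝ) / (2 * (m * P')) ≤ 1 := by
      rw [div_le_one (by positivity)]
      nlinarith
    have e1 : (2 : ℝ) ^ t ≤ Real.exp (X / 20) := by
      have : (2 : ℝ) ≤ Real.exp 1 := by have := Real.add_one_le_exp (1 : ℝ); linarith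
      calc (2 : ℝ) ^ t ≤ Real.exp 1 ^ t := pow_le_pow_left₀ (by norm_num) this t
        _ = Real.exp t := by rw [← Real.exp_nat_mul, mul_one]
        _ ≤ _ := Real.exp_le_exp.2 htup
    have e2 : (1 - (h : ℝ) / (2 * (m * P'))) ^ r ≤ Real.exp (-(3 * X / 40)) := by
      calc (1 - (h : ℝ) / (2 * (m * P'))) ^ r ≤ (Real.exp (-(1 / (4 * (P' : ℝ))))) ^ r := by
            apply pow_le_pow_left₀ (by linarith)
            have := Real.one_sub_le_exp_neg (1 / (4 * (P' : ℝ)))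
            linarith
        _ = Real.exp (r * -(1 / (4 * (P' : ℝ)))) := by rw [← Real.exp_nat_mul]
        _ ≤ _ := by
            apply Real.exp_le_exp.2
            have : 3 * X / 40 = (3 * d / 10) * (1 / (4 * (P' : ℝ))) := by
              rw [hX]; field_simp; norm_num
            rw [this, mul_neg]
            apply neg_le_neg
            exact mul_le_mul_of_nonneg_right hrlow (by positivity)
    calc _ ≤ Real.exp (X / 20) * Real.exp (-(3 * X / 40)) :=
          mul_le_mul e1 e2 (pow_nonneg (by linarith) _) (Real.exp_pos _).le
      _ = Real.exp (-(X / 40)) := by rw [← Real.exp_add]; congr 1; ring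
      _ ≤ _ := by apply Real.exp_le_exp.2; linarith
  have T2 : (1 + (m : ℝ) / (m * P')) ^ d / 2 ^ L ≤ Real.exp (-(y ^ 2 / 1280)) := by
    have e1 : (1 + (m : ℝ) / (m * P')) ^ d ≤ Real.exp X := by
      have : (m : ℝ) / (m * P') = 1 / P' := by field_simp
      rw [this]
      calc (1 + 1 / (P' : ℝ)) ^ d ≤ Real.exp (1 / P') ^ d := by
            apply pow_le_pow_left₀ (by positivity)
            have := Real.add_one_le_exp (1 / (P' : ℝ))
            linarith
        _ = Real.exp X := by rw [← Real.exp_nat_mul, hX]; congr 1; ring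
    have e2 : Real.exp (L / 2) ≤ 2 ^ L := by
      have h1 : Real.exp (1 / 2) ≤ 2 := by
        have h2 : Real.exp (1 / 2) ^ 2 ≤ 2 ^ 2 := by
          rw [← Real.exp_nat_mul]
          have := Real.exp_one_lt_d9
          norm_num
          linarith
        exact le_of_sq_le_sq h2 (by norm_num)
      calc Real.exp (L / 2) = Real.exp (1 / 2) ^ L := by rw [← Real.exp_nat_mul]; congr 1; ring
        _ ≤ _ := pow_le_pow_left₀ (Real.exp_pos _).le h1 L
    have hm50 : 50 * y ^ 2 ≤ m := by
      have : (15 * y) ^ 2 ≤ (p : ℝ) ^ 2 := pow_le_pow_left₀ (by linarith) hp1 2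
      nlinarith
    calc _ ≤ Real.exp X / Real.exp (L / 2) :=
          div_le_div₀ (Real.exp_pos _).le e1 (Real.exp_pos _) e2
      _ = Real.exp (X - L / 2) := by rw [Real.exp_sub]
      _ ≤ _ := by apply Real.exp_le_exp.2; linarith
  refine ⟨?_, ?_, ?_, by positivity, by omega⟩
  · set e := Real.exp (-(y ^ 2 / 1280)) with he
    have he0 : 0 < e := Real.exp_pos _
    have hdy : (d : ℝ) ^ 8 = (y ^ 2) ^ 12 := by rw [← hyd]; ring
    have f1 : (d : ℝ) ^ 2 + 1 ≤ 2 * d ^ 2 := by nlinarith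
    have f2 : ((d : ℝ) + 1) ^ 6 ≤ (2 * d) ^ 6 := pow_le_pow_left₀ (by linarith) (by linarith) 6
    calc _ ≤ (e + (d : ℝ) ^ 2 * e) * (4 * ((d : ℝ) + 1) ^ 6) := by
          apply mul_le_mul_of_nonneg_right _ (by positivity)
          exact add_le_add T1 (mul_le_mul_of_nonneg_left T2 (by positivity))
      _ = e * (((d : ℝ) ^ 2 + 1) * (4 * ((d : ℝ) + 1) ^ 6)) := by ring
      _ ≤ e * ((2 * d ^ 2) * (4 * (2 * d) ^ 6)) := by
          apply mul_le_mul_of_nonneg_left _ he0.le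
          apply mul_le_mul f1 _ (by positivity) (by positivity)
          linarith
      _ = e * (512 * (d : ℝ) ^ 8) := by ring
      _ ≤ e * Real.exp (y ^ 2 / 1280) := by
          apply mul_le_mul_of_nonneg_left _ he0.le
          rw [hdy]; exact hexp
      _ = 1 := by rw [he, ← Real.exp_add]; simp
  · have : 10 * (d : ℝ) ≤ m * P' := by linarith
    exact_mod_cast this
  · linarith

lemma num : ∃ d₀ : ℕ, ∀ d ≥ d₀, 36 ≤ (d : ℝ) ^ ((1 : ℝ) / 3) ∧
    512 * ((d : ℝ) ^ ((2 : ℝ) / 3)) ^ 12 ≤ Real.exp ((d : ℝ) ^ ((2 : ℝ) / 3) / 1280) := by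
  have h1 : ∀ᶠ x : ℝ in atTop, 512 * x ^ 12 ≤ Real.exp (x / 1280) := by
    have := (isLittleO_pow_exp_pos_mul_atTop 12 (b := 1 / 1280) (by norm_num)).bound
      (c := 1 / 512) (by norm_num)
    filter_upwards [this, eventually_ge_atTop 0] with x hx hx0
    rw [Real.norm_of_nonneg (by positivity), Real.norm_of_nonneg (Real.exp_pos _).le] at hx
    have e : (1 : ℝ) / 1280 * x = x / 1280 := by ring
    rw [e] at hx
    linarith
  have t1 : Tendsto (fun d : ℕ => (d : ℝ) ^ ((2 : ℝ) / 3)) atTop atTop :=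
    (tendsto_rpow_atTop (by norm_num)).comp tendsto_natCast_atTop_atTop
  have t2 : Tendsto (fun d : ℕ => (d : ℝ) ^ ((1 : ℝ) / 3)) atTop atTop :=
    (tendsto_rpow_atTop (by norm_num)).comp tendsto_natCast_atTop_atTop
  obtain ⟨d₀, hd⟩ := eventually_atTop.1 ((t2.eventually_ge_atTop 36).and (t1.eventually h1))
  exact ⟨d₀, hd⟩

lemma main33 : ∃ (c : ℝ) (d₀ : ℕ), 0 < c ∧ ∀ d : ℕ, d₀ ≤ d →
    ∀ (V : Type) [Fintype V] (G : SimpleGraph V), (∀ v, (G.neighborSet v).ncard = d) →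
      ∃ H : SimpleGraph V, H ≤ G ∧
      (∀ f g : Fin 3 → V, Injective f → Injective g → ¬ ∀ i j, H.Adj (f i) (g j)) ∧
      ∀ v, c * (d : ℝ) ^ ((2 : ℝ) / 3) ≤ ((H.neighborSet v).ncard : ℝ) := by
  classical
  obtain ⟨d₀, hd₀⟩ := num
  refine ⟨1 / 1280, d₀, by norm_num, ?_⟩
  intro d hd V _ G hG
  obtain ⟨hy, hexp⟩ := hd₀ d hd
  set y : ℝ := (d : ℝ) ^ ((1 : ℝ) / 3) with hyd
  have hd0 : (0 : ℝ) ≤ d := Nat.cast_nonneg d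
  have hy3 : y ^ 3 = d := by
    rw [hyd, ← Real.rpow_natCast, ← Real.rpow_mul hd0]; norm_num
  have hy2 : (d : ℝ) ^ ((2 : ℝ) / 3) = y ^ 2 := by
    rw [hyd, ← Real.rpow_natCast, ← Real.rpow_mul hd0]; norm_num
  rw [hy2] at hexp ⊢
  have hk0 : ⌈15 * y⌉₊ ≠ 0 := by
    have : 0 < ⌈15 * y⌉₊ := Nat.ceil_pos.2 (by linarith)
    omega
  obtain ⟨p, hp, hp1, hp2⟩ := Nat.exists_prime_lt_and_le_two_mul ⌈15 * y⌉₊ hk0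
  have hp1' : 15 * y ≤ p := by
    refine (Nat.le_ceil _).trans ?_
    exact_mod_cast hp1.le
  have hp2' : (p : ℝ) ≤ 32 * y := by
    have h1 : (p : ℝ) ≤ 2 * (⌈15 * y⌉₊ : ℝ) := by exact_mod_cast hp2
    have h2 := Nat.ceil_lt_add_one (a := 15 * y) (by linarith)
    linarith
  obtain ⟨c1, c2, c3, c4, c5⟩ := num_one d p y hy hy3 hp1' hp2' hexp
  have : Fact p.Prime := ⟨hp⟩
  obtain ⟨Q1, Q2, i1, i2, R, hRs, hR, q1, q2, hc⟩ := normgraph p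
  have : Nonempty Q1 := Fintype.card_pos_iff.1 (by rw [q1]; exact c4)
  have hcv : ∀ k, ({a : Q1 | R k (Sum.inl a)} : Set Q1).ncard = #{a : Q1 | R k (Sum.inl a)} := by
    intro k
    rw [Set.ncard_eq_toFinset_card']
    congr 1
    ext w
    simp
  obtain ⟨H, h1, h2, h3⟩ := struct G d hG R hRs hR c5 (c2.trans q2) (p ^ 2 / 2 - 1) (p ^ 2 / 2)
    (p ^ 2 / 2 / 40) (d / (20 * (p - 1))) (2 * d / 5) (by omega)
    (fun k => by rw [hcv]; convert (hc k).1) (fun k => by rw [hcv]; convert (hc k).2)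
    (by rw [q1]; exact c1)
  refine ⟨H, h1, h2, fun v => c3.trans ?_⟩
  exact_mod_cast h3 v

end SB

theorem statement13 (b : ℕ) (hb : 3 ≤ b) :
    ∃ (c : ℝ) (d₀ : ℕ), 0 < c ∧
      ∀ d : ℕ, d₀ ≤ d →
        ∀ (V : Type) [Fintype V] (G : SimpleGraph V), RegularDeg G d →
          ∃ H : SimpleGraph V, H ≤ G ∧
            ¬ ContainsCopy (completeBipartiteGraph (Fin 3) (Fin b)) H ∧
            ∀ v : V, c * (d : ℝ) ^ ((2 : ℝ) / 3) ≤ (deg H v : ℝ) := by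
  obtain ⟨c, d₀, hc, h⟩ := SB.main33
  refine ⟨c, d₀, hc, fun d hd V _ G hG => ?_⟩
  obtain ⟨H, h1, h2, h3⟩ := h d hd V G hG
  refine ⟨H, h1, ?_, h3⟩
  rintro ⟨f, hf⟩
  refine h2 (fun i => f (Sum.inl i)) (fun j => f (Sum.inr (Fin.castLE hb j))) ?_ ?_ ?_
  · intro i j hij
    exact Sum.inl_injective (hf hij)
  · intro i j hij
    exact Fin.castLE_injective hb (Sum.inr_injective (hf hij))
  · intro i j
    apply f.map_adj
    simp
end
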